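/- Let f : ℝ² → ℝ be a smooth function whose 3-jet at the origin is j³f(0) = y² + x³. Then the asymptotic BDE of f, namely f_yy dy² + 2 f_xy dxdy + f_xx dx² = 0, is smoothly equivalent at 0 to the BDE dy² + x dx² = 0, i.e. the BDE with coefficients (a,b,c) = (1, 0, x). -/

import Mathlib

open Asymptotics Filter Set

noncomputable section

/-- Partial derivative in the first variable (∂/∂x). -/
def pdx (f : ℝ × ℝ → ℝ) (p : ℝ × ℝ) : ℝ := deriv (fun s => f (s, p.2)) p.1

/-- Partial derivative in the second variable (∂/∂y). -/
def pdy (f : ℝ × ℝ → ℝ) (p : ℝ × ℝ) : ℝ := deriv (fun s => f (p.1, s)) p.2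

/-- f_xx -/
def fxx (f : ℝ × ℝ → ℝ) : ℝ × ℝ → ℝ := pdx (pdx f)
/-- f_xy -/
def fxy (f : ℝ × ℝ → ℝ) : ℝ × ℝ → ℝ := pdy (pdx f)
/-- f_yy -/
def fyy (f : ℝ × ℝ → ℝ) : ℝ × ℝ → ℝ := pdy (pdy f)

/-- The discriminant δ = f_xy² − f_xx·f_yy of the asymptotic BDE of `f`. -/
def bdeDiscr (f : ℝ × ℝ → ℝ) : ℝ × ℝ → ℝ := fun p => (fxy f p) ^ 2 - fxx f p * fyy f p

/-- The BDE `a dy² + 2b dxdy + c dx² = 0`, regarded as the family of quadratic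
forms `ω_p(v) = a(p)v₂² + 2b(p)v₁v₂ + c(p)v₁²`. -/
def BDE (a b c : ℝ × ℝ → ℝ) : (ℝ × ℝ) → (ℝ × ℝ) → ℝ :=
  fun p v => a p * v.2 ^ 2 + 2 * b p * v.1 * v.2 + c p * v.1 ^ 2

/-- The asymptotic BDE `f_yy dy² + 2 f_xy dxdy + f_xx dx² = 0` of the surface `z = f(x,y)`. -/
def asymBDE (f : ℝ × ℝ → ℝ) : (ℝ × ℝ) → (ℝ × ℝ) → ℝ := BDE (fyy f) (fxy f) (fxx f)

/-- `j^k f(0) = P` : the degree-k Taylor polynomial of `f` at the origin is `P`,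
i.e. `f − P = o(‖(x,y)‖^k)` as `(x,y) → 0`. -/
def HasJetAt0 (f P : ℝ × ℝ → ℝ) (k : ℕ) : Prop :=
  (fun p => f p - P p) =o[nhds (0 : ℝ × ℝ)] fun p => ‖p‖ ^ k

/-- `γ` is an integral curve of the BDE `ω` on the open interval `I`:
`γ` is C¹ on `I` with nowhere-vanishing derivative annihilating `ω`. -/
def IsIntegralCurveOnBDE (ω : (ℝ × ℝ) → (ℝ × ℝ) → ℝ) (γ : ℝ → ℝ × ℝ) (I : Set ℝ) : Prop :=
  (∃ a b : ℝ, I = Set.Ioo a b) ∧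
  ∃ dγ : ℝ → ℝ × ℝ, ContinuousOn dγ I ∧
    ∀ t ∈ I, HasDerivAt γ (dγ t) t ∧ dγ t ≠ 0 ∧ ω (γ t) (dγ t) = 0

/-- Topological equivalence of two BDEs at the origin: a local homeomorphism
fixing `0` sending integral curves of one to integral curves of the other. -/
def TopEquivAt0 (ω Ω : (ℝ × ℝ) → (ℝ × ℝ) → ℝ) : Prop :=
  ∃ (U V : Set (ℝ × ℝ)) (h hinv : ℝ × ℝ → ℝ × ℝ),
    IsOpen U ∧ IsOpen V ∧ (0 : ℝ × ℝ) ∈ U ∧ (0 : ℝ × ℝ) ∈ V ∧ h 0 = 0 ∧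
    ContinuousOn h U ∧ ContinuousOn hinv V ∧
    Set.BijOn h U V ∧ Set.InvOn hinv h U V ∧
    (∀ γ I, IsIntegralCurveOnBDE ω γ I → Set.MapsTo γ I U →
      ∃ σ J, IsIntegralCurveOnBDE Ω σ J ∧ h '' (γ '' I) = σ '' J) ∧
    (∀ σ J, IsIntegralCurveOnBDE Ω σ J → Set.MapsTo σ J V →
      ∃ γ I, IsIntegralCurveOnBDE ω γ I ∧ hinv '' (σ '' J) = γ '' I)

/-- Smooth equivalence of two BDEs at the origin: a local C^∞ diffeomorphism `h`
fixing `0` pulling one family of quadratic forms back to a nonvanishing multiple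
of the other. -/
def SmoothEquivAt0 (ω Ω : (ℝ × ℝ) → (ℝ × ℝ) → ℝ) : Prop :=
  ∃ (U V : Set (ℝ × ℝ)) (h hinv : ℝ × ℝ → ℝ × ℝ) (ρ : ℝ × ℝ → ℝ),
    IsOpen U ∧ IsOpen V ∧ (0 : ℝ × ℝ) ∈ U ∧ (0 : ℝ × ℝ) ∈ V ∧ h 0 = 0 ∧
    ContDiffOn ℝ (⊤ : ℕ∞) h U ∧ ContDiffOn ℝ (⊤ : ℕ∞) hinv V ∧
    Set.BijOn h U V ∧ Set.InvOn hinv h U V ∧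
    ContDiffOn ℝ (⊤ : ℕ∞) ρ U ∧ (∀ p ∈ U, ρ p ≠ 0) ∧
    (∀ p ∈ U, ∀ v : ℝ × ℝ, Ω (h p) (fderiv ℝ h p v) = ρ p * ω p v)

/-- Fiber topological equivalence at `0` of two 2-parameter families of BDEs:
a homeomorphism `φ` of parameter spaces (onto its image), fixing `0`, such that
corresponding members of the families are topologically equivalent at `0`. -/
def FiberTopEquivAt0 (ω Ω : (ℝ × ℝ) → (ℝ × ℝ) → (ℝ × ℝ) → ℝ) : Prop :=
  ∃ (W : Set (ℝ × ℝ)) (φ ψ : ℝ × ℝ → ℝ × ℝ),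
    W ∈ nhds (0 : ℝ × ℝ) ∧ φ 0 = 0 ∧
    ContinuousOn φ W ∧ ContinuousOn ψ (φ '' W) ∧
    Set.InvOn ψ φ W (φ '' W) ∧
    ∀ q ∈ W, TopEquivAt0 (ω q) (Ω (φ q))

namespace Cib
open Topology ContDiff

section basic
variable {F : Type*} [NormedAddCommGroup F] [NormedSpace ℝ F]

/-- x-derivative -/
def Dx (f : ℝ × ℝ → F) (p : ℝ × ℝ) : F := fderiv ℝ f p (1, 0)
/-- y-derivative -/
def Dy (f : ℝ × ℝ → F) (p : ℝ × ℝ) : F := fderiv ℝ f p (0, 1)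

/-- linear map with prescribed values on basis -/
def Lc (a b : F) : ℝ × ℝ →L[ℝ] F :=
  (ContinuousLinearMap.fst ℝ ℝ ℝ).smulRight a + (ContinuousLinearMap.snd ℝ ℝ ℝ).smulRight b

@[simp] lemma Lc_apply (a b : F) (v : ℝ × ℝ) : Lc a b v = v.1 • a + v.2 • b := by
  simp [Lc]

lemma fderiv_eq_Lc (f : ℝ × ℝ → F) (p : ℝ × ℝ) : fderiv ℝ f p = Lc (Dx f p) (Dy f p) := by
  ext <;> simp [Dx, Dy]

lemma fderiv_app (f : ℝ × ℝ → F) (p v : ℝ × ℝ) :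
    fderiv ℝ f p v = v.1 • Dx f p + v.2 • Dy f p := by
  rw [fderiv_eq_Lc]; simp

lemma Dx_of {f : ℝ × ℝ → F} {p : ℝ × ℝ} {a b : F} (h : HasFDerivAt f (Lc a b) p) :
    Dx f p = a := by simp [Dx, h.fderiv]

lemma Dy_of {f : ℝ × ℝ → F} {p : ℝ × ℝ} {a b : F} (h : HasFDerivAt f (Lc a b) p) :
    Dy f p = b := by simp [Dy, h.fderiv]

lemma hasF {f : ℝ × ℝ → F} (hf : ContDiff ℝ ∞ f) (p : ℝ × ℝ) :
    HasFDerivAt f (Lc (Dx f p) (Dy f p)) p := by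
  rw [← fderiv_eq_Lc]
  exact (hf.differentiable (by simp)).differentiableAt.hasFDerivAt

lemma smooth_Dx {f : ℝ × ℝ → F} (hf : ContDiff ℝ ∞ f) : ContDiff ℝ ∞ (Dx f) :=
  (hf.fderiv_right (by simp)).clm_apply contDiff_const

lemma smooth_Dy {f : ℝ × ℝ → F} (hf : ContDiff ℝ ∞ f) : ContDiff ℝ ∞ (Dy f) :=
  (hf.fderiv_right (by simp)).clm_apply contDiff_const

lemma Dx_congr {f g : ℝ × ℝ → F} {p : ℝ × ℝ} (h : f =ᶠ[𝓝 p] g) : Dx f p = Dx g p := by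
  simp [Dx, h.fderiv_eq]

lemma Dy_congr {f g : ℝ × ℝ → F} {p : ℝ × ℝ} (h : f =ᶠ[𝓝 p] g) : Dy f p = Dy g p := by
  simp [Dy, h.fderiv_eq]

/-- derivative along first variable -/
lemma hasDx {f : ℝ × ℝ → F} (hf : ContDiff ℝ ∞ f) (x y : ℝ) :
    HasDerivAt (fun s => f (s, y)) (Dx f (x, y)) x := by
  have h := (hasF hf (x, y)).comp_hasDerivAt x ((hasDerivAt_id x).prodMk (hasDerivAt_const x y))
  simp only [Lc_apply, one_smul, zero_smul, add_zero] at h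
  exact h

lemma hasDy {f : ℝ × ℝ → F} (hf : ContDiff ℝ ∞ f) (x y : ℝ) :
    HasDerivAt (fun s => f (x, s)) (Dy f (x, y)) y := by
  have h := (hasF hf (x, y)).comp_hasDerivAt y ((hasDerivAt_const y x).prodMk (hasDerivAt_id y))
  simp only [Lc_apply, one_smul, zero_smul, zero_add] at h
  exact h

/-- symmetric second derivatives -/
lemma Dx_Dy_comm {f : ℝ × ℝ → F} (hf : ContDiff ℝ ∞ f) (p : ℝ × ℝ) :
    Dx (Dy f) p = Dy (Dx f) p := by
  have h1 : ∀ v w : ℝ × ℝ, fderiv ℝ (fun q => fderiv ℝ f q v) p w = fderiv ℝ (fderiv ℝ f) p w v := by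
    intro v w
    have hd : DifferentiableAt ℝ (fderiv ℝ f) p :=
      ((hf.fderiv_right (m := ∞) (by simp)).differentiable (by simp)).differentiableAt
    rw [fderiv_clm_apply hd (differentiableAt_const v)]
    simp
  have h2 := (hf.contDiffAt (x := p)).isSymmSndFDerivAt
    (by rw [minSmoothness_of_isRCLikeNormedField]; exact WithTop.coe_le_coe.2 (le_top : (2 : ℕ∞) ≤ ⊤))
  unfold Dx Dy
  rw [h1, h1]
  exact h2 _ _

/-- A class of functions closed under partial derivatives consists of smooth functions. -/
lemma smooth_of_closed (P : (ℝ × ℝ → F) → Prop)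
    (hP : ∀ f, P f → ∃ f1 f2, P f1 ∧ P f2 ∧ ∀ p, HasFDerivAt f (Lc (f1 p) (f2 p)) p)
    {f : ℝ × ℝ → F} (hf : P f) : ContDiff ℝ ∞ f := by
  rw [contDiff_infty]
  intro n
  induction n generalizing f with
  | zero =>
    obtain ⟨f1, f2, -, -, h⟩ := hP f hf
    have : Continuous f := continuous_iff_continuousAt.2 fun p => (h p).continuousAt
    simpa using contDiff_zero (𝕜 := ℝ).2 this
  | succ n ih =>
    obtain ⟨f1, f2, h1, h2, h⟩ := hP f hf
    have := contDiff_succ_iff_hasFDerivAt (𝕜 := ℝ) (n := n) (f := f)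
    push_cast
    rw [this]
    refine ⟨fun p => Lc (f1 p) (f2 p), ?_, h⟩
    unfold Lc
    exact (contDiff_const.smulRight (ih h1)).add (contDiff_const.smulRight (ih h2))

end basic

/-- smooth germs extend globally -/
lemma globalize {E F : Type*} [NormedAddCommGroup E] [NormedSpace ℝ E] [FiniteDimensional ℝ E]
    [NormedAddCommGroup F] [NormedSpace ℝ F] {f : E → F} {a : E}
    (hf : ∀ᶠ p in 𝓝 a, ContDiffAt ℝ ∞ f p) : ∃ g : E → F, ContDiff ℝ ∞ g ∧ g =ᶠ[𝓝 a] f := by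
  obtain ⟨ε, hε, hb⟩ := Metric.eventually_nhds_iff_ball.1 hf
  let φ : ContDiffBump a := ⟨ε / 4, ε / 2, by positivity, by linarith⟩
  refine ⟨fun x => φ x • f x, ?_, ?_⟩
  · rw [contDiff_iff_contDiffAt]
    intro x
    by_cases hx : x ∈ Metric.ball a ε
    · exact (φ.contDiff.contDiffAt).smul (hb x hx)
    · have hx' : x ∉ tsupport φ := by
        rw [φ.tsupport_eq]
        intro h
        apply hx
        have : dist x a ≤ ε / 2 := h
        exact Metric.mem_ball.2 (by linarith)
      have h0 : (fun x => φ x • f x) =ᶠ[𝓝 x] fun _ => 0 := by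
        have := notMem_tsupport_iff_eventuallyEq.1 hx'
        filter_upwards [this] with z hz
        simp [hz]
      exact contDiffAt_const.congr_of_eventuallyEq h0
  · filter_upwards [φ.eventuallyEq_one] with x hx
    simp [hx]

/-- smooth inverse function theorem -/
lemma inv_thm {E F : Type*} [NormedAddCommGroup E] [NormedSpace ℝ E] [CompleteSpace E]
    [NormedAddCommGroup F] [NormedSpace ℝ F] {f : E → F} (hf : ContDiff ℝ ∞ f) (a : E)
    (f' : E ≃L[ℝ] F) (h : HasFDerivAt f (f' : E →L[ℝ] F) a) :
    ∃ e : OpenPartialHomeomorph E F, (∀ x, e x = f x) ∧ a ∈ e.source ∧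
      ContDiffOn ℝ ∞ e.symm e.target := by
  let e0 := (hf.contDiffAt (x := a)).toOpenPartialHomeomorph f h (by simp)
  let s : Set E := (fderiv ℝ f) ⁻¹' (range ((↑) : (E ≃L[ℝ] F) → E →L[ℝ] F))
  have hs : IsOpen s :=
    (ContinuousLinearEquiv.isOpen).preimage (hf.continuous_fderiv (by simp))
  refine ⟨e0.restrOpen s hs, fun x => rfl, ?_, ?_⟩
  · rw [OpenPartialHomeomorph.restrOpen_source]
    exact ⟨(hf.contDiffAt (x := a)).mem_toOpenPartialHomeomorph_source h (by simp), f', h.fderiv.symm⟩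
  · intro y hy
    have hy' := (e0.restrOpen s hs).map_target hy
    obtain ⟨g', hg'⟩ := hy'.2
    apply ContDiffAt.contDiffWithinAt
    refine (e0.restrOpen s hs).contDiffAt_symm (f₀' := g') hy ?_ hf.contDiffAt
    rw [hg']
    exact ((hf.differentiable (by simp)).differentiableAt).hasFDerivAt

end Cib

namespace Cib
open Topology ContDiff

/-- germ equivalence with globally defined data -/
def Eqv (w1 w2 : (ℝ × ℝ) → (ℝ × ℝ) → ℝ) : Prop :=
  ∃ (h : ℝ × ℝ → ℝ × ℝ) (ρ : ℝ × ℝ → ℝ) (f' : (ℝ × ℝ) ≃L[ℝ] (ℝ × ℝ)),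
    ContDiff ℝ ∞ h ∧ h 0 = 0 ∧ HasFDerivAt h (f' : ℝ × ℝ →L[ℝ] ℝ × ℝ) 0 ∧
    ContDiff ℝ ∞ ρ ∧ ρ 0 ≠ 0 ∧
    ∀ᶠ p in 𝓝 (0 : ℝ × ℝ), ∀ v, w2 (h p) (fderiv ℝ h p v) = ρ p * w1 p v

lemma Eqv.trans {ω₁ ω₂ ω₃ : (ℝ × ℝ) → (ℝ × ℝ) → ℝ} (h12 : Eqv ω₁ ω₂) (h23 : Eqv ω₂ ω₃) :
    Eqv ω₁ ω₃ := by
  obtain ⟨h, ρ, f', hh, h0, hf', hρ, hρ0, hE⟩ := h12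
  obtain ⟨k, σ, g', hk, k0, hg', hσ, hσ0, hE'⟩ := h23
  refine ⟨k ∘ h, fun p => σ (h p) * ρ p, f'.trans g', hk.comp hh, by simp [h0, k0], ?_,
    (hσ.comp hh).mul hρ, by simp [h0, hρ0, hσ0], ?_⟩
  · rw [← h0] at hg'
    exact hg'.comp 0 hf'
  · have hc : Tendsto h (𝓝 0) (𝓝 0) := by
      have := hh.continuous.tendsto 0
      rwa [h0] at this
    filter_upwards [hE, hc.eventually hE'] with p hp hp' v
    rw [fderiv_comp p (hk.differentiable (by simp)).differentiableAt
      (hh.differentiable (by simp)).differentiableAt]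
    simp only [Function.comp, ContinuousLinearMap.comp_apply]
    rw [hp', hp, mul_assoc]

lemma Eqv.smooth {w1 w2 : (ℝ × ℝ) → (ℝ × ℝ) → ℝ} (h : Eqv w1 w2) : SmoothEquivAt0 w1 w2 := by
  obtain ⟨h, ρ, f', hh, h0, hf', hρ, hρ0, hE⟩ := h
  obtain ⟨e, he, hs, hsymm⟩ := inv_thm hh 0 f' hf'
  have hev : ∀ᶠ p in 𝓝 (0 : ℝ × ℝ), p ∈ e.source ∧ ρ p ≠ 0 ∧
      ∀ v, w2 (h p) (fderiv ℝ h p v) = ρ p * w1 p v :=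
    (e.open_source.eventually_mem hs).and ((hρ.continuous.continuousAt.eventually_ne hρ0).and hE)
  obtain ⟨U, hU, hUo, h0U⟩ := eventually_nhds_iff.1 hev
  have hee : (e : ℝ × ℝ → ℝ × ℝ) = h := funext he
  have hUs : U ⊆ e.source := fun p hp => (hU p hp).1
  refine ⟨U, h '' U, h, e.symm, ρ, hUo, ?_, h0U, ⟨0, h0U, h0⟩, h0, hh.contDiffOn, ?_, ?_, ?_,
    hρ.contDiffOn, fun p hp => (hU p hp).2.1, fun p hp => (hU p hp).2.2⟩
  · rw [← hee]; exact e.isOpen_image_of_subset_source hUo hUs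
  · apply hsymm.mono
    rintro _ ⟨p, hp, rfl⟩
    rw [← he]; exact e.map_source (hUs hp)
  · rw [← hee]; exact (e.injOn.mono hUs).bijOn_image
  · constructor
    · intro p hp
      rw [← he]; exact e.left_inv (hUs hp)
    · rintro _ ⟨p, hp, rfl⟩
      rw [← he (e.symm _), ← he p, e.left_inv (hUs hp)]

/-- the 2x2 equivalence -/
lemma equiv_of_det (a b c d : ℝ) (h : a * d - b * c ≠ 0) :
    ∃ e : (ℝ × ℝ) ≃L[ℝ] (ℝ × ℝ), (e : ℝ × ℝ →L[ℝ] ℝ × ℝ) = (Lc a b).prod (Lc c d) := by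
  refine ⟨ContinuousLinearEquiv.equivOfInverse ((Lc a b).prod (Lc c d))
    ((Lc (d / (a * d - b * c)) (-b / (a * d - b * c))).prod
      (Lc (-c / (a * d - b * c)) (a / (a * d - b * c)))) ?_ ?_, ?_⟩
  · intro v
    set D := a * d - b * c with hD
    ext
    · simp; field_simp; rw [hD]; ring
    · simp; field_simp; rw [hD]; ring
  · intro v
    set D := a * d - b * c with hD
    ext
    · simp; field_simp; rw [hD]; ring
    · simp; field_simp; rw [hD]; ring
  · ext <;> simp

/-- the reduced form `(dy + b dx)^2 + x m^2 dx^2` -/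
def NF (b m : ℝ × ℝ → ℝ) : (ℝ × ℝ) → (ℝ × ℝ) → ℝ :=
  fun p v => (v.2 + b p * v.1) ^ 2 + p.1 * m p ^ 2 * v.1 ^ 2

lemma fderiv_pair {X Y : ℝ × ℝ → ℝ} (hX : ContDiff ℝ ∞ X) (hY : ContDiff ℝ ∞ Y) (p : ℝ × ℝ) :
    HasFDerivAt (fun p => (X p, Y p))
      ((Lc (Dx X p) (Dy X p)).prod (Lc (Dx Y p) (Dy Y p))) p :=
  (hasF hX p).prodMk (hasF hY p)

/-- local inverse with global data -/
lemma glob_inv {h : ℝ × ℝ → ℝ × ℝ} (hh : ContDiff ℝ ∞ h) (h0 : h 0 = 0)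
    (f' : (ℝ × ℝ) ≃L[ℝ] (ℝ × ℝ)) (hf' : HasFDerivAt h (f' : ℝ × ℝ →L[ℝ] ℝ × ℝ) 0) :
    ∃ g : ℝ × ℝ → ℝ × ℝ, ContDiff ℝ ∞ g ∧ g 0 = 0 ∧ (∀ᶠ p in 𝓝 0, g (h p) = p) ∧
      (∀ᶠ p in 𝓝 0, h (g p) = p) := by
  obtain ⟨e, he, hs, hsymm⟩ := inv_thm hh 0 f' hf'
  have ht : (0 : ℝ × ℝ) ∈ e.target := by
    have := e.map_source hs
    rwa [he, h0] at this
  have hsm : ∀ᶠ p in 𝓝 (0 : ℝ × ℝ), ContDiffAt ℝ ∞ e.symm p := by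
    filter_upwards [e.open_target.mem_nhds ht] with p hp
    exact hsymm.contDiffAt (e.open_target.mem_nhds hp)
  obtain ⟨g, hg, hge⟩ := globalize hsm
  have h0' : e.symm 0 = 0 := by
    have := e.left_inv hs
    rwa [he, h0] at this
  refine ⟨g, hg, by rw [hge.self_of_nhds, h0'], ?_, ?_⟩
  · have hc : Tendsto h (𝓝 0) (𝓝 0) := by
      have := hh.continuous.tendsto 0
      rwa [h0] at this
    filter_upwards [hc.eventually hge, e.open_source.mem_nhds hs] with p hp hps
    rw [hp, ← he, e.left_inv hps]
  · filter_upwards [hge, e.open_target.mem_nhds ht] with p hp hps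
    rw [hp, ← he, e.right_inv hps]

lemma inv_deriv {g h : ℝ × ℝ → ℝ × ℝ} (hg : ContDiff ℝ ∞ g) (hh : ContDiff ℝ ∞ h)
    (H : ∀ᶠ p in 𝓝 (0 : ℝ × ℝ), g (h p) = p) :
    ∀ᶠ p in 𝓝 (0 : ℝ × ℝ), ∀ v, fderiv ℝ g (h p) (fderiv ℝ h p v) = v := by
  filter_upwards [H.eventually_nhds] with p hp v
  have h1 : HasFDerivAt (fun p => g (h p)) ((fderiv ℝ g (h p)).comp (fderiv ℝ h p)) p :=
    ((hg.differentiable (by simp)).differentiableAt.hasFDerivAt).comp p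
      (hh.differentiable (by simp)).differentiableAt.hasFDerivAt
  have h2 : HasFDerivAt (fun p => g (h p)) (ContinuousLinearMap.id ℝ (ℝ × ℝ)) p :=
    (hasFDerivAt_id p).congr_of_eventuallyEq hp
  have := h1.unique h2
  simpa using congrArg (fun L => L v) this

lemma reduce {a b c : ℝ × ℝ → ℝ} (ha : ContDiff ℝ ∞ a) (hb : ContDiff ℝ ∞ b)
    (hc : ContDiff ℝ ∞ c) {h : ℝ × ℝ → ℝ × ℝ} (hh : ContDiff ℝ ∞ h) (h0 : h 0 = 0)
    (f' : (ℝ × ℝ) ≃L[ℝ] (ℝ × ℝ)) (hf' : HasFDerivAt h (f' : ℝ × ℝ →L[ℝ] ℝ × ℝ) 0)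
    {k : ℝ × ℝ → ℝ} (hk : ContDiff ℝ ∞ k) (hk0 : k 0 ≠ 0)
    (hdisc : ∀ᶠ p in 𝓝 (0 : ℝ × ℝ), a p * c p - b p ^ 2 = (h p).1 * k p ^ 2)
    (hpos : ∀ v : ℝ × ℝ, v ≠ 0 → (fderiv ℝ h 0 v).1 = 0 → 0 < BDE a b c 0 v) :
    ∃ b' m ρ : ℝ × ℝ → ℝ, ContDiff ℝ ∞ b' ∧ ContDiff ℝ ∞ m ∧ 0 < m 0 ∧ ContDiff ℝ ∞ ρ ∧ ρ 0 ≠ 0 ∧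
      ∀ᶠ p in 𝓝 (0 : ℝ × ℝ), ∀ v, NF b' m (h p) (fderiv ℝ h p v) = ρ p * BDE a b c p v := by
  obtain ⟨g, hg, g0, hgh, hhg⟩ := glob_inv hh h0 f' hf'
  have hD1 := inv_deriv hg hh hgh
  have hD2 := inv_deriv hh hg hhg
  have hhc : Tendsto h (𝓝 0) (𝓝 0) := by
    have := hh.continuous.tendsto 0
    rwa [h0] at this
  have hgc : Tendsto g (𝓝 0) (𝓝 0) := by
    have := hg.continuous.tendsto 0
    rwa [g0] at this
  have hgx := smooth_Dx hg
  have hgy := smooth_Dy hg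
  set A : ℝ × ℝ → ℝ := fun q => a (g q) * (Dy g q).2 ^ 2 + 2 * b (g q) * (Dy g q).1 * (Dy g q).2
    + c (g q) * (Dy g q).1 ^ 2 with hA
  set B : ℝ × ℝ → ℝ := fun q => a (g q) * (Dy g q).2 * (Dx g q).2
    + b (g q) * ((Dx g q).1 * (Dy g q).2 + (Dy g q).1 * (Dx g q).2)
    + c (g q) * (Dy g q).1 * (Dx g q).1 with hB
  set C : ℝ × ℝ → ℝ := fun q => a (g q) * (Dx g q).2 ^ 2 + 2 * b (g q) * (Dx g q).1 * (Dx g q).2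
    + c (g q) * (Dx g q).1 ^ 2 with hC
  set J : ℝ × ℝ → ℝ := fun q => (Dx g q).1 * (Dy g q).2 - (Dy g q).1 * (Dx g q).2 with hJ
  have hAs : ContDiff ℝ ∞ A := by fun_prop
  have hBs : ContDiff ℝ ∞ B := by fun_prop
  have hJs : ContDiff ℝ ∞ J := by fun_prop
  have hdet : ∀ᶠ q in 𝓝 (0 : ℝ × ℝ), A q * C q - B q ^ 2 = q.1 * (J q * k (g q)) ^ 2 := by
    filter_upwards [hgc.eventually hdisc, hhg] with q hq hq2
    rw [hq2] at hq
    have : A q * C q - B q ^ 2 = J q ^ 2 * (a (g q) * c (g q) - b (g q) ^ 2) := by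
      simp only [hA, hB, hC, hJ]; ring
    rw [this, hq]; ring
  have hform : ∀ q w, A q * w.2 ^ 2 + 2 * B q * w.1 * w.2 + C q * w.1 ^ 2
      = BDE a b c (g q) (fderiv ℝ g q w) := by
    intro q w
    rw [fderiv_app]
    simp only [BDE, hA, hB, hC, Prod.fst_add, Prod.snd_add, Prod.smul_fst, Prod.smul_snd,
      smul_eq_mul]
    ring
  have hD20 := hD2.self_of_nhds
  rw [g0] at hD20
  have hA0 : 0 < A 0 := by
    have h1 := hform 0 (0, 1)
    simp only [g0] at h1
    have h2 : A 0 = BDE a b c 0 (fderiv ℝ g 0 (0, 1)) := by rw [← h1]; ring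
    rw [h2]
    apply hpos
    · intro h3
      have := hD20 (0, 1)
      rw [h3] at this
      simpa using congrArg Prod.snd this
    · rw [hD20]
  have hJ0 : J 0 ≠ 0 := by
    intro hJ0
    have e1 := hD20 (1, 0)
    have e2 := hD20 (0, 1)
    rw [fderiv_app h] at e1 e2
    have e11 := congrArg Prod.fst e1
    have e12 := congrArg Prod.snd e1
    have e21 := congrArg Prod.fst e2
    have e22 := congrArg Prod.snd e2
    simp only [Prod.fst_add, Prod.snd_add, Prod.smul_fst, Prod.smul_snd, smul_eq_mul] at e11 e12 e21 e22
    change (Dx g 0).1 * _ + (Dx g 0).2 * _ = _ at e11 e12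
    change (Dy g 0).1 * _ + (Dy g 0).2 * _ = _ at e21 e22
    simp only [hJ] at hJ0
    have : (0 : ℝ) = 1 := by
      calc (0 : ℝ) = ((Dx g 0).1 * (Dy g 0).2 - (Dy g 0).1 * (Dx g 0).2) *
            ((Dx h 0).1 * (Dy h 0).2 - (Dy h 0).1 * (Dx h 0).2) := by rw [hJ0]; ring
        _ = ((Dx g 0).1 * (Dx h 0).1 + (Dx g 0).2 * (Dy h 0).1) *
            ((Dy g 0).1 * (Dx h 0).2 + (Dy g 0).2 * (Dy h 0).2) -
            ((Dx g 0).1 * (Dx h 0).2 + (Dx g 0).2 * (Dy h 0).2) *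
            ((Dy g 0).1 * (Dx h 0).1 + (Dy g 0).2 * (Dy h 0).1) := by ring
        _ = 1 := by rw [e11, e12, e21, e22]; ring
    exact zero_ne_one this
  obtain ⟨σ, hσ2, hσ⟩ : ∃ σ : ℝ, σ ^ 2 = 1 ∧ 0 < σ * (J 0 * k 0) := by
    rcases lt_or_gt_of_ne (mul_ne_zero hJ0 hk0) with h | h
    · exact ⟨-1, by norm_num, by linarith⟩
    · exact ⟨1, by norm_num, by linarith⟩
  have hAne : ∀ᶠ q in 𝓝 (0 : ℝ × ℝ), A q ≠ 0 :=
    hAs.continuous.continuousAt.eventually_ne hA0.ne'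
  obtain ⟨b', hb', hb'e⟩ := globalize (f := fun q => B q / A q) (a := (0 : ℝ × ℝ)) (by
    filter_upwards [hAne] with q hq
    exact hBs.contDiffAt.div hAs.contDiffAt hq)
  obtain ⟨m, hm, hme⟩ := globalize (f := fun q => σ * (J q * k (g q)) / A q) (a := (0 : ℝ × ℝ)) (by
    filter_upwards [hAne] with q hq
    exact (ContDiff.contDiffAt (by fun_prop)).div hAs.contDiffAt hq)
  obtain ⟨r, hr, hre⟩ := globalize (f := fun q => 1 / A q) (a := (0 : ℝ × ℝ)) (by
    filter_upwards [hAne] with q hq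
    exact contDiffAt_const.div hAs.contDiffAt hq)
  refine ⟨b', m, fun p => r (h p), hb', hm, ?_, hr.comp hh, ?_, ?_⟩
  · rw [hme.self_of_nhds]; show 0 < σ * (J 0 * k (g 0)) / A 0; rw [g0]; positivity
  · show r (h 0) ≠ 0; rw [h0, hre.self_of_nhds]; exact one_div_ne_zero hA0.ne'
  · filter_upwards [hhc.eventually hb'e, hhc.eventually hme, hhc.eventually hre,
      hhc.eventually hAne, hhc.eventually hdet, hgh, hD1] with p h1 h2 h3 h4 h5 h6 h7 v
    have h8 := hform (h p) (fderiv ℝ h p v)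
    rw [h7, h6] at h8
    rw [← h8, NF, h1, h2, h3]
    rw [h6] at h5 ⊢
    set w := fderiv ℝ h p v
    field_simp
    have h5' : A (h p) * C (h p) - B (h p) ^ 2 = (h p).1 * (J (h p) * k p) ^ 2 * σ ^ 2 := by
      rw [hσ2, h5]; ring
    linear_combination (-w.1 ^ 2) * h5'

/-- the first order system -/
def PDE (b m Y Z : ℝ × ℝ → ℝ) (p : ℝ × ℝ) : Prop :=
  Dx Y p = b p * Dy Y p - p.1 * m p * (2 / 3 * p.1 * Dy Z p) ∧
  Z p + 2 / 3 * p.1 * Dx Z p = m p * Dy Y p + b p * (2 / 3 * p.1 * Dy Z p)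

lemma from_PDE {b m Y Z : ℝ × ℝ → ℝ} (hY : ContDiff ℝ ∞ Y) (hZ : ContDiff ℝ ∞ Z)
    (hY0 : Y 0 = 0) (hYy : Dy Y 0 ≠ 0) (hZ0 : 0 < Z 0) :
    ∃ (u ρ : ℝ × ℝ → ℝ) (h : ℝ × ℝ → ℝ × ℝ) (f' : (ℝ × ℝ) ≃L[ℝ] (ℝ × ℝ)), ContDiff ℝ ∞ u ∧
      0 < u 0 ∧ ContDiff ℝ ∞ ρ ∧ ρ 0 ≠ 0 ∧ ContDiff ℝ ∞ h ∧ h 0 = 0 ∧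
      HasFDerivAt h (f' : ℝ × ℝ →L[ℝ] ℝ × ℝ) 0 ∧ (∀ p, (h p).1 = p.1 * u p ^ 2) ∧
      (∀ v, (fderiv ℝ h 0 v).1 = v.1 * u 0 ^ 2) ∧
      ∀ᶠ p in 𝓝 (0 : ℝ × ℝ), PDE b m Y Z p → ∀ v,
        BDE (fun _ => 1) (fun _ => 0) (fun p => p.1) (h p) (fderiv ℝ h p v) = ρ p * NF b m p v := by
  have hZpos : ∀ᶠ q in 𝓝 (0 : ℝ × ℝ), 0 < Z q :=
    hZ.continuous.continuousAt.eventually (lt_mem_nhds hZ0)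
  obtain ⟨u, hu, hue⟩ := globalize (f := fun q => Z q ^ (1 / 3 : ℝ)) (a := (0 : ℝ × ℝ)) (by
    filter_upwards [hZpos] with q hq
    exact hZ.contDiffAt.rpow_const_of_ne hq.ne')
  have hu0 : 0 < u 0 := by rw [hue.self_of_nhds]; positivity
  have hcube : ∀ᶠ q in 𝓝 (0 : ℝ × ℝ), u q ^ 3 = Z q := by
    filter_upwards [hue, hZpos] with q h1 h2
    rw [h1, ← Real.rpow_natCast, ← Real.rpow_mul h2.le]; norm_num
  have hX : ContDiff ℝ ∞ (fun p : ℝ × ℝ => p.1 * u p ^ 2) := by fun_prop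
  have hXd : ∀ p : ℝ × ℝ, HasFDerivAt (fun p : ℝ × ℝ => p.1 * u p ^ 2)
      (Lc (u p ^ 2 + p.1 * (2 * u p * Dx u p)) (p.1 * (2 * u p * Dy u p))) p := by
    intro p
    have := (hasFDerivAt_fst (𝕜 := ℝ) (p := p)).mul ((hasF hu p).pow 2)
    convert! this using 1
    ext <;> simp [mul_comm, mul_assoc]
    ring
  have hd : ∀ p : ℝ × ℝ, HasFDerivAt (fun p : ℝ × ℝ => (p.1 * u p ^ 2, Y p))
      ((Lc (u p ^ 2 + p.1 * (2 * u p * Dx u p)) (p.1 * (2 * u p * Dy u p))).prod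
      (Lc (Dx Y p) (Dy Y p))) p := fun p => (hXd p).prodMk (hasF hY p)
  obtain ⟨f', hf'⟩ := equiv_of_det (u 0 ^ 2) 0 (Dx Y 0) (Dy Y 0) (by
    simp [hYy, hu0.ne'])
  refine ⟨u, fun p => Dy Y p ^ 2 + p.1 * (2 / 3 * p.1 * Dy Z p) ^ 2,
    fun p => (p.1 * u p ^ 2, Y p), f', hu, hu0, ?_, by simp [hYy], by fun_prop, by simp [hY0], ?_,
    fun p => rfl, ?_, ?_⟩
  · have := smooth_Dy hY
    have := smooth_Dy hZ
    fun_prop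
  · rw [hf']
    simpa using hd 0
  · intro v
    rw [(hd 0).fderiv]
    simp
  · filter_upwards [hcube.eventually_nhds] with p hp hpde v
    have hZe : Dx Z p = 3 * u p ^ 2 * Dx u p ∧ Dy Z p = 3 * u p ^ 2 * Dy u p := by
      have h1 : HasFDerivAt Z (Lc (3 * u p ^ 2 * Dx u p) (3 * u p ^ 2 * Dy u p)) p := by
        have := ((hasF hu p).pow 3).congr_of_eventuallyEq
          (hp.mono fun q hq => hq.symm)
        convert! this using 1
        ext <;> simp [mul_assoc]
      exact ⟨Dx_of h1, Dy_of h1⟩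
    obtain ⟨e1, e2⟩ := hpde
    rw [(hd p).fderiv]
    have hz := hp.self_of_nhds
    have e3 : (fun p : ℝ × ℝ => p.1) (p.1 * u p ^ 2, Y p) = p.1 * u p ^ 2 := rfl
    simp only [BDE, NF, ContinuousLinearMap.prod_apply, Lc_apply, smul_eq_mul]
    have hQ : Dy Z p = 3 * u p ^ 2 * Dy u p := hZe.2
    have hP : u p * (u p ^ 2 + p.1 * (2 * u p * Dx u p)) =
        m p * Dy Y p + b p * (2 / 3 * p.1 * Dy Z p) := by
      rw [← e2, hZe.1, ← hz]; ring
    have hP2 : u p * (p.1 * (2 * u p * Dy u p)) = 2 / 3 * p.1 * Dy Z p := by rw [hQ]; ring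
    set Q := 2 / 3 * p.1 * Dy Z p
    rw [e1]
    calc _ = (v.1 * (b p * Dy Y p - p.1 * m p * Q) + v.2 * Dy Y p) ^ 2 + p.1 *
          (v.1 * (u p * (u p ^ 2 + p.1 * (2 * u p * Dx u p))) +
            v.2 * (u p * (p.1 * (2 * u p * Dy u p)))) ^ 2 := by ring
      _ = _ := by rw [hP, hP2]; ring

end Cib

namespace Cib
open Topology ContDiff

/-- unit interval -/
abbrev KI := Icc (0 : ℝ) 1
/-- continuous functions on unit interval -/
def CK := BoundedContinuousFunction KI ℝ

instance : NormedAddCommGroup CK :=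
  inferInstanceAs (NormedAddCommGroup (BoundedContinuousFunction KI ℝ))
instance : NormedSpace ℝ CK := inferInstanceAs (NormedSpace ℝ (BoundedContinuousFunction KI ℝ))
instance : CompleteSpace CK := inferInstanceAs (CompleteSpace (BoundedContinuousFunction KI ℝ))
instance : CoeFun CK (fun _ => KI → ℝ) := ⟨fun f => (show BoundedContinuousFunction KI ℝ from f)⟩

lemma CK.continuous (f : CK) : Continuous (fun t => f t) :=
  BoundedContinuousFunction.continuous (show BoundedContinuousFunction KI ℝ from f)
lemma CK.add_apply (f g : CK) (t : KI) : (f + g) t = f t + g t := rfl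
lemma CK.sub_apply (f g : CK) (t : KI) : (f - g) t = f t - g t := rfl
lemma CK.smul_apply (c : ℝ) (f : CK) (t : KI) : (c • f) t = c * f t := rfl
lemma CK.norm_coe_le_norm (f : CK) (t : KI) : ‖f t‖ ≤ ‖f‖ :=
  BoundedContinuousFunction.norm_coe_le_norm (show BoundedContinuousFunction KI ℝ from f) t
lemma CK.norm_le {f : CK} {c : ℝ} (hc : 0 ≤ c) : ‖f‖ ≤ c ↔ ∀ t, ‖f t‖ ≤ c :=
  BoundedContinuousFunction.norm_le (f := (show BoundedContinuousFunction KI ℝ from f)) hc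
lemma CK.ext {f g : CK} (h : ∀ t, f t = g t) : f = g :=
  BoundedContinuousFunction.ext (f := (show BoundedContinuousFunction KI ℝ from f)) h

/-- constructor -/
def CK.mk (f : KI → ℝ) (hf : Continuous f) : CK := BoundedContinuousFunction.mkOfCompact ⟨f, hf⟩
lemma CK.mk_apply (f : KI → ℝ) (hf : Continuous f) (t : KI) : CK.mk f hf t = f t := rfl

/-- superposition operator -/
def NB (B : ℝ × ℝ → ℝ) (hB : ContDiff ℝ ∞ B) (η : CK × CK) : CK :=
  CK.mk (fun t => B (η.1 t, η.2 t)) (hB.continuous.comp (η.1.continuous.prodMk η.2.continuous))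

/-- multiplication -/
def mulK : CK →L[ℝ] CK →L[ℝ] CK :=
  LinearMap.mkContinuous₂ (LinearMap.mk₂ ℝ
    (fun a b : CK => CK.mk (fun t => a t * b t) (a.continuous.mul b.continuous))
    (fun a b c => CK.ext fun t => by simp only [CK.add_apply, CK.mk_apply]; ring)
    (fun a b c => CK.ext fun t => by simp only [CK.smul_apply, CK.mk_apply]; ring)
    (fun a b c => CK.ext fun t => by simp only [CK.add_apply, CK.mk_apply]; ring)
    (fun a b c => CK.ext fun t => by simp only [CK.smul_apply, CK.mk_apply]; ring)) 1
    (fun a b => by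
      rw [one_mul]
      refine (CK.norm_le (by positivity)).2 fun t => ?_
      have : ‖a t * b t‖ ≤ ‖a‖ * ‖b‖ := by
        rw [norm_mul]
        exact mul_le_mul (a.norm_coe_le_norm t) (b.norm_coe_le_norm t) (norm_nonneg _) (norm_nonneg _)
      exact this)

lemma mulK_apply (a b : CK) (t : KI) : mulK a b t = a t * b t := rfl

/-- derivative of superposition -/
def LB (a b : CK) : CK × CK →L[ℝ] CK :=
  (mulK a).comp (ContinuousLinearMap.fst ℝ CK CK) +
  (mulK b).comp (ContinuousLinearMap.snd ℝ CK CK)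

lemma LB_apply (a b : CK) (v : CK × CK) (t : KI) : LB a b v t = a t * v.1 t + b t * v.2 t := rfl

lemma NB_deriv (B : ℝ × ℝ → ℝ) (hB : ContDiff ℝ ∞ B) (η : CK × CK) :
    HasFDerivAt (NB B hB) (LB (NB (Dx B) (smooth_Dx hB) η) (NB (Dy B) (smooth_Dy hB) η)) η := by
  rw [hasFDerivAt_iff_isLittleO_nhds_zero, Asymptotics.isLittleO_iff]
  intro c hc
  have hcomp : IsCompact (Metric.closedBall (0 : ℝ × ℝ) (‖η‖ + 1)) := isCompact_closedBall _ _
  have hu := hcomp.uniformContinuousOn_of_continuous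
    (hB.continuous_fderiv (by simp)).continuousOn
  obtain ⟨δ, hδ, hu⟩ := Metric.uniformContinuousOn_iff.1 hu c hc
  have hev : ∀ᶠ v in 𝓝 (0 : CK × CK), ‖v‖ < min δ 1 := by
    have : Metric.ball (0 : CK × CK) (min δ 1) ∈ 𝓝 0 := Metric.ball_mem_nhds _ (by positivity)
    filter_upwards [this] with v hv
    simpa using hv
  filter_upwards [hev] with v hv
  refine (CK.norm_le (by positivity)).2 ?_
  intro t
  have h1 : ‖((η.1 t, η.2 t) : ℝ × ℝ)‖ ≤ ‖η‖ :=
    max_le ((CK.norm_coe_le_norm _ t).trans (norm_fst_le η))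
      ((CK.norm_coe_le_norm _ t).trans (norm_snd_le η))
  have h2 : ‖((v.1 t, v.2 t) : ℝ × ℝ)‖ ≤ ‖v‖ :=
    max_le ((CK.norm_coe_le_norm _ t).trans (norm_fst_le v))
      ((CK.norm_coe_le_norm _ t).trans (norm_snd_le v))
  set x : ℝ × ℝ := (η.1 t, η.2 t) with hx
  set w : ℝ × ℝ := (v.1 t, v.2 t) with hw
  have h3 := (convex_ball x (min δ 1)).norm_image_sub_le_of_norm_hasFDerivWithin_le' (f := B)
    (f' := fun z => fderiv ℝ B z) (φ := fderiv ℝ B x) (C := c) (x := x) (y := x + w)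
    (fun z _ => (hB.differentiable (by simp)).differentiableAt.hasFDerivAt.hasFDerivWithinAt)
    (fun z hz => by
      have hz' := Metric.mem_ball.1 hz
      rw [← dist_eq_norm]
      apply (hu z _ x _ _).le
      · rw [mem_closedBall_zero_iff]
        have : ‖z‖ ≤ ‖z - x‖ + ‖x‖ := by simpa using norm_add_le (z - x) x
        rw [dist_eq_norm] at hz'
        have := min_le_right δ 1
        linarith
      · rw [mem_closedBall_zero_iff]; linarith
      · exact hz'.trans_le (min_le_left _ _))
    (Metric.mem_ball_self (by positivity))
    (by rw [Metric.mem_ball, dist_eq_norm]; simpa using h2.trans_lt hv)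
  simp only [add_sub_cancel_left] at h3
  refine le_trans (le_of_eq ?_) (h3.trans (by gcongr))
  rw [fderiv_app]
  simp only [CK.sub_apply, LB_apply, NB, CK.mk_apply, smul_eq_mul]
  congr 1
  simp only [hx, hw, Prod.fst_add, Prod.snd_add, CK.add_apply, Prod.mk_add_mk]
  ring

lemma NB_smooth (B : ℝ × ℝ → ℝ) (hB : ContDiff ℝ ∞ B) : ContDiff ℝ ∞ (NB B hB) := by
  rw [contDiff_infty]
  intro n
  induction n generalizing B with
  | zero =>
    have : Continuous (NB B hB) := continuous_iff_continuousAt.2 fun p => (NB_deriv B hB p).continuousAt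
    simpa using contDiff_zero (𝕜 := ℝ).2 this
  | succ n ih =>
    push_cast
    rw [contDiff_succ_iff_hasFDerivAt (𝕜 := ℝ) (n := n)]
    refine ⟨_, ?_, NB_deriv B hB⟩
    have h1 := ih (Dx B) (smooth_Dx hB)
    have h2 := ih (Dy B) (smooth_Dy hB)
    have e0 : ContDiff ℝ n (fun a : CK => mulK a) :=
      mulK.contDiff
    have e1 : ContDiff ℝ n (fun η => mulK (NB (Dx B) (smooth_Dx hB) η)) :=
      e0.comp h1
    have e2 : ContDiff ℝ n (fun η => mulK (NB (Dy B) (smooth_Dy hB) η)) :=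
      e0.comp h2
    have e3 := e1.clm_comp (contDiff_const (c := ContinuousLinearMap.fst ℝ CK CK))
    have e4 := e2.clm_comp (contDiff_const (c := ContinuousLinearMap.snd ℝ CK CK))
    exact e3.add e4

/-- extension to the line -/
def exK (f : CK) (t : ℝ) : ℝ := f (projIcc 0 1 zero_le_one t)

lemma exK_cont (f : CK) : Continuous (exK f) := f.continuous.comp continuous_projIcc

lemma exK_of (f : CK) (t : KI) : exK f t = f t := by simp [exK]

/-- integration operator -/
def JK : CK →L[ℝ] CK :=
  LinearMap.mkContinuous
    { toFun := fun f => CK.mk (fun s => ∫ t in (0 : ℝ)..s, exK f t)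
        ((intervalIntegral.continuous_primitive (fun a b => (exK_cont f).intervalIntegrable a b) 0).comp
          continuous_subtype_val)
      map_add' := by
        intro f g
        refine CK.ext fun s => ?_
        simp only [CK.mk_apply, CK.add_apply]
        rw [← intervalIntegral.integral_add ((exK_cont f).intervalIntegrable _ _)
          ((exK_cont g).intervalIntegrable _ _)]
        rfl
      map_smul' := by
        intro c f
        refine CK.ext fun s => ?_
        simp only [CK.mk_apply, CK.smul_apply, RingHom.id_apply]
        rw [← intervalIntegral.integral_const_mul]
        rfl } 1 (by
    intro f
    refine (CK.norm_le (by positivity)).2 ?_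
    intro s
    have := intervalIntegral.norm_integral_le_of_norm_le_const (a := (0 : ℝ)) (b := s) (C := ‖f‖)
      (f := exK f) (fun x _ => CK.norm_coe_le_norm _ _)
    refine this.trans ?_
    rw [sub_zero, abs_of_nonneg s.2.1, one_mul]
    exact mul_le_of_le_one_right (norm_nonneg _) s.2.2)

lemma JK_apply (f : CK) (s : KI) : JK f s = ∫ t in (0 : ℝ)..s, exK f t := rfl

/-- identity function on the interval -/
def idK : CK := CK.mk (fun t => t) continuous_subtype_val

end Cib

namespace Cib
open Topology ContDiff

/-- constant function -/
def oneK : CK := CK.mk (fun _ => 1) continuous_const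

/-- evaluation at one -/
def evK (t : KI) : CK →L[ℝ] ℝ :=
  LinearMap.mkContinuous
    { toFun := fun f : CK => f t, map_add' := fun _ _ => rfl, map_smul' := fun _ _ => rfl } 1
    (fun f => by rw [one_mul]; exact f.norm_coe_le_norm t)

lemma evK_apply (t : KI) (f : CK) : evK t f = f t := rfl

/-- the fixed point map -/
def FK (B : ℝ × ℝ → ℝ) (hB : ContDiff ℝ ∞ B) (z : (ℝ × ℝ) × CK) : CK :=
  z.2 - z.1.2 • oneK - z.1.1 • JK (NB B hB (z.1.1 • idK, z.2))

lemma FK_apply (B : ℝ × ℝ → ℝ) (hB : ContDiff ℝ ∞ B) (z : (ℝ × ℝ) × CK) (s : KI) :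
    FK B hB z s = z.2 s - z.1.2 -
      z.1.1 * ∫ t in (0 : ℝ)..s, exK (NB B hB (z.1.1 • idK, z.2)) t := by
  have : FK B hB z s = z.2 s - z.1.2 * 1 -
      z.1.1 * ∫ t in (0 : ℝ)..s, exK (NB B hB (z.1.1 • idK, z.2)) t := rfl
  rw [this, mul_one]

lemma exK_NB (B : ℝ × ℝ → ℝ) (hB : ContDiff ℝ ∞ B) (τ : ℝ) (γ : CK) (t : ℝ) (ht : t ∈ Icc (0 : ℝ) 1) :
    exK (NB B hB (τ • idK, γ)) t = B (τ * t, exK γ t) := by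
  have : exK (NB B hB (τ • idK, γ)) t =
    B (τ * (projIcc 0 1 zero_le_one t : ℝ), exK γ t) := rfl
  rw [this, projIcc_of_mem _ ht]

lemma FK_zero_iff (B : ℝ × ℝ → ℝ) (hB : ContDiff ℝ ∞ B) (τ y : ℝ) (γ : CK) :
    FK B hB ((τ, y), γ) = 0 ↔ ∀ s ∈ Icc (0 : ℝ) 1, exK γ s = y +
      τ * ∫ t in (0 : ℝ)..s, B (τ * t, exK γ t) := by
  have key : ∀ s ∈ Icc (0 : ℝ) 1, ∫ t in (0 : ℝ)..s, exK (NB B hB (τ • idK, γ)) t =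
      ∫ t in (0 : ℝ)..s, B (τ * t, exK γ t) := by
    intro s hs
    apply intervalIntegral.integral_congr
    intro t ht
    rw [uIcc_of_le hs.1] at ht
    exact exK_NB B hB τ γ t ⟨ht.1, ht.2.trans hs.2⟩
  constructor
  · intro h s hs
    have h1 := FK_apply B hB ((τ, y), γ) ⟨s, hs⟩
    rw [h] at h1
    have h2 : (0 : ℝ) = γ ⟨s, hs⟩ - y - τ * ∫ t in (0 : ℝ)..s, exK (NB B hB (τ • idK, γ)) t := h1
    rw [key s hs] at h2
    have h3 : exK γ s = γ ⟨s, hs⟩ := exK_of γ ⟨s, hs⟩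
    rw [h3]; linarith
  · intro h
    refine CK.ext fun s => ?_
    have h1 := h s s.2
    rw [FK_apply]
    show γ s - y - τ * _ = 0
    rw [key s s.2, ← exK_of γ s, h1]; ring

lemma FK_smooth (B : ℝ × ℝ → ℝ) (hB : ContDiff ℝ ∞ B) : ContDiff ℝ ∞ (FK B hB) := by
  unfold FK
  have h1 : ContDiff ℝ ∞ (fun z : (ℝ × ℝ) × CK => (z.1.1 • idK, z.2)) :=
    ((contDiff_fst.fst).smul contDiff_const).prodMk contDiff_snd
  have h2 : ContDiff ℝ ∞ (fun z : (ℝ × ℝ) × CK => JK (NB B hB (z.1.1 • idK, z.2))) :=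
    JK.contDiff.comp ((NB_smooth B hB).comp h1)
  exact (contDiff_snd.sub ((contDiff_fst.snd).smul contDiff_const)).sub
    ((contDiff_fst.fst).smul h2)

lemma FK_equiv (c : CK) : ∃ e : ((ℝ × ℝ) × CK) ≃L[ℝ] ((ℝ × ℝ) × CK),
    ∀ v, e v = (v.1, v.2 - v.1.2 • oneK - v.1.1 • c) := by
  let P : ((ℝ × ℝ) × CK) →L[ℝ] (ℝ × ℝ) := ContinuousLinearMap.fst ℝ _ _
  let A : ((ℝ × ℝ) × CK) →L[ℝ] CK := ContinuousLinearMap.snd ℝ _ _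
  let T1 : ((ℝ × ℝ) × CK) →L[ℝ] CK :=
    ((ContinuousLinearMap.snd ℝ ℝ ℝ).comp P).smulRight oneK
  let T2 : ((ℝ × ℝ) × CK) →L[ℝ] CK :=
    ((ContinuousLinearMap.fst ℝ ℝ ℝ).comp P).smulRight c
  refine ⟨ContinuousLinearEquiv.equivOfInverse (P.prod (A - T1 - T2)) (P.prod (A + T1 + T2)) ?_ ?_, ?_⟩
  · intro v
    refine Prod.ext (by simp [P]) ?_
    simp [P, A, T1, T2]
    abel
  · intro v
    refine Prod.ext (by simp [P]) ?_
    simp [P, A, T1, T2]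
    abel
  · intro v
    simp [P, A, T1, T2]

lemma flow0 (B : ℝ × ℝ → ℝ) (hB : ContDiff ℝ ∞ B) :
    ∃ Φ : ℝ × ℝ → ℝ, ContDiff ℝ ∞ Φ ∧ ∃ r > 0, ∀ y, |y| < r → ∀ τ, |τ| < r →
      Φ (τ, y) = y + ∫ t in (0 : ℝ)..τ, B (t, Φ (t, y)) := by
  have hF := FK_smooth B hB
  set Θ : (ℝ × ℝ) × CK → (ℝ × ℝ) × CK := fun z => (z.1, FK B hB z) with hΘ
  have hΘs : ContDiff ℝ ∞ Θ := contDiff_fst.prodMk hF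
  obtain ⟨f', hf'⟩ := FK_equiv (JK (NB B hB (0, 0)))
  have hd : HasFDerivAt Θ (f' : (ℝ × ℝ) × CK →L[ℝ] (ℝ × ℝ) × CK) 0 := by
    have h1 : HasFDerivAt (fun z : (ℝ × ℝ) × CK => JK (NB B hB (z.1.1 • idK, z.2))) _ 0 :=
      (ContDiff.differentiable (n := ∞) (JK.contDiff.comp ((NB_smooth B hB).comp
        (((contDiff_fst.fst).smul contDiff_const).prodMk contDiff_snd))) (by simp)
          ).differentiableAt.hasFDerivAt
    have h2 : HasFDerivAt (fun z : (ℝ × ℝ) × CK => z.1.1)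
      ((ContinuousLinearMap.fst ℝ ℝ ℝ).comp (ContinuousLinearMap.fst ℝ (ℝ × ℝ) CK)) 0 :=
      ((ContinuousLinearMap.fst ℝ ℝ ℝ).comp (ContinuousLinearMap.fst ℝ (ℝ × ℝ) CK)).hasFDerivAt
    have h3 : HasFDerivAt (fun z : (ℝ × ℝ) × CK => z.1.2)
      ((ContinuousLinearMap.snd ℝ ℝ ℝ).comp (ContinuousLinearMap.fst ℝ (ℝ × ℝ) CK)) 0 :=
      ((ContinuousLinearMap.snd ℝ ℝ ℝ).comp (ContinuousLinearMap.fst ℝ (ℝ × ℝ) CK)).hasFDerivAt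
    have h4 := (hasFDerivAt_fst (𝕜 := ℝ) (p := (0 : (ℝ × ℝ) × CK))).prodMk
      (((hasFDerivAt_snd (𝕜 := ℝ) (p := (0 : (ℝ × ℝ) × CK))).sub (h3.smul_const oneK)).sub (h2.smul h1))
    refine HasFDerivAt.congr_fderiv h4 ?_
    refine ContinuousLinearMap.ext fun v => ?_
    have := hf' v
    rw [ContinuousLinearEquiv.coe_coe, this]
    simp
  obtain ⟨e, he, hs, hsymm⟩ := inv_thm hΘs 0 f' hd
  have hΘ0 : Θ 0 = 0 := by
    have : FK B hB 0 = 0 := by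
      have := (FK_zero_iff B hB 0 0 0).2 (by intro s _; simp; rfl)
      exact this
    simp [hΘ, this]
  have ht : (0 : (ℝ × ℝ) × CK) ∈ e.target := by
    have := e.map_source hs
    rwa [he, hΘ0] at this
  have he0 : e.symm 0 = 0 := by
    have := e.left_inv hs
    rwa [he, hΘ0] at this
  obtain ⟨r, hr, hrs⟩ := Metric.mem_nhds_iff.1 (e.open_source.mem_nhds hs)
  let ι : ℝ × ℝ → (ℝ × ℝ) × CK := fun p => (p, 0)
  have hι : ContDiff ℝ ∞ ι := contDiff_id.prodMk contDiff_const
  have hι0 : ι 0 = 0 := rfl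
  have hιc : Tendsto ι (𝓝 0) (𝓝 0) := hι.continuous.tendsto 0
  let G : ℝ × ℝ → CK := fun p => (e.symm (ι p)).2
  have hsymc : ContinuousAt e.symm 0 := e.symm.continuousAt ht
  have hGc : Tendsto G (𝓝 0) (𝓝 0) := by
    have h1 : Tendsto (fun p => e.symm (ι p)) (𝓝 0) (𝓝 0) := by
      have := hsymc.tendsto
      rw [he0] at this
      exact this.comp hιc
    exact (continuous_snd.tendsto (0 : (ℝ × ℝ) × CK)).comp h1
  have hG1 : ∀ᶠ p in 𝓝 (0 : ℝ × ℝ), FK B hB (p, G p) = 0 ∧ ContDiffAt ℝ ∞ G p ∧ ‖G p‖ < r := by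
    have h1 := hιc.eventually (e.open_target.eventually_mem ht)
    have h2 : ∀ᶠ p in 𝓝 (0 : ℝ × ℝ), ‖G p‖ < r := by
      have := hGc.eventually (Metric.ball_mem_nhds 0 hr)
      simpa using this
    filter_upwards [h1, h2] with p hp hp2
    refine ⟨?_, ?_, hp2⟩
    · have h3 := e.right_inv hp
      rw [he] at h3
      have h4 : (e.symm (ι p)).1 = p := congrArg Prod.fst h3
      have h5 : FK B hB (e.symm (ι p)) = 0 := congrArg Prod.snd h3
      have h6 : (p, G p) = e.symm (ι p) := Prod.ext h4.symm rfl
      rw [h6]; exact h5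
    · have h3 : ContDiffAt ℝ ∞ e.symm (ι p) := hsymm.contDiffAt (e.open_target.mem_nhds hp)
      exact (ContDiffAt.comp p h3 hι.contDiffAt).snd
  have hG2 : ∀ p γ, ‖p‖ < r → ‖γ‖ < r → FK B hB (p, γ) = 0 → γ = G p := by
    intro p γ hp hγ h
    have h1 : (p, γ) ∈ e.source := hrs (by
      rw [mem_ball_zero_iff]; exact max_lt hp hγ)
    have h2 := e.left_inv h1
    rw [he] at h2
    have h3 : Θ (p, γ) = ι p := by simp [hΘ, h, ι]
    rw [h3] at h2
    exact (congrArg Prod.snd h2).symm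
  obtain ⟨Φ, hΦ, hΦe⟩ := globalize (f := fun p => evK 1 (G p)) (a := (0 : ℝ × ℝ)) (by
    filter_upwards [hG1] with p hp
    exact (evK 1).contDiff.contDiffAt.comp p hp.2.1)
  obtain ⟨r', hr', hb⟩ := Metric.eventually_nhds_iff_ball.1 (hG1.and hΦe)
  refine ⟨Φ, hΦ, min r r', lt_min hr hr', ?_⟩
  intro y hy τ hτ
  have hin : ∀ t : ℝ, |t| < min r r' → ((t, y) : ℝ × ℝ) ∈ Metric.ball 0 r' ∧ ‖((t, y) : ℝ × ℝ)‖ < r := by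
    intro t ht
    have : ‖((t, y) : ℝ × ℝ)‖ < min r r' := max_lt ht hy
    exact ⟨by rw [mem_ball_zero_iff]; exact this.trans_le (min_le_right _ _),
      this.trans_le (min_le_left _ _)⟩
  obtain ⟨⟨hFz, -, hGn⟩, hΦv⟩ := hb _ (hin τ hτ).1
  set γ := G (τ, y) with hγ
  have hFz' := (FK_zero_iff B hB τ y γ).1 hFz
  have key : ∀ σ ∈ Icc (0 : ℝ) 1, exK γ σ = Φ (σ * τ, y) := by
    intro σ hσ
    have hσmul : ∀ s : KI, σ * (s : ℝ) ∈ Icc (0 : ℝ) 1 := fun s =>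
      ⟨mul_nonneg hσ.1 s.2.1, mul_le_one₀ hσ.2 s.2.1 s.2.2⟩
    let γ' : CK := CK.mk (fun s => exK γ (σ * s)) ((exK_cont γ).comp (by fun_prop))
    have hγ'n : ‖γ'‖ ≤ ‖γ‖ := (CK.norm_le (norm_nonneg _)).2 fun t => γ.norm_coe_le_norm _
    have hστ : |σ * τ| < min r r' := by
      rw [abs_mul, abs_of_nonneg hσ.1]
      exact (mul_le_of_le_one_left (abs_nonneg _) hσ.2).trans_lt hτ
    have hex : ∀ s ∈ Icc (0 : ℝ) 1, exK γ' s = exK γ (σ * s) := fun s hs => exK_of γ' ⟨s, hs⟩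
    have h1 : FK B hB ((σ * τ, y), γ') = 0 := by
      rw [FK_zero_iff]
      intro s hs
      rw [hex s hs, hFz' _ (hσmul ⟨s, hs⟩)]
      have h2 : ∫ t in (0 : ℝ)..s, B (σ * τ * t, exK γ' t) =
          ∫ t in (0 : ℝ)..s, (fun x => B (τ * x, exK γ x)) (σ * t) := by
        apply intervalIntegral.integral_congr
        intro t ht
        rw [uIcc_of_le hs.1] at ht
        show B (σ * τ * t, exK γ' t) = B (τ * (σ * t), exK γ (σ * t))
        rw [hex t ⟨ht.1, ht.2.trans hs.2⟩]; ring_nf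
      rw [h2]
      have h3 := intervalIntegral.mul_integral_comp_mul_left (a := (0 : ℝ)) (b := s)
        (f := fun x => B (τ * x, exK γ x)) (c := σ)
      rw [mul_zero] at h3
      show _ = y + σ * τ * _
      rw [← h3]; ring
    have h4 := hG2 (σ * τ, y) γ' (hin _ hστ).2 (hγ'n.trans_lt hGn) h1
    have h5 : Φ (σ * τ, y) = evK 1 (G (σ * τ, y)) := (hb _ (hin _ hστ).1).2
    rw [h5, ← h4]
    show _ = exK γ (σ * (1 : ℝ))
    rw [mul_one]
  have h1 := hFz' 1 (by simp)
  rw [key 1 (by simp), one_mul] at h1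
  rw [h1]
  congr 1
  have h3 := intervalIntegral.mul_integral_comp_mul_left (a := (0 : ℝ)) (b := 1)
        (f := fun x => B (x, Φ (x, y))) (c := τ)
  rw [mul_zero, mul_one] at h3
  rw [← h3]
  congr 1
  apply intervalIntegral.integral_congr
  intro t ht
  rw [uIcc_of_le zero_le_one] at ht
  show B (τ * t, exK γ t) = B (τ * t, Φ (τ * t, y))
  rw [key t ht, mul_comm τ t]

lemma flow (B : ℝ × ℝ → ℝ) (hB : ContDiff ℝ ∞ B) :
    ∃ I : ℝ × ℝ → ℝ, ContDiff ℝ ∞ I ∧ (∀ᶠ y in 𝓝 (0 : ℝ), I (0, y) = y) ∧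
      ∀ᶠ p in 𝓝 (0 : ℝ × ℝ), Dx I p + B p * Dy I p = 0 := by
  obtain ⟨Φ, hΦ, r, hr, hΦe⟩ := flow0 B hB
  have hΦ0 : ∀ y, |y| < r → Φ (0, y) = y := fun y hy => by
    simpa using hΦe y hy 0 (by simpa using hr)
  have hΦt : ∀ y, |y| < r → ∀ τ, |τ| < r → Dx Φ (τ, y) = B (τ, Φ (τ, y)) := by
    intro y hy τ hτ
    have hc : Continuous (fun t => B (t, Φ (t, y))) :=
      hB.continuous.comp (continuous_id.prodMk (hΦ.continuous.comp (by fun_prop)))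
    have h1 : HasDerivAt (fun τ => y + ∫ t in (0 : ℝ)..τ, B (t, Φ (t, y))) (B (τ, Φ (τ, y))) τ :=
      (intervalIntegral.integral_hasDerivAt_right (hc.intervalIntegrable _ _)
        (hc.stronglyMeasurableAtFilter _ _) hc.continuousAt).const_add y
    have h2 : (fun s => Φ (s, y)) =ᶠ[𝓝 τ] (fun τ => y + ∫ t in (0 : ℝ)..τ, B (t, Φ (t, y))) := by
      have : ∀ᶠ s in 𝓝 τ, |s| < r := (continuous_abs.tendsto τ).eventually (gt_mem_nhds hτ)
      filter_upwards [this] with s hs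
      exact hΦe y hy s hs
    exact (hasDx hΦ τ y).unique (h1.congr_of_eventuallyEq h2)
  have hH : ContDiff ℝ ∞ (fun p : ℝ × ℝ => (p.1, Φ p)) := contDiff_fst.prodMk hΦ
  have hy0 : Dy Φ 0 = 1 := by
    have h1 := hasDy hΦ 0 0
    have h2 : (fun s => Φ (0, s)) =ᶠ[𝓝 0] fun s => s := by
      have : ∀ᶠ s in 𝓝 (0 : ℝ), |s| < r := (continuous_abs.tendsto 0).eventually
        (gt_mem_nhds (by simpa using hr))
      filter_upwards [this] with s hs
      exact hΦ0 s hs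
    exact h1.unique ((hasDerivAt_id (0 : ℝ)).congr_of_eventuallyEq h2)
  obtain ⟨f', hf'⟩ := equiv_of_det 1 0 (Dx Φ 0) (Dy Φ 0) (by simp [hy0])
  have hd : HasFDerivAt (fun p : ℝ × ℝ => (p.1, Φ p)) (f' : ℝ × ℝ →L[ℝ] ℝ × ℝ) 0 := by
    rw [hf']
    have := (hasFDerivAt_fst (𝕜 := ℝ) (p := (0 : ℝ × ℝ))).prodMk (hasF hΦ 0)
    convert! this using 2
    ext <;> simp
  have hH0 : (fun p : ℝ × ℝ => (p.1, Φ p)) 0 = 0 := by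
    have := hΦ0 0 (by simpa using hr)
    exact Prod.ext rfl this
  obtain ⟨g, hg, g0, hgh, hhg⟩ := glob_inv hH hH0 f' hd
  have hgc : Tendsto g (𝓝 0) (𝓝 0) := by
    have := hg.continuous.tendsto 0
    rwa [g0] at this
  have hball : ∀ᶠ q in 𝓝 (0 : ℝ × ℝ), |q.1| < r ∧ |q.2| < r := by
    filter_upwards [Metric.ball_mem_nhds (0 : ℝ × ℝ) hr] with q hq
    rw [mem_ball_zero_iff] at hq
    exact ⟨(norm_fst_le q).trans_lt hq, (norm_snd_le q).trans_lt hq⟩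
  refine ⟨fun p => (g p).2, hg.snd, ?_, ?_⟩
  · have hc : Tendsto (fun y : ℝ => ((0 : ℝ), y)) (𝓝 0) (𝓝 0) :=
      (Continuous.prodMk_right (0 : ℝ)).tendsto 0
    filter_upwards [hc.eventually (hgh.and hball)] with y hy
    have h1 : g (0, Φ (0, y)) = (0, y) := hy.1
    rw [hΦ0 y hy.2.2] at h1
    show (g (0, y)).2 = y
    rw [h1]
  · have hq : ∀ᶠ q in 𝓝 (0 : ℝ × ℝ), Dx (fun p => (g p).2) (q.1, Φ q) +
        B (q.1, Φ q) * Dy (fun p => (g p).2) (q.1, Φ q) = 0 := by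
      filter_upwards [hgh.eventually_nhds, hball] with q h1 h2
      have h3 : HasFDerivAt (fun q => (g (q.1, Φ q)).2) (ContinuousLinearMap.snd ℝ ℝ ℝ) q :=
        hasFDerivAt_snd.congr_of_eventuallyEq (h1.mono fun z hz => congrArg Prod.snd hz)
      have h4' : HasFDerivAt (fun q => (g (q.1, Φ q)).2) _ q := HasFDerivAt.comp (g := fun p => (g p).2)
        (f := fun q : ℝ × ℝ => (q.1, Φ q)) q (hasF hg.snd (q.1, Φ q))
        ((hasFDerivAt_fst (𝕜 := ℝ) (p := q)).prodMk (hasF hΦ q))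
      have h4 := h4'.unique h3
      have h5 := congrArg (fun L => L (1, 0)) h4
      simp at h5
      rw [← hΦt q.2 h2.2 q.1 h2.1]
      exact h5
    filter_upwards [hgc.eventually hq, hhg] with p h1 h2
    have h3 : ((g p).1, Φ (g p)) = p := h2
    rw [h3] at h1
    exact h1

end Cib

namespace Cib
open Topology ContDiff

/-- weight -/
def W (k : ℤ × ℤ) : ℝ := (1 + |(k.1 : ℝ)|) * (1 + |(k.2 : ℝ)|)

lemma one_le_W (k : ℤ × ℤ) : 1 ≤ W k := by
  unfold W; nlinarith [abs_nonneg (k.1 : ℝ), abs_nonneg (k.2 : ℝ)]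

lemma W_pos (k : ℤ × ℤ) : 0 < W k := lt_of_lt_of_le one_pos (one_le_W k)

lemma k1_le_W (k : ℤ × ℤ) : 1 + |(k.1 : ℝ)| ≤ W k := by
  unfold W; nlinarith [abs_nonneg (k.1 : ℝ), abs_nonneg (k.2 : ℝ)]

lemma k2_le_W (k : ℤ × ℤ) : 1 + |(k.2 : ℝ)| ≤ W k := by
  unfold W; nlinarith [abs_nonneg (k.1 : ℝ), abs_nonneg (k.2 : ℝ)]

lemma summable_one : Summable (fun k : ℤ => ((1 + |(k : ℝ)|) ^ 2)⁻¹) := by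
  have h : Summable (fun k : ℤ => 1 / (k : ℝ) ^ 2) :=
    Real.summable_one_div_int_pow.mpr (by norm_num)
  refine Summable.of_norm_bounded_eventually (h) ?_
  have : ∀ᶠ k : ℤ in cofinite, k ≠ 0 := (Set.finite_singleton (0 : ℤ)).compl_mem_cofinite
  filter_upwards [this] with k hk
  have hk' : 0 < |(k : ℝ)| := abs_pos.mpr (by exact_mod_cast hk)
  rw [Real.norm_of_nonneg (by positivity), one_div, ← sq_abs (k : ℝ)]
  gcongr; linarith

lemma summable_W : Summable (fun k : ℤ × ℤ => (W k ^ 2)⁻¹) := by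
  have := summable_one.mul_of_nonneg summable_one (fun _ => by positivity) (fun _ => by positivity)
  refine this.congr fun k => ?_
  simp only [W]; rw [mul_pow, mul_inv]

/-- rapid decay -/
def RD (a : ℤ × ℤ → ℂ) : Prop := ∀ N : ℕ, ∃ C : ℝ, ∀ k, W k ^ N * ‖a k‖ ≤ C

lemma RD.mono {a b : ℤ × ℤ → ℂ} (ha : RD a) (C : ℝ) (M : ℕ)
    (h : ∀ k, ‖b k‖ ≤ C * W k ^ M * ‖a k‖) : RD b := by
  intro N
  obtain ⟨K, hK⟩ := ha (N + M)
  refine ⟨|C| * K, fun k => ?_⟩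
  have hw := W_pos k
  calc W k ^ N * ‖b k‖ ≤ W k ^ N * (C * W k ^ M * ‖a k‖) := by gcongr; exact h k
    _ = C * (W k ^ (N + M) * ‖a k‖) := by rw [pow_add]; ring
    _ ≤ |C| * (W k ^ (N + M) * ‖a k‖) := by gcongr; exact le_abs_self C
    _ ≤ |C| * K := by gcongr; exact hK k

lemma RD.bound {a : ℤ × ℤ → ℂ} (ha : RD a) : ∃ C, 0 ≤ C ∧ ∀ k, ‖a k‖ ≤ C * (W k ^ 2)⁻¹ := by
  obtain ⟨C, hC⟩ := ha 2
  have h0 := hC 0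
  have hw := W_pos
  refine ⟨C, le_trans (by have := hw 0; positivity) h0, fun k => ?_⟩
  rw [← div_eq_mul_inv, le_div_iff₀ (by have := hw k; positivity), mul_comm]
  exact hC k

lemma RD.summable {a : ℤ × ℤ → ℂ} (ha : RD a) : Summable (fun k => ‖a k‖) := by
  obtain ⟨C, _, h⟩ := ha.bound
  exact Summable.of_nonneg_of_le (fun _ => norm_nonneg _) h (summable_W.mul_left C)

/-- exponential -/
def ee (k : ℤ) (t : ℝ) : ℂ := Complex.exp (2 * Real.pi * Complex.I * k * t)

lemma norm_ee (k : ℤ) (t : ℝ) : ‖ee k t‖ = 1 := by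
  have : (2 * Real.pi * Complex.I * k * t : ℂ) = ((2 * Real.pi * k * t : ℝ) : ℂ) * Complex.I := by
    push_cast; ring
  rw [ee, this, Complex.norm_exp_ofReal_mul_I]

lemma hasD_ee (k : ℤ) (t : ℝ) : HasDerivAt (ee k) (2 * Real.pi * Complex.I * k * ee k t) t := by
  have h : HasDerivAt (fun t : ℝ => (2 * Real.pi * Complex.I * k * t : ℂ))
      (2 * Real.pi * Complex.I * k) t := by
    simpa using (Complex.ofRealCLM.hasDerivAt (x := t)).const_mul (2 * Real.pi * Complex.I * k : ℂ)
  have := h.cexp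
  rw [mul_comm]
  exact this

lemma ee_add (k l : ℤ) (t : ℝ) : ee (k + l) t = ee k t * ee l t := by
  rw [ee, ee, ee, ← Complex.exp_add]; congr 1; push_cast; ring

@[simp] lemma ee_zero (t : ℝ) : ee 0 t = 1 := by simp [ee]
@[simp] lemma ee_at_zero (k : ℤ) : ee k 0 = 1 := by simp [ee]

lemma ee_per (k : ℤ) (t : ℝ) : ee k (t + 1) = ee k t := by
  have : (2 * Real.pi * Complex.I * k * (t + 1 : ℝ) : ℂ) =
    2 * Real.pi * Complex.I * k * t + k * (2 * Real.pi * Complex.I) := by push_cast; ring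
  rw [ee, ee, this, Complex.exp_add, Complex.exp_int_mul_two_pi_mul_I, mul_one]

lemma smooth_ee (k : ℤ) : ContDiff ℝ ∞ (ee k) := by
  unfold ee
  exact (contDiff_const.mul Complex.ofRealCLM.contDiff).cexp

lemma cont_ee (k : ℤ) : Continuous (ee k) := (smooth_ee k).continuous

/-- general series -/
def Ser (D : ℕ → ℝ → ℂ) (s : ℤ → ℝ) (a : ℤ × ℤ → ℂ) (j : ℕ) (p : ℝ × ℝ) : ℂ :=
  ∑' k : ℤ × ℤ, a k * D j (s k.1 * p.1) * ee k.2 p.2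

section ser
variable {D : ℕ → ℝ → ℂ} {s : ℤ → ℝ} 

lemma RD.s_mul {a : ℤ × ℤ → ℂ} (ha : RD a) (hs : ∃ C : ℝ, ∃ M : ℕ, ∀ k, |s k| ≤ C * (1 + |(k : ℝ)|) ^ M) :
    RD (fun k => s k.1 * a k) := by
  obtain ⟨C, M, hs⟩ := hs
  have hC : 0 ≤ C := by
    have := (abs_nonneg _).trans (hs 0); simpa using this
  refine ha.mono C M fun k => ?_
  rw [norm_mul, Complex.norm_real, Real.norm_eq_abs]
  gcongr
  refine (hs k.1).trans ?_
  gcongr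
  exact k1_le_W k

lemma RD.l_mul {a : ℤ × ℤ → ℂ} (ha : RD a) (c : ℂ) : RD (fun k => c * k.2 * a k) := by
  refine ha.mono ‖c‖ 1 fun k => ?_
  rw [norm_mul, norm_mul]
  gcongr
  have := k2_le_W k
  simp; linarith

lemma RD.k_mul {a : ℤ × ℤ → ℂ} (ha : RD a) (c : ℂ) : RD (fun k => c * k.1 * a k) := by
  refine ha.mono ‖c‖ 1 fun k => ?_
  rw [norm_mul, norm_mul]
  gcongr
  have := k1_le_W k
  simp; linarith

lemma Ser_term_summable (hb : ∀ j, ∃ C, ∀ t, ‖D j t‖ ≤ C) {a : ℤ × ℤ → ℂ} (ha : RD a) (j : ℕ)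
    (p : ℝ × ℝ) : Summable (fun k : ℤ × ℤ => a k * D j (s k.1 * p.1) * ee k.2 p.2) := by
  obtain ⟨C, hC⟩ := hb j
  refine Summable.of_norm_bounded (ha.summable.mul_right C) fun k => ?_
  rw [norm_mul, norm_mul, norm_ee, mul_one]
  gcongr; exact hC _

lemma Ser_hasF (hb : ∀ j, ∃ C, ∀ t, ‖D j t‖ ≤ C) (hD : ∀ j t, HasDerivAt (D j) (D (j+1) t) t)
    (hs : ∃ C : ℝ, ∃ M : ℕ, ∀ k, |s k| ≤ C * (1 + |(k : ℝ)|) ^ M)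
    {a : ℤ × ℤ → ℂ} (ha : RD a) (j : ℕ) (p : ℝ × ℝ) :
    HasFDerivAt (Ser D s a j) (Lc (Ser D s (fun k => s k.1 * a k) (j+1) p)
      (Ser D s (fun k => 2 * Real.pi * Complex.I * k.2 * a k) j p)) p := by
  have h1 := ha.s_mul hs
  have h2 := ha.l_mul (2 * Real.pi * Complex.I)
  obtain ⟨C1, hC1⟩ := hb (j+1)
  obtain ⟨C0, hC0⟩ := hb j
  let t1 := fun (k : ℤ × ℤ) (p : ℝ × ℝ) => (s k.1 * a k) * D (j+1) (s k.1 * p.1) * ee k.2 p.2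
  let t2 := fun (k : ℤ × ℤ) (p : ℝ × ℝ) =>
    (2 * Real.pi * Complex.I * k.2 * a k) * D j (s k.1 * p.1) * ee k.2 p.2
  have n1 : ∀ k p, ‖t1 k p‖ ≤ ‖(s k.1 * a k : ℂ)‖ * C1 := by
    intro k p
    simp only [t1]
    rw [norm_mul, norm_mul _ (D _ _), norm_ee, mul_one]
    gcongr; exact hC1 _
  have n2 : ∀ k p, ‖t2 k p‖ ≤ ‖(2 * Real.pi * Complex.I * k.2 * a k : ℂ)‖ * C0 := by
    intro k p
    simp only [t2]
    rw [norm_mul, norm_mul _ (D _ _), norm_ee, mul_one]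
    gcongr; exact hC0 _
  have s1 : Summable (fun k => t1 k p) := Summable.of_norm_bounded (h1.summable.mul_right C1) fun k => n1 k p
  have s2 : Summable (fun k => t2 k p) := Summable.of_norm_bounded (h2.summable.mul_right C0) fun k => n2 k p
  have key := hasFDerivAt_tsum (𝕜 := ℝ) (x₀ := p)
    (f := fun (k : ℤ × ℤ) (p : ℝ × ℝ) => a k * D j (s k.1 * p.1) * ee k.2 p.2)
    (f' := fun k p => Lc (t1 k p) (t2 k p))
    (u := fun k => ‖(s k.1 * a k : ℂ)‖ * C1 + ‖(2 * Real.pi * Complex.I * k.2 * a k : ℂ)‖ * C0)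
    ((h1.summable.mul_right C1).add (h2.summable.mul_right C0)) ?_ ?_ ?_ p
  · convert! key using 1
    have e1 : ∀ k, Lc (t1 k p) (t2 k p) =
      (ContinuousLinearMap.smulRightL ℝ (ℝ×ℝ) ℂ (ContinuousLinearMap.fst ℝ ℝ ℝ)) (t1 k p) +
      (ContinuousLinearMap.smulRightL ℝ (ℝ×ℝ) ℂ (ContinuousLinearMap.snd ℝ ℝ ℝ)) (t2 k p) := by
      intro k; rfl
    simp_rw [e1]
    rw [Summable.tsum_add (ContinuousLinearMap.summable _ s1) (ContinuousLinearMap.summable _ s2),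
      ← ContinuousLinearMap.map_tsum _ s1, ← ContinuousLinearMap.map_tsum _ s2]
    rfl
  · intro k q
    have d1 : HasFDerivAt (fun q : ℝ × ℝ => D j (s k.1 * q.1))
        (Lc ((s k.1 : ℂ) * D (j+1) (s k.1 * q.1)) 0) q := by
      have hl : HasFDerivAt (fun q : ℝ × ℝ => s k.1 * q.1)
        ((s k.1) • ContinuousLinearMap.fst ℝ ℝ ℝ) q := hasFDerivAt_fst.const_mul _
      have := (hD j (s k.1 * q.1)).hasFDerivAt.comp q hl
      refine this.congr_fderiv ?_
      ext <;> simp 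
    have d2 : HasFDerivAt (fun q : ℝ × ℝ => ee k.2 q.2)
        (Lc 0 (2 * Real.pi * Complex.I * k.2 * ee k.2 q.2)) q := by
      have := (hasD_ee k.2 q.2).hasFDerivAt.comp q (hasFDerivAt_snd (𝕜 := ℝ) (E := ℝ) (F := ℝ) (p := q))
      refine this.congr_fderiv ?_
      ext <;> simp
    have := (d1.const_mul (a k)).mul d2
    refine this.congr_fderiv ?_
    ext <;> simp [t1, t2] <;> ring
  · intro k q
    have h0 : 0 ≤ ‖(s k.1 * a k : ℂ)‖ * C1 := (norm_nonneg _).trans (n1 k q)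
    have h0' := (norm_nonneg _).trans (n2 k q)
    refine ContinuousLinearMap.opNorm_le_bound _ (add_nonneg h0 h0') fun v => ?_
    rw [Lc_apply]
    refine (norm_add_le _ _).trans ?_
    rw [norm_smul, norm_smul, add_mul, mul_comm _ ‖t1 k q‖, mul_comm _ ‖t2 k q‖]
    gcongr
    · exact n1 k q
    · exact norm_fst_le v
    · exact n2 k q
    · exact norm_snd_le v
  · exact Ser_term_summable hb ha j p

lemma Ser_smooth (hb : ∀ j, ∃ C, ∀ t, ‖D j t‖ ≤ C) (hD : ∀ j t, HasDerivAt (D j) (D (j+1) t) t)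
    (hs : ∃ C : ℝ, ∃ M : ℕ, ∀ k, |s k| ≤ C * (1 + |(k : ℝ)|) ^ M)
    {a : ℤ × ℤ → ℂ} (ha : RD a) (j : ℕ) : ContDiff ℝ ∞ (Ser D s a j) := by
  refine smooth_of_closed (fun f => ∃ a j, RD a ∧ f = Ser D s a j) ?_ ⟨a, j, ha, rfl⟩
  rintro f ⟨a, j, ha, rfl⟩
  exact ⟨_, _, ⟨_, _, ha.s_mul hs, rfl⟩, ⟨_, _, ha.l_mul _, rfl⟩, Ser_hasF hb hD hs ha j⟩
end ser

end Cib

namespace Cib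
open Topology ContDiff

/-- Fourier series -/
def FS (a : ℤ × ℤ → ℂ) (p : ℝ × ℝ) : ℂ := ∑' k : ℤ × ℤ, a k * ee k.1 p.1 * ee k.2 p.2

/-- derivative family for exponentials -/
def De (j : ℕ) (t : ℝ) : ℂ := Complex.I ^ j * Complex.exp (t * Complex.I)

lemma De_bdd (j : ℕ) : ∃ C, ∀ t, ‖De j t‖ ≤ C :=
  ⟨1, fun t => by rw [De, norm_mul, Complex.norm_exp_ofReal_mul_I]; simp⟩

lemma De_hasD (j : ℕ) (t : ℝ) : HasDerivAt (De j) (De (j+1) t) t := by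
  have h : HasDerivAt (fun t : ℝ => (t * Complex.I : ℂ)) (Complex.I) t := by
    simpa using (Complex.ofRealCLM.hasDerivAt (x := t)).mul_const Complex.I
  have := (h.cexp).const_mul (Complex.I ^ j)
  refine this.congr_deriv ?_
  rw [De, pow_succ]; ring

lemma sk_bdd : ∃ C : ℝ, ∃ M : ℕ, ∀ k : ℤ, |2 * Real.pi * k| ≤ C * (1 + |(k : ℝ)|) ^ M := by
  refine ⟨2 * Real.pi, 1, fun k => ?_⟩
  rw [abs_mul, abs_of_pos (by positivity)]
  gcongr; rw [pow_one]; linarith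

lemma De_ee (j : ℕ) (k : ℤ) (x : ℝ) : De j (2 * Real.pi * k * x) = Complex.I ^ j * ee k x := by
  rw [De, ee]; congr 2; push_cast; ring

lemma FS_eq (a) : FS a = Ser De (fun k => 2 * Real.pi * k) a 0 := by
  ext p; simp only [FS, Ser, De_ee]; simp

lemma FS_smooth {a} (ha : RD a) : ContDiff ℝ ∞ (FS a) := by
  rw [FS_eq]; exact Ser_smooth De_bdd De_hasD sk_bdd ha 0

lemma FS_hasF {a} (ha : RD a) (p : ℝ × ℝ) :
    HasFDerivAt (FS a) (Lc (FS (fun k => 2 * Real.pi * Complex.I * k.1 * a k) p)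
      (FS (fun k => 2 * Real.pi * Complex.I * k.2 * a k) p)) p := by
  have := Ser_hasF De_bdd De_hasD sk_bdd ha 0 p
  rw [← FS_eq, ← FS_eq] at this
  convert! this using 2
  simp only [FS, Ser, De_ee]
  congr 1; ext k; push_cast; ring

lemma FS_Dx {a} (ha : RD a) (p) : Dx (FS a) p = FS (fun k => 2 * Real.pi * Complex.I * k.1 * a k) p :=
  Dx_of (FS_hasF ha p)

lemma FS_Dy {a} (ha : RD a) (p) : Dy (FS a) p = FS (fun k => 2 * Real.pi * Complex.I * k.2 * a k) p :=
  Dy_of (FS_hasF ha p)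

lemma FS_summable {a : ℤ × ℤ → ℂ} (ha : Summable fun k => ‖a k‖) (p : ℝ × ℝ) :
    Summable (fun k : ℤ × ℤ => a k * ee k.1 p.1 * ee k.2 p.2) := by
  refine Summable.of_norm_bounded ha fun k => ?_
  rw [norm_mul, norm_mul, norm_ee, norm_ee, mul_one, mul_one]

/-- one-dimensional coefficient -/
def cf (φ : ℝ → ℂ) (k : ℤ) : ℂ := ∫ x in (0:ℝ)..1, φ x * ee (-k) x

lemma cf_le {φ : ℝ → ℂ} {C : ℝ} (h : ∀ x ∈ Icc (0:ℝ) 1, ‖φ x‖ ≤ C) (k : ℤ) : ‖cf φ k‖ ≤ C := by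
  have := intervalIntegral.norm_integral_le_of_norm_le_const (a := 0) (b := 1) (C := C)
    (f := fun x => φ x * ee (-k) x) ?_
  · rw [cf]; simpa using this
  · intro x hx
    rw [norm_mul, norm_ee, mul_one]
    rw [uIoc_of_le zero_le_one] at hx
    exact h x ⟨hx.1.le, hx.2⟩

lemma cf_deriv {φ φ' : ℝ → ℂ} (h : ∀ x, HasDerivAt φ (φ' x) x) (hc : Continuous φ')
    (hp : φ 1 = φ 0) (k : ℤ) : cf φ' k = 2 * Real.pi * Complex.I * k * cf φ k := by
  have := intervalIntegral.integral_mul_deriv_eq_deriv_mul (a := 0) (b := 1) (u := ee (-k)) (v := φ)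
    (u' := fun t => 2 * Real.pi * Complex.I * (-k : ℤ) * ee (-k) t) (v' := φ')
    (fun x _ => hasD_ee _ x) (fun x _ => h x)
    ((continuous_const.mul (cont_ee _)).intervalIntegrable _ _) (hc.intervalIntegrable _ _)
  have e1 : ee (-k) 1 = 1 := by have := ee_per (-k) 0; simpa using this
  rw [e1, hp, ee_at_zero, sub_self, zero_sub] at this
  simp only [cf]
  simp_rw [mul_comm (φ' _)]
  rw [this, ← intervalIntegral.integral_neg, ← intervalIntegral.integral_const_mul]
  congr 1; ext x; push_cast; ring

lemma cf_inv {φ : ℝ → ℂ} (hc : Continuous φ) (hp : ∀ x, φ (x + 1) = φ x) (hs : Summable (cf φ))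
    (x : ℝ) : HasSum (fun k => cf φ k * ee k x) (φ x) := by
  haveI : Fact ((0:ℝ) < 1) := ⟨one_pos⟩
  have hper : Function.Periodic φ 1 := hp
  let g : C(AddCircle (1:ℝ), ℂ) := ⟨hper.lift, by
    exact continuous_coinduced_dom.mpr hc⟩
  have hg : ∀ x : ℝ, g x = φ x := fun x => hper.lift_coe x
  have hF : ∀ n (x : ℝ), (fourier n (x : AddCircle (1:ℝ)) : ℂ) = ee n x := by
    intro n x; rw [fourier_coe_apply, ee]; simp
  have hco : ∀ k, fourierCoeff g k = cf φ k := by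
    intro k
    rw [fourierCoeff_eq_intervalIntegral g k 0, cf]
    simp only [zero_add, div_one, one_smul, smul_eq_mul, hF, hg]
    congr 1; ext x; ring
  have := has_pointwise_sum_fourier_series_of_summable (f := g) (by
    have : fourierCoeff g = cf φ := funext hco
    rw [this]; exact hs) (x : AddCircle (1:ℝ))
  simp only [hco, hF, hg, smul_eq_mul] at this
  exact this

/-- periodic smooth -/
structure Per (g : ℝ × ℝ → ℂ) : Prop where
  smooth : ContDiff ℝ ∞ g
  px : ∀ x y, g (x + 1, y) = g (x, y)
  py : ∀ x y, g (x, y + 1) = g (x, y)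

lemma Per.dx {g} (hg : Per g) : Per (Dx g) := by
  refine ⟨smooth_Dx hg.smooth, fun x y => ?_, fun x y => ?_⟩
  · have h1 := (hasDx hg.smooth (x+1) y).comp_add_const x 1
    simp only [hg.px] at h1
    exact h1.unique (hasDx hg.smooth x y)
  · have h1 := hasDx hg.smooth x (y+1)
    simp only [hg.py] at h1
    exact h1.unique (hasDx hg.smooth x y)

lemma Per.dy {g} (hg : Per g) : Per (Dy g) := by
  refine ⟨smooth_Dy hg.smooth, fun x y => ?_, fun x y => ?_⟩
  · have h1 := hasDy hg.smooth (x+1) y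
    simp only [hg.px] at h1
    exact h1.unique (hasDy hg.smooth x y)
  · have h1 := (hasDy hg.smooth x (y+1)).comp_add_const y 1
    simp only [hg.py] at h1
    exact h1.unique (hasDy hg.smooth x y)

/-- 2D coefficient -/
def coef (g : ℝ × ℝ → ℂ) (k : ℤ × ℤ) : ℂ := cf (fun y => cf (fun x => g (x, y)) k.1) k.2

lemma coef_le {g : ℝ × ℝ → ℂ} {C : ℝ} (h : ∀ p ∈ Icc (0:ℝ) 1 ×ˢ Icc (0:ℝ) 1, ‖g p‖ ≤ C) (k) :
    ‖coef g k‖ ≤ C :=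
  cf_le (fun y hy => cf_le (fun x hx => h (x, y) ⟨hx, hy⟩) _) _

lemma cf_swap {g : ℝ × ℝ → ℂ} (hg : Continuous g) (k l : ℤ) :
    cf (fun y => cf (fun x => g (x, y)) k) l = cf (fun x => cf (fun y => g (x, y)) l) k := by
  simp only [cf]
  simp_rw [← intervalIntegral.integral_mul_const]
  rw [MeasureTheory.intervalIntegral_intervalIntegral_swap]
  · congr 1; ext x; congr 1; ext y; ring
  · have h1 := (cont_ee (-k))
    have h2 := (cont_ee (-l))
    refine MeasureTheory.IntegrableOn.mono_set (t := uIcc 0 1 ×ˢ uIcc 0 1) ?_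
      (Set.prod_mono uIoc_subset_uIcc uIoc_subset_uIcc)
    refine ContinuousOn.integrableOn_compact (isCompact_uIcc.prod isCompact_uIcc) ?_
    apply Continuous.continuousOn
    unfold Function.uncurry
    fun_prop

lemma coef_dx {g} (hg : Per g) (k) : coef (Dx g) k = 2 * Real.pi * Complex.I * k.1 * coef g k := by
  have : (fun y => cf (fun x => Dx g (x, y)) k.1) =
      fun y => 2 * Real.pi * Complex.I * k.1 * cf (fun x => g (x, y)) k.1 := by
    ext y
    refine cf_deriv (fun x => hasDx hg.smooth x y) ?_ ?_ _
    · have := (smooth_Dx hg.smooth).continuous; fun_prop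
    · simpa using hg.px 0 y
  rw [coef, this]
  simp only [coef, cf]
  rw [← intervalIntegral.integral_const_mul]
  congr 1; ext x; ring

lemma coef_dy {g} (hg : Per g) (k) : coef (Dy g) k = 2 * Real.pi * Complex.I * k.2 * coef g k := by
  have : (fun x => cf (fun y => Dy g (x, y)) k.2) =
      fun x => 2 * Real.pi * Complex.I * k.2 * cf (fun y => g (x, y)) k.2 := by
    ext x
    refine cf_deriv (fun y => hasDy hg.smooth x y) ?_ ?_ _
    · have := (smooth_Dy hg.smooth).continuous; fun_prop
    · simpa using hg.py x 0
  rw [coef, cf_swap (smooth_Dy hg.smooth).continuous, this, coef, cf_swap hg.smooth.continuous]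
  simp only [cf]
  rw [← intervalIntegral.integral_const_mul]
  congr 1; ext x; ring

lemma Per.bdd {g} (hg : Per g) : ∃ C, ∀ k, ‖coef g k‖ ≤ C := by
  obtain ⟨C, hC⟩ := (isCompact_Icc.prod isCompact_Icc).exists_bound_of_continuousOn
    (s := Icc (0:ℝ) 1 ×ˢ Icc (0:ℝ) 1) hg.smooth.continuous.continuousOn
  exact ⟨C, coef_le hC⟩

lemma two_pi_ge : (1:ℝ) ≤ 2 * Real.pi := by have := Real.pi_gt_three; linarith

lemma norm_tpk (k : ℤ) (z : ℂ) : ‖2 * Real.pi * Complex.I * k * z‖ = 2 * Real.pi * |(k:ℝ)| * ‖z‖ := by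
  simp [abs_of_pos Real.pi_pos]

lemma Per.step {g} (hg : Per g) (k) : W k * ‖coef g k‖ ≤
    ‖coef g k‖ + ‖coef (Dx g) k‖ + ‖coef (Dy g) k‖ + ‖coef (Dx (Dy g)) k‖ := by
  rw [coef_dx hg.dy, coef_dx hg, coef_dy hg, norm_tpk, norm_tpk, norm_tpk, norm_tpk, W]
  have h := two_pi_ge
  have a1 := abs_nonneg (k.1 : ℝ)
  have a2 := abs_nonneg (k.2 : ℝ)
  have hn := norm_nonneg (coef g k)
  have h1 : |(k.1:ℝ)| * ‖coef g k‖ ≤ 2 * Real.pi * |(k.1:ℝ)| * ‖coef g k‖ := by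
    gcongr; exact le_mul_of_one_le_left a1 h
  have h2 : |(k.2:ℝ)| * ‖coef g k‖ ≤ 2 * Real.pi * |(k.2:ℝ)| * ‖coef g k‖ := by
    gcongr; exact le_mul_of_one_le_left a2 h
  have h3 : |(k.1:ℝ)| * (|(k.2:ℝ)| * ‖coef g k‖) ≤
    2 * Real.pi * |(k.1:ℝ)| * (2 * Real.pi * |(k.2:ℝ)| * ‖coef g k‖) := by
    gcongr; exact le_mul_of_one_le_left a1 h
  nlinarith

lemma Per.rd {g} (hg : Per g) : RD (coef g) := by
  intro N
  induction N generalizing g with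
  | zero => obtain ⟨C, hC⟩ := hg.bdd; exact ⟨C, by simpa using hC⟩
  | succ n ih =>
    obtain ⟨C0, h0⟩ := ih hg
    obtain ⟨C1, h1⟩ := ih hg.dx
    obtain ⟨C2, h2⟩ := ih hg.dy
    obtain ⟨C3, h3⟩ := ih hg.dy.dx
    refine ⟨C0 + C1 + C2 + C3, fun k => ?_⟩
    have hw := W_pos k
    calc W k ^ (n+1) * ‖coef g k‖ = W k ^ n * (W k * ‖coef g k‖) := by ring
      _ ≤ W k ^ n * (‖coef g k‖ + ‖coef (Dx g) k‖ + ‖coef (Dy g) k‖ + ‖coef (Dx (Dy g)) k‖) := by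
        gcongr; exact hg.step k
      _ ≤ _ := by linarith [h0 k, h1 k, h2 k, h3 k]

/-- Fourier inversion -/
lemma Per.inv {g} (hg : Per g) : FS (coef g) = g := by
  ext p
  obtain ⟨x, y⟩ := p
  have hs := hg.rd.summable
  have hsx : ∀ k, Summable fun l => ‖coef g (k, l)‖ := fun k => hs.prod_factor k
  have hA : ∀ k y, HasSum (fun l => coef g (k, l) * ee l y) (cf (fun x => g (x, y)) k) := by
    intro k y
    refine cf_inv (φ := fun y => cf (fun x => g (x, y)) k) ?_ ?_ (hsx k).of_norm y
    · simp only [cf]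
      have h1 := cont_ee (-k)
      have h2 := hg.smooth.continuous
      exact intervalIntegral.continuous_parametric_intervalIntegral_of_continuous'
        (by fun_prop) _ _
    · intro y; simp only [hg.py]
  have hA' : ∀ k, ‖cf (fun x => g (x, y)) k‖ ≤ ∑' l, ‖coef g (k, l)‖ := by
    intro k
    rw [← (hA k y).tsum_eq]
    refine tsum_of_norm_bounded (hsx k).hasSum fun l => ?_
    rw [norm_mul, norm_ee, mul_one]
  have h2 := cf_inv (φ := fun x => g (x, y)) (by have := hg.smooth.continuous; fun_prop)
    (fun x => hg.px x y) (Summable.of_norm_bounded hs.prod hA') x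
  rw [FS, (FS_summable hs (x, y)).tsum_prod, ← h2.tsum_eq]
  congr 1; ext k
  rw [← ((hA k y).mul_right (ee k x)).tsum_eq]
  congr 1; ext l; ring

end Cib

namespace Cib
open Topology ContDiff

/-- periodization -/
lemma exists_psi : ∃ ψ : ℝ → ℝ, ContDiff ℝ ∞ ψ ∧ (∀ t, ψ (t + 1) = ψ t) ∧ ∀ᶠ t in 𝓝 0, ψ t = t := by
  have h1 : ∀ᶠ t in 𝓝 (0:ℝ), ContDiffAt ℝ ∞ Real.arcsin t := by
    have : Ioo (-1:ℝ) 1 ∈ 𝓝 (0:ℝ) := Ioo_mem_nhds (by norm_num) (by norm_num)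
    filter_upwards [this] with t ht
    exact Real.contDiffAt_arcsin (ne_of_gt ht.1) (ne_of_lt ht.2)
  obtain ⟨E, hE, hEe⟩ := globalize h1
  refine ⟨fun t => E (Real.sin (2 * Real.pi * t)) / (2 * Real.pi), ?_, ?_, ?_⟩
  · exact (hE.comp (Real.contDiff_sin.comp (contDiff_const.mul contDiff_id))).div_const _
  · intro t
    have : 2 * Real.pi * (t + 1) = 2 * Real.pi * t + 2 * Real.pi := by ring
    simp only [this, Real.sin_add_two_pi]
  · have hc : Tendsto (fun t : ℝ => Real.sin (2 * Real.pi * t)) (𝓝 0) (𝓝 0) := by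
      have : Continuous (fun t : ℝ => Real.sin (2 * Real.pi * t)) := by fun_prop
      simpa using this.tendsto 0
    have : Ioo (-(1/4):ℝ) (1/4) ∈ 𝓝 (0:ℝ) := Ioo_mem_nhds (by norm_num) (by norm_num)
    filter_upwards [hc.eventually hEe, this] with t ht hI
    rw [ht, Real.arcsin_sin]
    · field_simp
    · have := Real.pi_pos; nlinarith [hI.1]
    · have := Real.pi_pos; nlinarith [hI.2]

/-- chosen periodization -/
def psi : ℝ → ℝ := exists_psi.choose
lemma psi_smooth : ContDiff ℝ ∞ psi := exists_psi.choose_spec.1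
lemma psi_per (t) : psi (t + 1) = psi t := exists_psi.choose_spec.2.1 t
lemma psi_id : ∀ᶠ t in 𝓝 0, psi t = t := exists_psi.choose_spec.2.2
lemma psi_id2 : ∀ᶠ p in 𝓝 (0:ℝ×ℝ), psi p.1 = p.1 ∧ psi p.2 = p.2 :=
  (continuous_fst.tendsto (0:ℝ×ℝ) |>.eventually psi_id).and
    (continuous_snd.tendsto (0:ℝ×ℝ) |>.eventually psi_id)

/-- periodized and scaled function -/
def pz (ε : ℝ) (ν : ℝ × ℝ → ℂ) (p : ℝ × ℝ) : ℂ := ν (ε * psi p.1, ε * psi p.2)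

lemma pz_per {ν} (hν : ContDiff ℝ ∞ ν) (ε : ℝ) : Per (pz ε ν) := by
  have := psi_smooth
  refine ⟨?_, fun x y => ?_, fun x y => ?_⟩
  · unfold pz; fun_prop
  · simp only [pz, psi_per]
  · simp only [pz, psi_per]

/-- families vanishing at 0 -/
def Qf (H : ℝ × (ℝ × ℝ) → ℂ) : Prop := ContDiff ℝ ∞ H ∧ ∀ p, H (0, p) = 0

lemma Qf.small {H} (h : Qf H) {δ : ℝ} (hδ : 0 < δ) :
    ∀ᶠ ε in 𝓝 (0:ℝ), ∀ p ∈ Icc (0:ℝ) 1 ×ˢ Icc (0:ℝ) 1, ‖H (ε, p)‖ ≤ δ := by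
  refine (isCompact_Icc.prod isCompact_Icc).eventually_forall_of_forall_eventually fun p _ => ?_
  have hc : Tendsto (fun z => ‖H z‖) (𝓝 (0, p)) (𝓝 0) := by
    have := h.1.continuous.norm.tendsto (0, p)
    simpa [h.2 p] using this
  exact hc.eventually (ge_mem_nhds hδ)

lemma Qf.dir {H} (h : Qf H) (v : ℝ × ℝ) :
    Qf (fun z => fderiv ℝ (fun p => H (z.1, p)) z.2 v) := by
  refine ⟨?_, fun p => ?_⟩
  · have hu : ContDiff ℝ ∞ (Function.uncurry fun (z : ℝ × (ℝ × ℝ)) (p : ℝ × ℝ) => H (z.1, p)) := by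
      have := h.1
      unfold Function.uncurry; fun_prop
    exact (hu.fderiv (g := fun z : ℝ × (ℝ × ℝ) => z.2) contDiff_snd (by simp)).clm_apply contDiff_const
  · simp only [h.2]; simp

lemma Qf.dx {H} (h : Qf H) : Qf (fun z => Dx (fun p => H (z.1, p)) z.2) := h.dir (1, 0)
lemma Qf.dy {H} (h : Qf H) : Qf (fun z => Dy (fun p => H (z.1, p)) z.2) := h.dir (0, 1)

lemma coef_quant {g} (hg : Per g) {δ : ℝ}
    (h0 : ∀ p ∈ Icc (0:ℝ) 1 ×ˢ Icc (0:ℝ) 1, ‖g p‖ ≤ δ)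
    (h1 : ∀ p ∈ Icc (0:ℝ) 1 ×ˢ Icc (0:ℝ) 1, ‖Dx (Dx g) p‖ ≤ δ)
    (h2 : ∀ p ∈ Icc (0:ℝ) 1 ×ˢ Icc (0:ℝ) 1, ‖Dy (Dy g) p‖ ≤ δ)
    (h3 : ∀ p ∈ Icc (0:ℝ) 1 ×ˢ Icc (0:ℝ) 1, ‖Dx (Dx (Dy (Dy g))) p‖ ≤ δ) (k) :
    ‖coef g k‖ ≤ 16 * δ * (W k ^ 2)⁻¹ := by
  have c0 := coef_le h0 k
  have c1 := coef_le h1 k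
  have c2 := coef_le h2 k
  have c3 := coef_le h3 k
  rw [coef_dx hg.dx, coef_dx hg, norm_tpk, norm_tpk] at c1
  rw [coef_dy hg.dy, coef_dy hg, norm_tpk, norm_tpk] at c2
  rw [coef_dx hg.dy.dy.dx, coef_dx hg.dy.dy, coef_dy hg.dy, coef_dy hg, norm_tpk, norm_tpk, norm_tpk,
    norm_tpk] at c3
  have hW := W_pos k
  rw [← div_eq_mul_inv, le_div_iff₀ (by positivity)]
  have a1 := abs_nonneg (k.1 : ℝ)
  have a2 := abs_nonneg (k.2 : ℝ)
  have hn := norm_nonneg (coef g k)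
  have h := two_pi_ge
  unfold W
  set A := |(k.1 : ℝ)|
  set B := |(k.2 : ℝ)|
  set c := ‖coef g k‖
  have d1 : A * (A * c) ≤ 2 * Real.pi * A * (2 * Real.pi * A * c) := by
    gcongr <;> exact le_mul_of_one_le_left a1 h
  have d2 : B * (B * c) ≤ 2 * Real.pi * B * (2 * Real.pi * B * c) := by
    gcongr <;> exact le_mul_of_one_le_left a2 h
  have d3 : A * (A * (B * (B * c))) ≤
      2 * Real.pi * A * (2 * Real.pi * A * (2 * Real.pi * B * (2 * Real.pi * B * c))) := by
    gcongr <;> first | exact le_mul_of_one_le_left a1 h | exact le_mul_of_one_le_left a2 h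
  have e1 : (1 + A)^2 ≤ 2 * (1 + A^2) := by nlinarith [sq_nonneg (A - 1)]
  have e2 : (1 + B)^2 ≤ 2 * (1 + B^2) := by nlinarith [sq_nonneg (B - 1)]
  calc c * ((1 + A) * (1 + B))^2 = c * ((1 + A)^2 * (1+B)^2) := by ring
    _ ≤ c * ((2 * (1 + A^2)) * (2 * (1 + B^2))) := by gcongr
    _ = 4 * (c + A * (A * c) + B * (B * c) + A * (A * (B * (B * c)))) := by ring
    _ ≤ 16 * δ := by linarith

lemma pz_small {ν} (hν : ContDiff ℝ ∞ ν) (h0 : ν 0 = 0) {δ : ℝ} (hδ : 0 < δ) :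
    ∃ ε : ℝ, 0 < ε ∧ ∑' k, ‖coef (pz ε ν) k‖ ≤ δ := by
  have hQ : Qf (fun z => pz z.1 ν z.2) := by
    have := psi_smooth
    refine ⟨?_, fun p => ?_⟩
    · unfold pz; fun_prop
    · simp only [pz, zero_mul]; exact h0
  set S := ∑' k, (W k ^ 2)⁻¹
  have hS : 0 ≤ S := tsum_nonneg fun k => by have := W_pos k; positivity
  set δ' := δ / (16 * (S + 1))
  have hδ' : 0 < δ' := by positivity
  have hev := ((hQ.small hδ').and (hQ.dx.dx.small hδ')).and
    ((hQ.dy.dy.small hδ').and (hQ.dy.dy.dx.dx.small hδ'))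
  obtain ⟨ε, ⟨⟨e0, e1⟩, e2, e3⟩, hε⟩ :=
    ((hev.filter_mono nhdsWithin_le_nhds).and (self_mem_nhdsWithin (s := Ioi (0:ℝ)))).exists
  refine ⟨ε, hε, ?_⟩
  have hb := coef_quant (pz_per hν ε) e0 e1 e2 e3
  calc ∑' k, ‖coef (pz ε ν) k‖ ≤ ∑' k, 16 * δ' * (W k ^ 2)⁻¹ :=
        (pz_per hν ε).rd.summable.tsum_le_tsum hb (summable_W.mul_left _)
    _ = 16 * δ' * S := tsum_mul_left
    _ ≤ δ := by
      simp only [δ']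
      rw [show 16 * (δ / (16 * (S + 1))) * S = δ * (S / (S + 1)) by field_simp]
      have : S / (S + 1) ≤ 1 := (div_le_one (by linarith)).mpr (by linarith)
      nlinarith
end Cib

namespace Cib
open Topology ContDiff

lemma exists_cossqrt : ∃ C : ℝ → ℝ, ContDiff ℝ ∞ C ∧ ∀ s, C (s ^ 2) = Real.cos s := by
  let c : ℕ → ℝ := fun n => (-1) ^ n / ((2 * n).factorial : ℝ)
  have hc0 : ∀ n, c n ≠ 0 := fun n => by
    have : ((2 * n).factorial : ℝ) ≠ 0 := by exact_mod_cast Nat.factorial_ne_zero _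
    simp only [c]; positivity
  have hr : (FormalMultilinearSeries.ofScalars ℝ c).radius = ⊤ := by
    refine FormalMultilinearSeries.ofScalars_radius_eq_top_of_tendsto ℝ c
      (Eventually.of_forall hc0) ?_
    have hb : ∀ n : ℕ, ‖c n.succ‖ / ‖c n‖ ≤ 1 / ((n : ℝ) + 1) := by
      intro n
      have h1 : ((2 * n.succ).factorial : ℝ) = (2 * n + 2) * ((2 * n + 1) * (2*n).factorial) := by
        rw [show 2 * n.succ = 2 * n + 1 + 1 by omega, Nat.factorial_succ, Nat.factorial_succ]
        push_cast; ring
      have h2 : (0:ℝ) < (2 * n).factorial := by exact_mod_cast Nat.factorial_pos _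
      simp only [c, norm_div, norm_pow, norm_neg, norm_one, one_pow, h1]
      rw [Real.norm_of_nonneg (by positivity), Real.norm_of_nonneg h2.le]
      rw [div_div_div_eq, one_mul, mul_one, div_le_div_iff₀ (by positivity) (by positivity)]
      have : (0:ℝ) ≤ n := n.cast_nonneg
      nlinarith [mul_nonneg this h2.le, mul_nonneg this (mul_nonneg this h2.le)]
    exact squeeze_zero (fun n => by positivity) hb tendsto_one_div_add_atTop_nhds_zero_nat
  have hball := (FormalMultilinearSeries.ofScalars ℝ c).hasFPowerSeriesOnBall (by rw [hr]; simp)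
  refine ⟨(FormalMultilinearSeries.ofScalars ℝ c).sum, ?_, fun s => ?_⟩
  · rw [hr] at hball
    rw [contDiff_iff_contDiffAt]
    intro x
    exact (hball.analyticAt_of_mem (by simp)).contDiffAt
  · have := congrFun (FormalMultilinearSeries.ofScalarsSum_eq_tsum (E := ℝ) c) (s^2)
    rw [FormalMultilinearSeries.ofScalarsSum] at this
    rw [this, ← (Real.hasSum_cos s).tsum_eq]
    congr 1; ext n
    simp only [c, smul_eq_mul, pow_mul]; ring

lemma hasD_iter {f : ℝ → ℝ} (hf : ContDiff ℝ ∞ f) (n : ℕ) (t : ℝ) :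
    HasDerivAt (deriv^[n] f) (deriv^[n+1] f t) t := by
  rw [Function.iterate_succ_apply']
  exact ((hf.iterate_deriv n).differentiable (by simp) t).hasDerivAt

lemma bdd_of_pieces {f : ℝ → ℝ} (hc : Continuous f) {C1 C2 : ℝ} (h1 : ∀ t < -1, ‖f t‖ ≤ C1)
    (h2 : ∀ t > 1, ‖f t‖ ≤ C2) : ∃ C, ∀ t, ‖f t‖ ≤ C := by
  obtain ⟨C3, h3⟩ := isCompact_Icc.exists_bound_of_continuousOn (s := Icc (-1:ℝ) 1) hc.continuousOn
  refine ⟨max C1 (max C2 C3), fun t => ?_⟩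
  rcases lt_or_ge t (-1) with h | h
  · exact (h1 t h).trans (le_max_left _ _)
  · rcases lt_or_ge 1 t with h' | h'
    · exact (h2 t h').trans ((le_max_left _ _).trans (le_max_right _ _))
    · exact (h3 t ⟨h, h'⟩).trans ((le_max_right _ _).trans (le_max_right _ _))

lemma exists_cc : ∃ f : ℝ → ℝ, ContDiff ℝ ∞ f ∧ (∀ s, f (s ^ 2) = Real.cos s) ∧
    ∀ n, ∃ C, ∀ t, ‖deriv^[n] f t‖ ≤ C := by
  obtain ⟨c, hc, hcos⟩ := exists_cossqrt
  let f : ℝ → ℝ := fun r => Real.smoothTransition (2 * r + 2) * c r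
  have hf : ContDiff ℝ ∞ f := by
    refine ContDiff.mul (Real.smoothTransition.contDiff.comp ?_) hc
    fun_prop
  have hfc : ∀ s, f (s^2) = Real.cos s := by
    intro s
    simp only [f]
    rw [Real.smoothTransition.one_of_one_le (by nlinarith [sq_nonneg s]), one_mul, hcos]
  refine ⟨f, hf, hfc, ?_⟩
  have hneg : ∀ n, ∀ t < -1, deriv^[n] f t = 0 := by
    intro n
    induction n with
    | zero =>
      intro t ht
      simp only [Function.iterate_zero, id, f]
      rw [Real.smoothTransition.zero_of_nonpos (by linarith), zero_mul]
    | succ n ih =>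
      intro t ht
      rw [Function.iterate_succ_apply']
      have : deriv^[n] f =ᶠ[𝓝 t] fun _ => 0 := by
        filter_upwards [Iio_mem_nhds ht] with u hu using ih u hu
      rw [this.deriv_eq]; simp
  have d1 : ∀ s, deriv^[1] f (s^2) * (2 * s) = - Real.sin s := by
    intro s
    have h1 := (hasD_iter hf 0 (s^2)).comp s ((hasDerivAt_id s).pow 2)
    have h2 : HasDerivAt (deriv^[0] f ∘ (id ^ 2)) (- Real.sin s) s := by
      have := Real.hasDerivAt_cos s
      convert! this using 1
      ext u; simp [hfc]
    have := h1.unique h2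
    simpa using this
  have d2 : ∀ s, deriv^[2] f (s^2) * (2 * s) * (2 * s) + deriv^[1] f (s^2) * 2 = - Real.cos s := by
    intro s
    have h1 := ((hasD_iter hf 1 (s^2)).comp s ((hasDerivAt_id s).pow 2)).mul
      ((hasDerivAt_id s).const_mul 2)
    have h2 := (Real.hasDerivAt_sin s).neg
    have h3 := h1.unique (h2.congr_of_eventuallyEq (Eventually.of_forall fun u => by
      have := d1 u
      simpa using this))
    simpa using h3
  have ode : ∀ n : ℕ, ∀ r > 0, 4 * r * deriv^[n+2] f r + (4 * n + 2) * deriv^[n+1] f r + deriv^[n] f r = 0 := by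
    intro n
    induction n with
    | zero =>
      intro r hr
      have h := d2 (Real.sqrt r)
      rw [← hfc, Real.sq_sqrt hr.le] at h
      have e : deriv^[2] f r * (2 * √r) * (2 * √r) = 4 * r * deriv^[2] f r := by
        have := Real.mul_self_sqrt hr.le
        linear_combination 4 * deriv^[2] f r * this
      rw [e] at h
      simp only [zero_add, Nat.cast_zero, mul_zero, Function.iterate_zero, id]
      linarith
    | succ n ih =>
      intro r hr
      have h1 := ((((hasDerivAt_id r).const_mul 4).mul (hasD_iter hf (n+2) r)).add
        ((hasD_iter hf (n+1) r).const_mul (4 * n + 2 : ℝ))).add (hasD_iter hf n r)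
      have h2 := h1.unique ((hasDerivAt_const r (0:ℝ)).congr_of_eventuallyEq (by
        filter_upwards [Ioi_mem_nhds hr] with u hu
        exact ih u hu))
      simp only [id, mul_one] at h2
      push_cast
      linarith
  have hN : ∀ n, (∃ C, ∀ t, ‖deriv^[n] f t‖ ≤ C) ∧ (∃ C, ∀ t, ‖deriv^[n+1] f t‖ ≤ C) := by
    intro n
    induction n with
    | zero =>
      constructor
      · refine bdd_of_pieces (C1 := 0) (C2 := 1) hf.continuous (fun t ht => by rw [hneg 0 t ht]; simp)
          fun t ht => ?_
        have := hfc (Real.sqrt t)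
        rw [Real.sq_sqrt (by linarith)] at this
        simp only [Function.iterate_zero, id]
        rw [this]; exact Real.abs_cos_le_one _
      · refine bdd_of_pieces (C1 := 0) (C2 := 1) (hf.iterate_deriv 1).continuous
          (fun t ht => by rw [hneg _ t ht]; simp) fun t ht => ?_
        have := d1 (Real.sqrt t)
        rw [Real.sq_sqrt (by linarith)] at this
        have h1 : 1 ≤ √t := Real.one_le_sqrt.mpr ht.le
        have h2 : ‖deriv^[1] f t‖ * (2 * √t) ≤ 1 := by
          have h3 := congrArg (fun z : ℝ => |z|) this
          rw [abs_mul, abs_neg, abs_of_nonneg (a := 2 * √t) (by positivity)] at h3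
          rw [Real.norm_eq_abs, h3]; exact Real.abs_sin_le_one _
        nlinarith [norm_nonneg (deriv^[1] f t)]
    | succ n ih =>
      refine ⟨ih.2, ?_⟩
      obtain ⟨⟨A, hA⟩, ⟨B, hB⟩⟩ := ih
      refine bdd_of_pieces (C1 := 0) (C2 := (4 * n + 2) * B + A) (hf.iterate_deriv _).continuous
          (fun t ht => by rw [hneg _ t ht]; simp) fun t ht => ?_
      have h := ode n t (by linarith)
      have h4 : 4 * t * deriv^[n+2] f t = -((4 * n + 2) * deriv^[n+1] f t) - deriv^[n] f t := by linarith
      have h5 : 4 * t * ‖deriv^[n+2] f t‖ ≤ (4 * n + 2) * B + A := by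
        have h6 := congrArg norm h4
        rw [norm_mul, Real.norm_of_nonneg (by linarith : (0:ℝ) ≤ 4 * t)] at h6
        rw [h6]
        refine (norm_sub_le _ _).trans ?_
        rw [norm_neg, norm_mul, Real.norm_of_nonneg (by positivity : (0:ℝ) ≤ 4 * n + 2)]
        gcongr
        · exact hB t
        · exact hA t
      have : ‖deriv^[n+2] f t‖ ≤ 4 * t * ‖deriv^[n+2] f t‖ := by
        nlinarith [norm_nonneg (deriv^[n+2] f t)]
      exact this.trans h5
  exact fun n => (hN n).1

/-- Malgrange-type division lemma -/
lemma malgrange {g : ℝ × ℝ → ℂ} (hg : ContDiff ℝ ∞ g) : ∃ G0 G1 : ℝ × ℝ → ℂ, ContDiff ℝ ∞ G0 ∧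
    ContDiff ℝ ∞ G1 ∧ ∀ᶠ p in 𝓝 (0 : ℝ × ℝ), g p = G0 (p.1 ^ 2, p.2) + p.1 * G1 (p.1 ^ 2, p.2) := by
  obtain ⟨f, hf, hcos, hbd⟩ := exists_cc
  let D : ℕ → ℝ → ℂ := fun n t => (deriv^[n] f t : ℝ)
  have hb : ∀ j, ∃ C, ∀ t, ‖D j t‖ ≤ C := fun j => by
    obtain ⟨C, hC⟩ := hbd j
    exact ⟨C, fun t => by simpa [D] using hC t⟩
  have hD : ∀ j t, HasDerivAt (D j) (D (j+1) t) t := fun j t => (hasD_iter hf j t).ofReal_comp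
  have hs : ∃ C : ℝ, ∃ M : ℕ, ∀ k : ℤ, |(2 * Real.pi * k)^2| ≤ C * (1 + |(k : ℝ)|) ^ M := by
    refine ⟨(2 * Real.pi)^2, 2, fun k => ?_⟩
    rw [abs_of_nonneg (by positivity), mul_pow, ← sq_abs (k:ℝ)]
    gcongr; linarith [abs_nonneg (k:ℝ)]
  have hP := pz_per hg 1
  have ha := hP.rd
  have ha1 := ha.k_mul (-(4 * Real.pi * Complex.I))
  refine ⟨Ser D (fun k => (2 * Real.pi * k)^2) (coef (pz 1 g)) 0,
    Ser D (fun k => (2 * Real.pi * k)^2) (fun k => -(4 * Real.pi * Complex.I) * k.1 * coef (pz 1 g) k) 1,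
    Ser_smooth hb hD hs ha 0, Ser_smooth hb hD hs ha1 1, ?_⟩
  have hee : ∀ (k : ℤ) (x : ℝ), ee k x = D 0 ((2 * Real.pi * k)^2 * x^2) +
      x * (-(4 * Real.pi * Complex.I) * k * D 1 ((2 * Real.pi * k)^2 * x^2)) := by
    intro k x
    have h1 := (hasD_iter hf 0 ((2 * Real.pi * k * x)^2)).comp (2 * Real.pi * k * x)
      ((hasDerivAt_id (2 * Real.pi * k * x)).pow 2)
    have h2 : HasDerivAt (deriv^[0] f ∘ (id ^ 2)) (- Real.sin (2 * Real.pi * k * x))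
        (2 * Real.pi * k * x) := by
      have := Real.hasDerivAt_cos (2 * Real.pi * k * x)
      convert! this using 1
      ext u; simp [hcos]
    have h3 := h1.unique h2
    simp only [zero_add, id, Nat.cast_ofNat, mul_one] at h3
    have e0 : D 0 ((2 * Real.pi * k)^2 * x^2) = Real.cos (2 * Real.pi * k * x) := by
      simp only [D, Function.iterate_zero, id]
      rw [← hcos]; congr 2; ring
    have e1 : (x : ℂ) * (-(4 * Real.pi * Complex.I) * k * D 1 ((2 * Real.pi * k)^2 * x^2)) =
      Real.sin (2 * Real.pi * k * x) * Complex.I := by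
      have : Real.sin (2 * Real.pi * k * x) = -(deriv^[1] f ((2 * Real.pi * k)^2 * x^2) * (2 * (2 * Real.pi * k * x))) := by
        rw [← mul_pow]; norm_num at h3 ⊢; linarith
      rw [this]; simp only [D]; push_cast; ring
    rw [e0, e1, ee]
    rw [show (2 * Real.pi * Complex.I * k * x : ℂ) = ((2 * Real.pi * k * x : ℝ) : ℂ) * Complex.I by
      push_cast; ring, Complex.exp_mul_I, Complex.ofReal_cos, Complex.ofReal_sin]
  filter_upwards [psi_id2] with p hp
  have h1 : g p = FS (coef (pz 1 g)) p := by rw [hP.inv]; simp only [pz, hp.1, hp.2, one_mul]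
  rw [h1]
  have e1 := Ser_term_summable (s := fun k => (2 * Real.pi * k)^2) hb ha 0 (p.1^2, p.2)
  have e2 := Ser_term_summable (s := fun k => (2 * Real.pi * k)^2) hb ha1 1 (p.1^2, p.2)
  rw [Ser, Ser, ← tsum_mul_left, ← e1.tsum_add (e2.mul_left _)]
  rw [FS]
  congr 1; ext k
  rw [hee k.1 p.1]; ring

lemma malgrange_real {g : ℝ × ℝ → ℝ} (hg : ContDiff ℝ ∞ g) : ∃ G0 G1 : ℝ × ℝ → ℝ, ContDiff ℝ ∞ G0 ∧
    ContDiff ℝ ∞ G1 ∧ ∀ᶠ p in 𝓝 (0 : ℝ × ℝ), g p = G0 (p.1 ^ 2, p.2) + p.1 * G1 (p.1 ^ 2, p.2) := by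
  obtain ⟨G0, G1, h0, h1, h⟩ := malgrange (g := fun p => (g p : ℂ)) (Complex.ofRealCLM.contDiff.comp hg)
  refine ⟨fun p => (G0 p).re, fun p => (G1 p).re, Complex.reCLM.contDiff.comp h0,
    Complex.reCLM.contDiff.comp h1, ?_⟩
  filter_upwards [h] with p hp
  have := congrArg Complex.re hp
  simpa using this
end Cib

namespace Cib
open Topology ContDiff

lemma tendsto_zero_of {f : ℝ × ℝ → ℝ × ℝ} (hf : Continuous f) (h0 : f 0 = 0) :
    Tendsto f (𝓝 0) (𝓝 0) := by
  have := hf.tendsto 0; rwa [h0] at this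

/-- closure argument -/
lemma closed_at_zero {A B : ℝ × ℝ → ℝ} (hA : Continuous A) (hB : Continuous B)
    (h : ∀ᶠ p in 𝓝 (0 : ℝ × ℝ), p.1 < 0 → A p = B p) : ∀ᶠ p in 𝓝 (0 : ℝ × ℝ), p.1 ≤ 0 → A p = B p := by
  filter_upwards [h.eventually_nhds] with p hp hle
  rcases hle.lt_or_eq with h1 | h1
  · exact hp.self_of_nhds h1
  · have hc : Tendsto (fun t : ℝ => ((t, p.2) : ℝ × ℝ)) (𝓝[<] 0) (𝓝 p) := by
      have : Continuous (fun t : ℝ => ((t, p.2) : ℝ × ℝ)) := by fun_prop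
      have h2 := (this.tendsto 0).mono_left (nhdsWithin_le_nhds (s := Iio (0:ℝ)))
      rwa [show ((0:ℝ), p.2) = p from Prod.ext h1.symm rfl] at h2
    refine tendsto_nhds_unique_of_eventuallyEq ((hA.tendsto p).comp hc) ((hB.tendsto p).comp hc) ?_
    filter_upwards [hc.eventually hp, self_mem_nhdsWithin] with t ht h0
    exact ht h0

/-- derivative of a composite with the fold -/
lemma fold_deriv {G0 G1 : ℝ × ℝ → ℝ} (h0 : ContDiff ℝ ∞ G0) (h1 : ContDiff ℝ ∞ G1) (p : ℝ × ℝ) :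
    HasFDerivAt (fun p : ℝ × ℝ => G0 (p.1 ^ 2, p.2) + p.1 * G1 (p.1 ^ 2, p.2))
      (Lc (2 * p.1 * Dx G0 (p.1^2, p.2) + G1 (p.1^2, p.2) + 2 * p.1^2 * Dx G1 (p.1^2, p.2))
        (Dy G0 (p.1^2, p.2) + p.1 * Dy G1 (p.1^2, p.2))) p := by
  have hq : HasFDerivAt (fun p : ℝ × ℝ => ((p.1 ^ 2, p.2) : ℝ × ℝ))
      ((Lc (2 * p.1) 0).prod (Lc 0 1)) p := by
    refine HasFDerivAt.prodMk ?_ ?_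
    · have := (hasFDerivAt_fst (𝕜 := ℝ) (p := p)).pow 2
      refine this.congr_fderiv ?_
      ext <;> simp
    · refine hasFDerivAt_snd.congr_fderiv ?_
      ext <;> simp
  have a0 := (hasF h0 (p.1^2, p.2)).comp p hq
  have a1 := (hasF h1 (p.1^2, p.2)).comp p hq
  have := a0.add ((hasFDerivAt_fst (𝕜 := ℝ) (p := p)).mul a1)
  refine this.congr_fderiv ?_
  ext
  · simp; ring
  · simp

lemma hyp_solve {b m : ℝ × ℝ → ℝ} (hb : ContDiff ℝ ∞ b) (hm : ContDiff ℝ ∞ m) (hm0 : 0 < m 0) :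
    ∃ Y Z : ℝ × ℝ → ℝ, ContDiff ℝ ∞ Y ∧ ContDiff ℝ ∞ Z ∧ Y 0 = 0 ∧ Dy Y 0 ≠ 0 ∧ 0 < Z 0 ∧
      ∀ᶠ p in 𝓝 (0 : ℝ × ℝ), p.1 < 0 → PDE b m Y Z p := by
  let B : ℝ × ℝ → ℝ := fun q => 2 * q.1 * (b (-q.1^2, q.2) + q.1 * m (-q.1^2, q.2))
  have hB : ContDiff ℝ ∞ B := by simp only [B]; fun_prop
  obtain ⟨I, hI, hI0, hIe⟩ := flow B hB
  obtain ⟨G0, G1, hG0, hG1, hG⟩ := malgrange_real hI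
  -- split equations
  let Q : ℝ × ℝ → Prop := fun q =>
    2 * q.1 * Dx G0 (q.1^2, q.2) + G1 (q.1^2, q.2) + 2 * q.1^2 * Dx G1 (q.1^2, q.2) +
      B q * (Dy G0 (q.1^2, q.2) + q.1 * Dy G1 (q.1^2, q.2)) = 0
  have hQ : ∀ᶠ q in 𝓝 (0 : ℝ × ℝ), Q q := by
    filter_upwards [hG.eventually_nhds, hIe] with q h1 h2
    have h3 := (fold_deriv hG0 hG1 q).congr_of_eventuallyEq h1
    rw [Dx_of h3, Dy_of h3] at h2
    exact h2
  have hsq1 : Tendsto (fun p : ℝ × ℝ => ((√(-p.1), p.2) : ℝ × ℝ)) (𝓝 0) (𝓝 0) :=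
    tendsto_zero_of (by fun_prop) (by simp)
  have hsq2 : Tendsto (fun p : ℝ × ℝ => ((-√(-p.1), p.2) : ℝ × ℝ)) (𝓝 0) (𝓝 0) :=
    tendsto_zero_of (by fun_prop) (by simp)
  let Y : ℝ × ℝ → ℝ := fun p => G0 (-p.1, p.2)
  let Z : ℝ × ℝ → ℝ := fun p =>
    3 * (m p * Dy G0 (-p.1, p.2) + b p * Dy G1 (-p.1, p.2)) + 3 * Dx G1 (-p.1, p.2)
  have sx0 := smooth_Dx hG0
  have sy0 := smooth_Dy hG0
  have sx1 := smooth_Dx hG1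
  have sy1 := smooth_Dy hG1
  have hY : ContDiff ℝ ∞ Y := by simp only [Y]; fun_prop
  have hZ : ContDiff ℝ ∞ Z := by simp only [Z]; fun_prop
  have hflip : ∀ p : ℝ × ℝ, HasFDerivAt (fun p : ℝ × ℝ => ((-p.1, p.2) : ℝ × ℝ))
      ((Lc (-1) 0).prod (Lc 0 1)) p := by
    intro p
    refine HasFDerivAt.prodMk ?_ ?_
    · refine (hasFDerivAt_fst (𝕜 := ℝ) (p := p)).neg.congr_fderiv ?_
      ext <;> simp
    · refine hasFDerivAt_snd.congr_fderiv ?_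
      ext <;> simp
  have hcf : ∀ {G : ℝ × ℝ → ℝ}, ContDiff ℝ ∞ G → ∀ p, HasFDerivAt (fun p : ℝ × ℝ => G (-p.1, p.2))
      (Lc (-Dx G (-p.1, p.2)) (Dy G (-p.1, p.2))) p := by
    intro G hG p
    have := (hasF hG (-p.1, p.2)).comp p (hflip p)
    refine this.congr_fderiv ?_
    ext <;> simp
  have hsplit : ∀ᶠ p in 𝓝 (0 : ℝ × ℝ), p.1 < 0 →
      (2 / 3 * p.1 * Z p = G1 (-p.1, p.2)) ∧
      (Dx G0 (-p.1, p.2) + b p * Dy G0 (-p.1, p.2) - p.1 * m p * Dy G1 (-p.1, p.2) = 0) := by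
    filter_upwards [hsq1.eventually hQ, hsq2.eventually hQ] with p h1 h2 hp
    have hpos : 0 < √(-p.1) := Real.sqrt_pos.mpr (by linarith)
    have hs : √(-p.1)^2 = -p.1 := Real.sq_sqrt (by linarith)
    simp only [Q, B, neg_sq, hs, neg_neg, Prod.mk.eta] at h1 h2
    set t := √(-p.1) 
    constructor
    · simp only [Z]
      linear_combination (-1/2) * h1 + (-1/2) * h2 + (2 * m p * Dy G0 (-p.1, p.2) + 2 * b p * Dy G1 (-p.1, p.2)) * hs
    · have : t * (Dx G0 (-p.1, p.2) + b p * Dy G0 (-p.1, p.2) - p.1 * m p * Dy G1 (-p.1, p.2)) = 0 := by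
        linear_combination (1/4) * h1 - (1/4) * h2 - t * m p * Dy G1 (-p.1, p.2) * hs
      exact (mul_eq_zero.mp this).resolve_left hpos.ne'
  have hPDE : ∀ᶠ p in 𝓝 (0 : ℝ × ℝ), p.1 < 0 → PDE b m Y Z p := by
    filter_upwards [hsplit.eventually_nhds] with p hp hlt
    have e1 := hp.self_of_nhds hlt
    have hnear : ∀ᶠ q in 𝓝 p, q.1 < 0 := continuous_fst.continuousAt.eventually (gt_mem_nhds hlt)
    have hev : (fun q : ℝ × ℝ => 2 / 3 * q.1 * Z q) =ᶠ[𝓝 p] fun q => G1 (-q.1, q.2) := by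
      filter_upwards [hp, hnear] with q h1 h2 using (h1 h2).1
    have d1 : HasFDerivAt (fun q : ℝ × ℝ => 2 / 3 * q.1 * Z q)
        (Lc (2 / 3 * Z p + 2 / 3 * p.1 * Dx Z p) (2 / 3 * p.1 * Dy Z p)) p := by
      have := ((hasFDerivAt_fst (𝕜 := ℝ) (p := p)).const_mul (2/3 : ℝ)).mul (hasF hZ p)
      refine this.congr_fderiv ?_
      ext
      · simp; ring
      · simp
    have d2 := (hcf hG1 p).congr_of_eventuallyEq hev
    have f1 : 2 / 3 * Z p + 2 / 3 * p.1 * Dx Z p = -Dx G1 (-p.1, p.2) := by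
      rw [← Dx_of d1, Dx_of d2]
    have f2 : 2 / 3 * p.1 * Dy Z p = Dy G1 (-p.1, p.2) := by
      rw [← Dy_of d1, Dy_of d2]
    have y1 : Dx Y p = -Dx G0 (-p.1, p.2) := Dx_of (hcf hG0 p)
    have y2 : Dy Y p = Dy G0 (-p.1, p.2) := Dy_of (hcf hG0 p)
    refine ⟨?_, ?_⟩
    · rw [f2, y1, y2]; linarith [e1.2]
    · rw [f2, y2]
      have : Z p = 3 * (m p * Dy G0 (-p.1, p.2) + b p * Dy G1 (-p.1, p.2)) + 3 * Dx G1 (-p.1, p.2) := rfl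
      linarith
  have hY0 : ∀ᶠ y in 𝓝 (0:ℝ), Y (0, y) = y := by
    have hc : Tendsto (fun y : ℝ => ((0, y) : ℝ × ℝ)) (𝓝 0) (𝓝 0) := by
      have : Continuous (fun y : ℝ => ((0, y) : ℝ × ℝ)) := by fun_prop
      exact this.tendsto 0
    filter_upwards [hI0, hc.eventually hG] with y h1 h2
    simp only [Y]
    rw [h1] at h2
    simp at h2 ⊢
    exact h2.symm
  have hYy : Dy Y 0 = 1 := by
    have h1 := hasDy hY 0 0
    have h2 := (hasDerivAt_id (0:ℝ)).congr_of_eventuallyEq hY0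
    exact h1.unique h2
  have hYz : Y 0 = 0 := hY0.self_of_nhds
  refine ⟨Y, Z, hY, hZ, hYz, by rw [hYy]; norm_num, ?_, hPDE⟩
  have s1 := (smooth_Dx hZ).continuous
  have s2 := (smooth_Dy hZ).continuous
  have s3 := (smooth_Dy hY).continuous
  have s4 := hZ.continuous
  have s5 := hm.continuous
  have s6 := hb.continuous
  have := closed_at_zero (A := fun p => Z p + 2 / 3 * p.1 * Dx Z p)
    (B := fun p => m p * Dy Y p + b p * (2 / 3 * p.1 * Dy Z p)) (by fun_prop) (by fun_prop)
    (hPDE.mono fun p h1 h2 => (h1 h2).2)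
  have h2 := this.self_of_nhds le_rfl
  simp [hYy] at h2
  rw [h2]; exact hm0

lemma NF_eq_BDE (b m : ℝ × ℝ → ℝ) :
    NF b m = BDE (fun _ => 1) b (fun p => b p ^ 2 + p.1 * m p ^ 2) := by
  ext p v; simp only [NF, BDE]; ring

lemma step2 {b m : ℝ × ℝ → ℝ} (hb : ContDiff ℝ ∞ b) (hm : ContDiff ℝ ∞ m) (hm0 : 0 < m 0) :
    ∃ b' m' : ℝ × ℝ → ℝ, ContDiff ℝ ∞ b' ∧ ContDiff ℝ ∞ m' ∧ Eqv (NF b m) (NF b' m') ∧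
      ∀ᶠ p in 𝓝 (0 : ℝ × ℝ), p.1 < 0 → b' p = 0 ∧ m' p = 1 := by
  obtain ⟨Y, Z, hY, hZ, hY0, hYy, hZ0, hPDE⟩ := hyp_solve hb hm hm0
  obtain ⟨u, ρ, h, f', hu, hu0, hρ, hρ0, hh, h0, hf', hh1, hDh, hE⟩ :=
    from_PDE (b := b) (m := m) hY hZ hY0 hYy hZ0
  have hune : ∀ᶠ p in 𝓝 (0 : ℝ × ℝ), u p ≠ 0 := hu.continuous.continuousAt.eventually_ne hu0.ne'
  obtain ⟨k, hk, hke⟩ := globalize (f := fun p => m p / u p) (a := (0 : ℝ × ℝ)) (by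
    filter_upwards [hune] with p hp
    exact hm.contDiffAt.div hu.contDiffAt hp)
  have hk0 : k 0 ≠ 0 := by rw [hke.self_of_nhds]; exact (div_pos hm0 hu0).ne'
  obtain ⟨b', m', ρ', hb', hm', hm'0, hρ', hρ'0, hE'⟩ := reduce (a := fun _ => 1) (b := b)
    (c := fun p => b p ^ 2 + p.1 * m p ^ 2) contDiff_const hb (by fun_prop) hh h0 f' hf' hk hk0 (by
      filter_upwards [hke, hune] with p h1 h2
      rw [h1, hh1]; field_simp; ring) (by
      intro v hv hv1
      rw [hDh] at hv1
      have hv0 : v.1 = 0 := (mul_eq_zero.mp hv1).resolve_right (by positivity)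
      have hv2 : v.2 ≠ 0 := fun h => hv (Prod.ext hv0 h)
      simp only [BDE, hv0]
      have := sq_pos_of_ne_zero hv2
      simpa using this)
  refine ⟨b', m', hb', hm', ⟨h, ρ', f', hh, h0, hf', hρ', hρ'0, ?_⟩, ?_⟩
  · rw [NF_eq_BDE b m]; exact hE'
  obtain ⟨g, hg, g0, hgh, hhg⟩ := glob_inv hh h0 f' hf'
  have hD2 := inv_deriv hh hg hhg
  have hgc := tendsto_zero_of hg.continuous g0
  have hm'pos : ∀ᶠ q in 𝓝 (0 : ℝ × ℝ), 0 < m' q :=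
    hm'.continuous.continuousAt.eventually (lt_mem_nhds hm'0)
  have hρne : ∀ᶠ p in 𝓝 (0 : ℝ × ℝ), ρ p ≠ 0 := hρ.continuous.continuousAt.eventually_ne hρ0
  filter_upwards [hhg, hD2, hm'pos, hgc.eventually hPDE, hgc.eventually hE, hgc.eventually hE',
    hgc.eventually hρne] with q c1 c2 c3 c4 c5 c6 c7 hq
  have hp : (g q).1 < 0 := by
    have := hh1 (g q)
    rw [c1] at this
    by_contra hcon
    push Not at hcon
    have : 0 ≤ q.1 := by rw [this]; positivity
    linarith
  have hS := c5 (c4 hp)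
  rw [← NF_eq_BDE] at c6
  rw [c1] at hS c6
  have key : ∀ w, BDE (fun _ => 1) (fun _ => 0) (fun p => p.1) q w * ρ' (g q) = ρ (g q) * NF b' m' q w := by
    intro w
    have e1 := hS (fderiv ℝ g q w)
    have e2 := c6 (fderiv ℝ g q w)
    rw [c2] at e1 e2
    rw [e1, e2]; ring
  have k1 := key (0, 1)
  have k2 := key (1, 1)
  have k3 := key (1, -1)
  simp only [BDE, NF] at k1 k2 k3
  norm_num at k1 k2 k3
  rw [k1] at k2 k3
  have k2' := mul_left_cancel₀ c7 ((mul_comm _ _).trans k2)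
  have k3' := mul_left_cancel₀ c7 ((mul_comm _ _).trans k3)
  have hb0 : b' q = 0 := by linarith
  refine ⟨hb0, ?_⟩
  rw [hb0] at k2'
  have : q.1 * (m' q ^ 2 - 1) = 0 := by linarith
  have h2 := (mul_eq_zero.mp this).resolve_left hq.ne
  nlinarith
end Cib

namespace Cib
open Topology ContDiff

/-- smooth functions vanishing on the left half plane -/
def Vn (D : ℝ × ℝ → ℝ) : Prop := ContDiff ℝ ∞ D ∧ ∀ p : ℝ × ℝ, p.1 ≤ 0 → D p = 0

lemma Vn.lt_zero_Dx {D} (h : Vn D) (x y : ℝ) (hx : x ≤ 0) : Dx D (x, y) = 0 := by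
  have h1 := (hasDx h.1 x y).hasDerivWithinAt (s := Iic x)
  have h2 : HasDerivWithinAt (fun s => D (s, y)) 0 (Iic x) x := by
    refine (hasDerivWithinAt_const x (Iic x) (0:ℝ)).congr (fun s hs => h.2 _ (le_trans hs hx)) (h.2 _ hx)
  exact (uniqueDiffOn_Iic x x (mem_Iic.mpr le_rfl)).eq_deriv _ h1 h2

lemma Vn.dx {D} (h : Vn D) : Vn (Dx D) := ⟨smooth_Dx h.1, fun p hp => h.lt_zero_Dx p.1 p.2 hp⟩

lemma Vn.dy {D} (h : Vn D) : Vn (Dy D) := by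
  refine ⟨smooth_Dy h.1, fun p hp => ?_⟩
  have h1 := hasDy h.1 p.1 p.2
  have h2 : (fun s => D (p.1, s)) = fun _ => 0 := funext fun s => h.2 _ hp
  rw [h2] at h1
  exact h1.unique (hasDerivAt_const _ _)

lemma Vn.mul {D} (h : Vn D) {E : ℝ × ℝ → ℝ} (hE : ContDiff ℝ ∞ E) : Vn (fun p => D p * E p) :=
  ⟨h.1.mul hE, fun p hp => by simp [h.2 p hp]⟩

lemma Vn.add {D E} (h : Vn D) (h' : Vn E) : Vn (fun p => D p + E p) :=
  ⟨h.1.add h'.1, fun p hp => by simp [h.2 p hp, h'.2 p hp]⟩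

lemma Vn.bound {D} (h : Vn D) (R : ℝ) (N : ℕ) : ∃ C, 0 ≤ C ∧
    ∀ x y, 0 ≤ x → x ≤ R → |y| ≤ R → ‖D (x, y)‖ ≤ C * x ^ N := by
  induction N generalizing D with
  | zero =>
    obtain ⟨C, hC⟩ := (isCompact_Icc.prod isCompact_Icc).exists_bound_of_continuousOn
      (s := Icc (0:ℝ) R ×ˢ Icc (-R) R) h.1.continuous.continuousOn
    refine ⟨max C 0, le_max_right _ _, fun x y h1 h2 h3 => ?_⟩
    rw [pow_zero, mul_one]
    exact (hC (x, y) ⟨⟨h1, h2⟩, abs_le.mp h3⟩).trans (le_max_left _ _)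
  | succ n ih =>
    obtain ⟨C, hC0, hC⟩ := ih h.dx
    refine ⟨C, hC0, fun x y h1 h2 h3 => ?_⟩
    have := (convex_Icc 0 x).norm_image_sub_le_of_norm_hasDerivWithin_le (C := C * x ^ n)
      (f := fun s => D (s, y)) (f' := fun s => Dx D (s, y)) (x := 0) (y := x)
      (fun s _ => (hasDx h.1 s y).hasDerivWithinAt) (fun s hs => by
        refine (hC s y hs.1 (hs.2.trans h2) h3).trans ?_
        have := hs.1
        gcongr
        exact hs.2) ⟨le_rfl, h1⟩ ⟨h1, le_rfl⟩
    rw [h.2 (0, y) le_rfl, sub_zero, sub_zero, Real.norm_of_nonneg h1] at this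
    rw [pow_succ, ← mul_assoc]; exact this

/-- root substitution -/
def rsub (κ θ a : ℝ) (D : ℝ × ℝ → ℝ) (p : ℝ × ℝ) : ℝ :=
  if 0 < p.1 then p.1 ^ a * D (κ * p.1 ^ θ, p.2) else 0

lemma rsub_hasF {κ θ : ℝ} (hκ : 0 < κ) (hθ : 0 < θ) (a : ℝ) {D} (h : Vn D) (p : ℝ × ℝ) :
    HasFDerivAt (rsub κ θ a D)
      (Lc (rsub κ θ (a - 1) (fun q => a * D q + θ * (q.1 * Dx D q)) p) (rsub κ θ a (Dy D) p)) p := by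
  rcases lt_trichotomy p.1 0 with hp | hp | hp
  · have : rsub κ θ a D =ᶠ[𝓝 p] fun _ => 0 := by
      filter_upwards [continuous_fst.continuousAt.eventually (gt_mem_nhds hp)] with q hq
      simp [rsub, not_lt.mpr (le_of_lt hq)]
    refine ((hasFDerivAt_const 0 p).congr_of_eventuallyEq this).congr_fderiv ?_
    ext <;> simp [rsub, not_lt.mpr hp.le]
  · have hz : ∀ b E, rsub κ θ b E p = 0 := fun b E => by simp [rsub, hp]
    rw [hz, hz]
    have hL : (Lc (0:ℝ) 0) = 0 := by ext <;> simp
    rw [hL]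
    -- choose N
    obtain ⟨N, hN⟩ := exists_nat_gt ((2 - a) / θ)
    rw [div_lt_iff₀ hθ] at hN
    obtain ⟨C, hC0, hC⟩ := h.bound (κ + |p.2| + 1) N
    rw [hasFDerivAt_iff_isLittleO_nhds_zero]
    have hO : (fun v : ℝ × ℝ => rsub κ θ a D (p + v) - rsub κ θ a D p - (0 : ℝ × ℝ →L[ℝ] ℝ) v)
        =O[𝓝 0] fun v : ℝ × ℝ => ‖v‖ ^ 2 := by
      refine IsBigO.of_bound (C * κ ^ N) ?_
      filter_upwards [Metric.ball_mem_nhds (0 : ℝ × ℝ) one_pos] with v hv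
      rw [mem_ball_zero_iff] at hv
      have hv1 : |v.1| ≤ ‖v‖ := norm_fst_le v
      have hv2 : |v.2| ≤ ‖v‖ := norm_snd_le v
      rw [hz]
      simp only [sub_zero, ContinuousLinearMap.zero_apply]
      rw [rsub]
      split_ifs with hpos
      · simp only [Prod.fst_add, Prod.snd_add, hp, zero_add] at hpos ⊢
        rw [abs_of_pos hpos] at hv1
        have hle1 : v.1 ≤ 1 := by linarith
        have hpow : v.1 ^ θ ≤ 1 := Real.rpow_le_one hpos.le hle1 hθ.le
        have hpow0 : 0 < v.1 ^ θ := Real.rpow_pos_of_pos hpos _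
        have hb := hC (κ * v.1 ^ θ) (p.2 + v.2) (by positivity)
          (by nlinarith [abs_nonneg p.2]) ((abs_add_le _ _).trans (by linarith))
        rw [norm_mul, Real.norm_of_nonneg (Real.rpow_nonneg hpos.le a), norm_pow, norm_norm]
        calc v.1 ^ a * ‖D (κ * v.1 ^ θ, p.2 + v.2)‖ ≤ v.1 ^ a * (C * (κ * v.1 ^ θ) ^ N) := by gcongr
          _ = C * κ ^ N * (v.1 ^ (a + θ * N)) := by
            rw [mul_pow, Real.rpow_add hpos, Real.rpow_mul hpos.le, Real.rpow_natCast]; ring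
          _ ≤ C * κ ^ N * (v.1 ^ (2:ℝ)) := by
            refine mul_le_mul_of_nonneg_left ?_ (by positivity)
            exact Real.rpow_le_rpow_of_exponent_ge hpos hle1 (by linarith)
          _ ≤ C * κ ^ N * ‖v‖ ^ 2 := by
            rw [Real.rpow_two]; gcongr
      · rw [norm_zero]; positivity
    refine hO.trans_isLittleO ?_
    have : (fun v : ℝ × ℝ => ‖v‖ ^ 2) =o[𝓝 0] fun v : ℝ × ℝ => ‖v‖ ^ 1 :=
      (isLittleO_pow_pow (𝕜 := ℝ) (by norm_num : 1 < 2)).comp_tendsto tendsto_norm_zero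
    simp only [pow_one] at this
    exact this.of_norm_right
  · have hev : rsub κ θ a D =ᶠ[𝓝 p] fun q => q.1 ^ a * D (κ * q.1 ^ θ, q.2) := by
      filter_upwards [continuous_fst.continuousAt.eventually (lt_mem_nhds hp)] with q hq
      simp only [rsub]; rw [if_pos hq]
    have h1 : HasFDerivAt (fun q : ℝ × ℝ => q.1 ^ a) (Lc (a * p.1 ^ (a - 1)) 0) p := by
      have := (hasFDerivAt_fst (𝕜 := ℝ) (p := p)).rpow_const (p := a) (Or.inl hp.ne')
      refine this.congr_fderiv ?_
      ext <;> simp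
    have h2 : HasFDerivAt (fun q : ℝ × ℝ => ((κ * q.1 ^ θ, q.2) : ℝ × ℝ))
        ((Lc (κ * (θ * p.1 ^ (θ - 1))) 0).prod (Lc 0 1)) p := by
      refine HasFDerivAt.prodMk ?_ ?_
      · have := ((hasFDerivAt_fst (𝕜 := ℝ) (p := p)).rpow_const (p := θ) (Or.inl hp.ne')).const_mul κ
        refine this.congr_fderiv ?_
        ext <;> simp
      · refine hasFDerivAt_snd.congr_fderiv ?_
        ext <;> simp
    have h3 := h1.mul ((hasF h.1 (κ * p.1 ^ θ, p.2)).comp p h2)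
    refine (h3.congr_of_eventuallyEq hev).congr_fderiv ?_
    have e1 : p.1 ^ a = p.1 ^ (a - 1) * p.1 := by
      rw [← Real.rpow_add_one hp.ne']; congr 1; ring
    have e2 : p.1 ^ θ = p.1 ^ (θ - 1) * p.1 := by
      rw [← Real.rpow_add_one hp.ne']; congr 1; ring
    ext
    · simp [rsub, hp]
      rw [e1, e2]; ring
    · simp [rsub, hp]

lemma rsub_smooth {κ θ : ℝ} (hκ : 0 < κ) (hθ : 0 < θ) (a : ℝ) {D} (h : Vn D) :
    ContDiff ℝ ∞ (rsub κ θ a D) := by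
  refine smooth_of_closed (fun f => ∃ a D, Vn D ∧ f = rsub κ θ a D) ?_ ⟨a, D, h, rfl⟩
  rintro f ⟨a, D, h, rfl⟩
  refine ⟨_, _, ⟨_, _, ?_, rfl⟩, ⟨_, _, h.dy, rfl⟩, rsub_hasF hκ hθ a h⟩
  refine ⟨?_, fun p hp => by simp [h.2 p hp, h.dx.2 p hp]⟩
  have := h.1
  have := h.dx.1
  fun_prop

lemma rsub_Vn {κ θ : ℝ} (hκ : 0 < κ) (hθ : 0 < θ) (a : ℝ) {D} (h : Vn D) : Vn (rsub κ θ a D) :=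
  ⟨rsub_smooth hκ hθ a h, fun p hp => by simp [rsub, not_lt.mpr hp]⟩

/-- flat along x = 0 -/
def Flat (D : ℝ × ℝ → ℝ) : Prop := ContDiff ℝ ∞ D ∧ ∀ (j : ℕ) (y : ℝ), (Dx^[j] D) (0, y) = 0

lemma smooth_iter {D : ℝ × ℝ → ℝ} (h : ContDiff ℝ ∞ D) (j : ℕ) : ContDiff ℝ ∞ (Dx^[j] D) := by
  induction j with
  | zero => exact h
  | succ n ih => rw [Function.iterate_succ_apply']; exact smooth_Dx ih

lemma iter_comm {D : ℝ × ℝ → ℝ} (h : ContDiff ℝ ∞ D) (j : ℕ) : Dx^[j] (Dy D) = Dy (Dx^[j] D) := by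
  induction j with
  | zero => rfl
  | succ n ih =>
    rw [Function.iterate_succ_apply', Function.iterate_succ_apply', ih]
    exact funext fun p => Dx_Dy_comm (smooth_iter h n) p

lemma Flat.dx {D} (h : Flat D) : Flat (Dx D) :=
  ⟨smooth_Dx h.1, fun j y => by rw [← Function.iterate_succ_apply]; exact h.2 (j+1) y⟩

lemma Dy_zero_of {D : ℝ × ℝ → ℝ} (h : ContDiff ℝ ∞ D) {x y : ℝ} (h0 : ∀ᶠ s in 𝓝 y, D (x, s) = 0) :
    Dy D (x, y) = 0 := by
  exact (hasDy h x y).unique ((hasDerivAt_const y (0:ℝ)).congr_of_eventuallyEq h0)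

lemma Flat.dy {D} (h : Flat D) : Flat (Dy D) :=
  ⟨smooth_Dy h.1, fun j y => by
    rw [iter_comm h.1]
    exact Dy_zero_of (smooth_iter h.1 j) (Eventually.of_forall fun s => h.2 j s)⟩

/-- cutting at the axis -/
def cut (D : ℝ × ℝ → ℝ) (p : ℝ × ℝ) : ℝ := if 0 < p.1 then D p else 0

lemma cut_hasF {D} (h : Flat D) (p : ℝ × ℝ) :
    HasFDerivAt (cut D) (Lc (cut (Dx D) p) (cut (Dy D) p)) p := by
  rcases lt_trichotomy p.1 0 with hp | hp | hp
  · have : cut D =ᶠ[𝓝 p] fun _ => 0 := by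
      filter_upwards [continuous_fst.continuousAt.eventually (gt_mem_nhds hp)] with q hq
      simp [cut, not_lt.mpr (le_of_lt hq)]
    refine ((hasFDerivAt_const 0 p).congr_of_eventuallyEq this).congr_fderiv ?_
    ext <;> simp [cut, not_lt.mpr hp.le]
  · have hpe : p = (0, p.2) := Prod.ext hp rfl
    have hz : ∀ E, cut E p = 0 := fun E => by simp [cut, hp]
    have hD := hasF h.1 p
    have z0 : D p = 0 := by rw [hpe]; exact h.2 0 p.2
    have z1 : Dx D p = 0 := by rw [hpe]; exact h.2 1 p.2
    have z2 : Dy D p = 0 := by rw [hpe]; exact h.dy.2 0 p.2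
    rw [z1, z2] at hD
    rw [hz, hz]
    have hL : (Lc (0:ℝ) 0) = 0 := by ext <;> simp
    rw [hL] at hD ⊢
    rw [hasFDerivAt_iff_isLittleO] at hD ⊢
    rw [z0] at hD
    rw [hz]
    refine (IsBigO.of_bound 1 (Eventually.of_forall fun q => ?_)).trans_isLittleO hD
    simp only [cut]
    split_ifs <;> simp
  · have : cut D =ᶠ[𝓝 p] D := by
      filter_upwards [continuous_fst.continuousAt.eventually (lt_mem_nhds hp)] with q hq
      simp only [cut]; rw [if_pos hq]
    refine ((hasF h.1 p).congr_of_eventuallyEq this).congr_fderiv ?_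
    simp [cut, hp]

lemma cut_smooth {D} (h : Flat D) : ContDiff ℝ ∞ (cut D) := by
  refine smooth_of_closed (fun f => ∃ D, Flat D ∧ f = cut D) ?_ ⟨D, h, rfl⟩
  rintro f ⟨D, h, rfl⟩
  exact ⟨_, _, ⟨_, h.dx, rfl⟩, ⟨_, h.dy, rfl⟩, cut_hasF h⟩

end Cib

namespace Cib
open Topology ContDiff

/-- weighted l1 norm -/
def Nw (w : ℤ × ℤ → ENNReal) (a : ℤ × ℤ → ℂ) : ENNReal := ∑' k, w k * ‖a k‖ₑ

/-- convolution -/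
def conv (a b : ℤ × ℤ → ℂ) (k : ℤ × ℤ) : ℂ := ∑' j, a j * b (k - j)

lemma Nw_conv {w : ℤ × ℤ → ENNReal} (hw : ∀ j l, w (j + l) ≤ w j * w l) (a b) :
    Nw w (conv a b) ≤ Nw w a * Nw w b := by
  unfold Nw
  calc ∑' k, w k * ‖conv a b k‖ₑ ≤ ∑' k, ∑' j, (w j * ‖a j‖ₑ) * (w (k - j) * ‖b (k - j)‖ₑ) := by
        refine ENNReal.tsum_le_tsum fun k => ?_
        calc w k * ‖conv a b k‖ₑ ≤ w k * ∑' j, ‖a j * b (k - j)‖ₑ := by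
              gcongr; exact enorm_tsum_le_tsum_enorm
          _ = ∑' j, w k * ‖a j * b (k - j)‖ₑ := ENNReal.tsum_mul_left.symm
          _ ≤ _ := by
            refine ENNReal.tsum_le_tsum fun j => ?_
            have h := hw j (k - j)
            rw [add_sub_cancel] at h
            calc w k * ‖a j * b (k - j)‖ₑ ≤ (w j * w (k - j)) * ‖a j * b (k - j)‖ₑ := by gcongr
              _ = _ := by rw [enorm_mul]; ring
    _ = ∑' j, ∑' k, (w j * ‖a j‖ₑ) * (w (k - j) * ‖b (k - j)‖ₑ) := ENNReal.tsum_comm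
    _ = ∑' j, (w j * ‖a j‖ₑ) * ∑' k, w k * ‖b k‖ₑ := by
        refine tsum_congr fun j => ?_
        rw [ENNReal.tsum_mul_left]
        congr 1
        exact (Equiv.subRight j).tsum_eq (fun k => w k * ‖b k‖ₑ)
    _ = _ := ENNReal.tsum_mul_right

lemma summable_of_enorm' {ι : Type*} {f : ι → ℂ} (h : ∑' i, ‖f i‖ₑ ≠ ⊤) : Summable fun i => ‖f i‖ := by
  have : Summable fun i => ‖f i‖₊ := by
    rw [← ENNReal.tsum_coe_ne_top_iff_summable]; exact h
  exact NNReal.summable_coe.mpr this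

lemma FS_term_norm (a : ℤ × ℤ → ℂ) (p : ℝ × ℝ) (k : ℤ × ℤ) :
    ‖a k * ee k.1 p.1 * ee k.2 p.2‖ = ‖a k‖ := by
  rw [norm_mul, norm_mul, norm_ee, norm_ee, mul_one, mul_one]

lemma FS_tsum {H : ℕ → ℤ × ℤ → ℂ} (h : ∑' n, ∑' k, ‖H n k‖ₑ ≠ ⊤) (p : ℝ × ℝ) :
    FS (fun k => ∑' n, H n k) p = ∑' n, FS (H n) p ∧ Summable fun n => FS (H n) p := by
  have hs : Summable fun z : ℕ × (ℤ × ℤ) => ‖H z.1 z.2‖ := by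
    apply summable_of_enorm'
    rw [ENNReal.tsum_prod (f := fun n k => ‖H n k‖ₑ)]; exact h
  have hs2 : Summable fun z : ℕ × (ℤ × ℤ) => H z.1 z.2 * ee z.2.1 p.1 * ee z.2.2 p.2 := by
    refine Summable.of_norm ?_
    exact hs.congr fun z => (FS_term_norm (H z.1) p z.2).symm
  constructor
  · unfold FS
    rw [← Summable.tsum_comm (f := fun n k => H n k * ee k.1 p.1 * ee k.2 p.2) hs2]
    refine tsum_congr fun k => ?_
    rw [tsum_mul_right, tsum_mul_right]
  · exact hs2.prod

/-- change of variables -/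
def shr : (ℤ × ℤ) × (ℤ × ℤ) ≃ (ℤ × ℤ) × (ℤ × ℤ) where
  toFun z := (z.2, z.1 - z.2)
  invFun z := (z.1 + z.2, z.1)
  left_inv z := by simp
  right_inv z := by simp

lemma shr_apply (z) : shr z = (z.2, z.1 - z.2) := rfl

lemma conv_aux {A B : ℤ × ℤ → ℂ} (hA : Summable fun k => ‖A k‖) (hB : Summable fun k => ‖B k‖) :
    (∑' k, A k) * (∑' k, B k) = ∑' k, ∑' j, A j * B (k - j) := by
  have h1 : (∑' k, A k) * (∑' k, B k) = ∑' z : (ℤ × ℤ) × (ℤ × ℤ), A z.1 * B z.2 :=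
    tsum_mul_tsum_of_summable_norm hA hB
  have hs : Summable fun z : (ℤ × ℤ) × (ℤ × ℤ) => A z.1 * B z.2 :=
    summable_mul_of_summable_norm hA hB
  have h2 : ∑' z : (ℤ × ℤ) × (ℤ × ℤ), A z.2 * B (z.1 - z.2) =
      ∑' z : (ℤ × ℤ) × (ℤ × ℤ), A z.1 * B z.2 :=
    shr.tsum_eq (fun z : (ℤ × ℤ) × (ℤ × ℤ) => A z.1 * B z.2)
  have hs' : Summable fun z : (ℤ × ℤ) × (ℤ × ℤ) => A z.2 * B (z.1 - z.2) := by
    have h := hs.comp_injective shr.injective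
    simp only [Function.comp_def, shr_apply] at h
    exact h
  rw [h1, ← h2]
  exact hs'.tsum_prod

lemma FS_conv {a b : ℤ × ℤ → ℂ} (ha : Summable fun k => ‖a k‖) (hb : Summable fun k => ‖b k‖)
    (p : ℝ × ℝ) : FS (conv a b) p = FS a p * FS b p := by
  have hA := ha.congr fun k => (FS_term_norm a p k).symm
  have hB := hb.congr fun k => (FS_term_norm b p k).symm
  have h := conv_aux hA hB
  unfold FS
  rw [h]
  refine tsum_congr fun k => ?_
  unfold conv
  rw [mul_assoc, ← tsum_mul_right]
  refine tsum_congr fun j => ?_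
  have e1 : ee k.1 p.1 = ee j.1 p.1 * ee (k - j).1 p.1 := by rw [← ee_add]; congr 1; simp
  have e2 : ee k.2 p.2 = ee j.2 p.2 * ee (k - j).2 p.2 := by rw [← ee_add]; congr 1; simp
  rw [e1, e2]; ring

/-- size -/
def sz (k : ℤ × ℤ) : ℝ := |(k.1 : ℝ)| + |(k.2 : ℝ)|
lemma sz_nonneg (k) : 0 ≤ sz k := by unfold sz; positivity
lemma sz_add (j l) : sz (j + l) ≤ sz j + sz l := by
  unfold sz
  have h1 := abs_add_le (j.1 : ℝ) l.1
  have h2 := abs_add_le (j.2 : ℝ) l.2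
  simp only [Prod.fst_add, Prod.snd_add, Int.cast_add]
  linarith

/-- weights -/
def wt (δ : ℝ) (s : ℕ) (k : ℤ × ℤ) : ENNReal := ENNReal.ofReal ((1 + δ * sz k) ^ s)

lemma wt_mul {δ : ℝ} (hδ : 0 ≤ δ) (s : ℕ) (j l) : wt δ s (j + l) ≤ wt δ s j * wt δ s l := by
  have h1 := sz_nonneg j
  have h2 := sz_nonneg l
  have h3 := sz_nonneg (j + l)
  unfold wt
  rw [← ENNReal.ofReal_mul (by positivity), ← mul_pow]
  apply ENNReal.ofReal_le_ofReal
  gcongr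
  have := mul_le_mul_of_nonneg_left (sz_add j l) hδ
  have : 0 ≤ (δ * sz j) * (δ * sz l) := by positivity
  nlinarith

lemma pow_ineq {δ t : ℝ} (h0 : 0 ≤ δ) (h1 : δ ≤ 1) (ht : 0 ≤ t) (s : ℕ) :
    (1 + δ * t) ^ s ≤ 1 + δ * ((1 + t) ^ s - 1) := by
  induction s with
  | zero => simp
  | succ n ih =>
    have hA : 1 ≤ (1 + t) ^ n := one_le_pow₀ (by linarith)
    set A := (1 + t) ^ n
    have hp : 0 ≤ 1 + δ * t := by positivity
    have := mul_le_mul_of_nonneg_left ih hp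
    rw [pow_succ', pow_succ']
    have h3 : 0 ≤ δ * t * ((1 - δ) * (A - 1)) :=
      mul_nonneg (mul_nonneg h0 ht) (mul_nonneg (by linarith) (by linarith))
    nlinarith

lemma RD.weight {a} (ha : RD a) (h4 : ∑' k, ‖a k‖ₑ ≤ 1 / 4) (s : ℕ) :
    ∃ δ : ℝ, 0 < δ ∧ Nw (wt δ s) a ≤ 1 / 2 := by
  have hRD : RD (fun k => ((W k ^ s : ℝ) : ℂ) * a k) := by
    refine ha.mono 1 s fun k => ?_
    rw [norm_mul, Complex.norm_real, Real.norm_of_nonneg (by have := W_pos k; positivity), one_mul]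
  have hS := hRD.summable
  set S := ∑' k, ‖((W k ^ s : ℝ) : ℂ) * a k‖ with hSdef
  have hS0 : 0 ≤ S := tsum_nonneg fun k => norm_nonneg _
  refine ⟨(4 * (S + 1))⁻¹, by positivity, ?_⟩
  set δ := (4 * (S + 1))⁻¹ with hδ
  have hδ0 : 0 < δ := by positivity
  have hδ1 : δ ≤ 1 := inv_le_one_of_one_le₀ (by linarith)
  have hδS : δ * S ≤ 1 / 4 := by
    rw [hδ, inv_mul_le_iff₀ (by positivity)]; linarith
  calc Nw (wt δ s) a ≤ ∑' k, (‖a k‖ₑ + ENNReal.ofReal (δ * ‖((W k ^ s : ℝ) : ℂ) * a k‖)) := by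
        refine ENNReal.tsum_le_tsum fun k => ?_
        rw [wt, ← ofReal_norm_eq_enorm, ← ENNReal.ofReal_mul (by have := sz_nonneg k; positivity),
          ← ENNReal.ofReal_add (by positivity) (by positivity)]
        apply ENNReal.ofReal_le_ofReal
        rw [norm_mul, Complex.norm_real, Real.norm_of_nonneg (by have := W_pos k; positivity)]
        have h1 := pow_ineq hδ0.le hδ1 (sz_nonneg k) s
        have h2 : (1 + sz k) ^ s ≤ W k ^ s := by
          have := sz_nonneg k
          gcongr
          unfold sz W
          nlinarith [mul_nonneg (abs_nonneg (k.1:ℝ)) (abs_nonneg (k.2:ℝ))]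
        have h3 : (1 + δ * sz k) ^ s ≤ 1 + δ * W k ^ s := by nlinarith
        have := mul_le_mul_of_nonneg_right h3 (norm_nonneg (a k))
        linarith
    _ = ∑' k, ‖a k‖ₑ + ENNReal.ofReal (δ * S) := by
        rw [ENNReal.tsum_add, ← ENNReal.ofReal_tsum_of_nonneg (fun k => by positivity) (hS.mul_left δ),
          tsum_mul_left]
    _ ≤ 1 / 4 + ENNReal.ofReal (1 / 4) := by gcongr
    _ = 1 / 2 := by
      rw [ENNReal.ofReal_div_of_pos (by norm_num)]
      simp only [ENNReal.ofReal_one, ENNReal.ofReal_ofNat]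
      rw [ENNReal.div_add_div_same, show (4:ENNReal) = 2 * 2 by norm_num, one_add_one_eq_two]
      nth_rewrite 1 [← mul_one (2:ENNReal)]
      exact ENNReal.mul_div_mul_left _ _ (by norm_num) (by norm_num)

end Cib

namespace Cib
open Topology ContDiff

/-- multiplier -/
def sg (k : ℤ × ℤ) : ℂ := (k.2 : ℂ) / ((k.1 : ℂ) - Complex.I * k.2)

lemma norm_den_ge (k : ℤ × ℤ) : |(k.2 : ℝ)| ≤ ‖((k.1 : ℂ) - Complex.I * k.2)‖ := by
  have h := Complex.abs_im_le_norm ((k.1 : ℂ) - Complex.I * k.2)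
  simpa using h

lemma norm_den_ge1 (k : ℤ × ℤ) : |(k.1 : ℝ)| ≤ ‖((k.1 : ℂ) - Complex.I * k.2)‖ := by
  have h := Complex.abs_re_le_norm ((k.1 : ℂ) - Complex.I * k.2)
  simpa using h

lemma norm_sg (k) : ‖sg k‖ ≤ 1 := by
  rw [sg, norm_div]
  refine div_le_one_of_le₀ ?_ (norm_nonneg _)
  have := norm_den_ge k
  simpa using this

/-- Neumann terms -/
def Gn (a : ℤ × ℤ → ℂ) : ℕ → ℤ × ℤ → ℂ
  | 0 => a
  | n + 1 => conv a (fun k => sg k * Gn a n k)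

lemma Nw_mul_le (w) (b c : ℤ × ℤ → ℂ) (hb : ∀ k, ‖b k‖ ≤ 1) : Nw w (fun k => b k * c k) ≤ Nw w c := by
  refine ENNReal.tsum_le_tsum fun k => ?_
  gcongr
  rw [enorm_mul]
  have : ‖b k‖ₑ ≤ 1 := by
    rw [← ofReal_norm_eq_enorm]; exact ENNReal.ofReal_le_one.mpr (hb k)
  calc ‖b k‖ₑ * ‖c k‖ₑ ≤ 1 * ‖c k‖ₑ := by gcongr
    _ = _ := one_mul _

lemma Nw_Gn {w : ℤ × ℤ → ENNReal} (hw : ∀ j l, w (j + l) ≤ w j * w l) {a} (ha : Nw w a ≤ 1 / 2) (n) :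
    Nw w (Gn a n) ≤ Nw w a * 2⁻¹ ^ n := by
  induction n with
  | zero => simp [Gn]
  | succ n ih =>
    calc Nw w (Gn a (n+1)) ≤ Nw w a * Nw w (fun k => sg k * Gn a n k) := Nw_conv hw _ _
      _ ≤ 1 / 2 * (Nw w a * 2⁻¹ ^ n) := by
        gcongr
        exact (Nw_mul_le w _ _ norm_sg).trans ih
      _ = _ := by rw [pow_succ, one_div]; ring

/-- Neumann sum -/
def GG (a : ℤ × ℤ → ℂ) (k : ℤ × ℤ) : ℂ := ∑' n, Gn a n k

lemma Nw_sum {w : ℤ × ℤ → ENNReal} (hw : ∀ j l, w (j + l) ≤ w j * w l) {a} (ha : Nw w a ≤ 1 / 2) :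
    ∑' n, Nw w (Gn a n) ≤ 2 * Nw w a := by
  calc _ ≤ ∑' n : ℕ, Nw w a * 2⁻¹ ^ n := ENNReal.tsum_le_tsum fun n => Nw_Gn hw ha n
    _ = _ := by
      rw [ENNReal.tsum_mul_left, ENNReal.tsum_geometric, ENNReal.one_sub_inv_two, inv_inv, mul_comm]

lemma Nw_GG {w : ℤ × ℤ → ENNReal} (hw : ∀ j l, w (j + l) ≤ w j * w l) {a} (ha : Nw w a ≤ 1 / 2) :
    Nw w (GG a) ≤ 2 * Nw w a := by
  refine le_trans ?_ (Nw_sum hw ha)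
  unfold Nw
  rw [ENNReal.tsum_comm]
  refine ENNReal.tsum_le_tsum fun k => ?_
  rw [ENNReal.tsum_mul_left]
  gcongr
  exact enorm_tsum_le_tsum_enorm

lemma Nw_one (a : ℤ × ℤ → ℂ) : Nw (fun _ => 1) a = ∑' k, ‖a k‖ₑ := by simp [Nw]

lemma GG_RD {a} (ha : RD a) (h4 : ∑' k, ‖a k‖ₑ ≤ 1 / 4) : RD (GG a) := by
  intro s
  obtain ⟨δ, hδ, h⟩ := ha.weight h4 (2 * s)
  have h1 := Nw_GG (wt_mul hδ.le (2 * s)) h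
  have h2 : Nw (wt δ (2 * s)) (GG a) ≤ 1 := by
    refine h1.trans ?_
    calc 2 * Nw (wt δ (2 * s)) a ≤ 2 * (1 / 2) := by gcongr
      _ = 1 := by rw [one_div]; exact ENNReal.mul_inv_cancel (by norm_num) (by norm_num)
  refine ⟨(1 + 1 / δ) ^ (2 * s), fun k => ?_⟩
  have hz := sz_nonneg k
  have h3 : wt δ (2 * s) k * ‖GG a k‖ₑ ≤ 1 := (ENNReal.le_tsum k).trans h2
  rw [wt, ← ofReal_norm_eq_enorm, ← ENNReal.ofReal_mul (by positivity), ENNReal.ofReal_le_one] at h3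
  have h5 : W k ≤ ((1 + 1 / δ) * (1 + δ * sz k)) ^ 2 := by
    have e1 : W k ≤ (1 + sz k) ^ 2 := by
      unfold W sz
      nlinarith [abs_nonneg (k.1:ℝ), abs_nonneg (k.2:ℝ)]
    have e2 : 1 + sz k ≤ (1 + 1 / δ) * (1 + δ * sz k) := by
      have : (1 + 1 / δ) * (1 + δ * sz k) = 1 + sz k + 1 / δ + δ * sz k := by field_simp; ring
      rw [this]
      have : 0 < 1 / δ := by positivity
      have : 0 ≤ δ * sz k := by positivity
      linarith
    exact e1.trans (by gcongr)
  have hW := W_pos k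
  calc W k ^ s * ‖GG a k‖ ≤ (((1 + 1 / δ) * (1 + δ * sz k)) ^ 2) ^ s * ‖GG a k‖ := by gcongr
    _ = (1 + 1 / δ) ^ (2 * s) * ((1 + δ * sz k) ^ (2 * s) * ‖GG a k‖) := by
      rw [← pow_mul, mul_pow]; ring
    _ ≤ (1 + 1 / δ) ^ (2 * s) * 1 := by gcongr
    _ = _ := mul_one _

lemma half_of_quarter {a : ℤ × ℤ → ℂ} (h4 : ∑' k, ‖a k‖ₑ ≤ 1 / 4) : Nw (fun _ => 1) a ≤ 1 / 2 := by
  rw [Nw_one]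
  refine h4.trans ?_
  gcongr
  norm_num

lemma GG_eq {a} (ha : RD a) (h4 : ∑' k, ‖a k‖ₑ ≤ 1 / 4) (p) :
    FS (GG a) p = FS a p + FS a p * FS (fun k => sg k * GG a k) p := by
  have h2 := half_of_quarter h4
  have hw : ∀ j l : ℤ × ℤ, (fun _ : ℤ × ℤ => (1:ENNReal)) (j + l) ≤ (fun _ => 1) j * (fun _ => 1) l :=
    fun j l => by simp
  have hsum := Nw_sum hw h2
  have hlt : 2 * Nw (fun _ => 1) a < ⊤ := by
    refine ENNReal.mul_lt_top (by norm_num) (lt_of_le_of_lt h2 ?_)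
    rw [one_div]; exact ENNReal.inv_lt_top.mpr (by norm_num)
  have hfin : ∑' n, ∑' k, ‖Gn a n k‖ₑ ≠ ⊤ := by
    refine ne_of_lt (lt_of_le_of_lt ?_ hlt)
    simpa only [Nw_one] using hsum
  have hfin2 : ∑' n, ∑' k, ‖sg k * Gn a n k‖ₑ ≠ ⊤ := by
    refine ne_of_lt (lt_of_le_of_lt ?_ hlt)
    refine le_trans (ENNReal.tsum_le_tsum fun n => ?_) hsum
    rw [← Nw_one]
    exact Nw_mul_le _ _ _ norm_sg
  obtain ⟨e1, s1⟩ := FS_tsum hfin p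
  obtain ⟨e2, s2⟩ := FS_tsum hfin2 p
  have e3 : (fun k => sg k * GG a k) = fun k => ∑' n, sg k * Gn a n k := by
    ext k; rw [GG, tsum_mul_left]
  rw [e3, e2]
  change FS (fun k => ∑' n, Gn a n k) p = _
  rw [e1, s1.tsum_eq_zero_add, ← tsum_mul_left]
  congr 1
  refine tsum_congr fun n => ?_
  have hn : Summable fun k => ‖sg k * Gn a n k‖ := by
    apply summable_of_enorm'
    intro htop
    exact hfin2 (top_le_iff.mp (htop ▸ ENNReal.le_tsum n))
  exact FS_conv ha.summable hn p

/-- coefficients of solution -/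
def UU (G : ℤ × ℤ → ℂ) (k : ℤ × ℤ) : ℂ :=
  G k / (2 * Real.pi * Complex.I * ((k.1 : ℂ) - Complex.I * k.2))

lemma den_ne {k : ℤ × ℤ} (hk : k ≠ 0) : 1 ≤ ‖((k.1 : ℂ) - Complex.I * k.2)‖ := by
  by_cases h1 : k.1 = 0
  · have h2 : k.2 ≠ 0 := fun h2 => hk (Prod.ext h1 h2)
    have : (1:ℝ) ≤ |(k.2:ℝ)| := by exact_mod_cast Int.one_le_abs h2
    exact this.trans (norm_den_ge k)
  · have : (1:ℝ) ≤ |(k.1:ℝ)| := by exact_mod_cast Int.one_le_abs h1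
    exact this.trans (norm_den_ge1 k)

lemma norm_tpi : ‖(2 * Real.pi * Complex.I : ℂ)‖ = 2 * Real.pi := by
  simp [Real.pi_pos.le]

lemma UU_RD {G} (hG : RD G) : RD (UU G) := by
  refine hG.mono 1 0 fun k => ?_
  rw [pow_zero, mul_one, one_mul, UU, norm_div]
  by_cases hk : k = 0
  · subst hk; simp
  · refine div_le_self (norm_nonneg _) ?_
    rw [norm_mul, norm_tpi]
    have := den_ne hk
    nlinarith [Real.pi_gt_three]

lemma tpi_ne : (2 * Real.pi * Complex.I : ℂ) ≠ 0 := by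
  simp [Real.pi_ne_zero]

lemma UU_y (G) (k : ℤ × ℤ) : 2 * Real.pi * Complex.I * k.2 * UU G k = sg k * G k := by
  rw [UU, sg]
  have := tpi_ne
  rw [mul_div_assoc', mul_assoc, mul_div_mul_left _ _ this]; ring

lemma UU_s (G) (k : ℤ × ℤ) : 2 * Real.pi * Complex.I * k.1 * UU G k
    = (if k = 0 then 0 else G k) + Complex.I * (sg k * G k) := by
  by_cases hk : k = 0
  · subst hk; simp [sg]
  · rw [if_neg hk, UU, sg]
    have h1 := tpi_ne
    have h2 : ((k.1 : ℂ) - Complex.I * k.2) ≠ 0 := by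
      have := den_ne hk
      intro h; rw [h, norm_zero] at this; linarith
    rw [mul_div_assoc', mul_assoc, mul_div_mul_left _ _ h1]
    field_simp
    ring

end Cib

namespace Cib
open Topology ContDiff

lemma FS_add_mul {a b : ℤ × ℤ → ℂ} (ha : Summable fun k => ‖a k‖) (hb : Summable fun k => ‖b k‖) (c : ℂ)
    (p : ℝ × ℝ) : FS (fun k => a k + c * b k) p = FS a p + c * FS b p := by
  unfold FS
  rw [← tsum_mul_left, ← (FS_summable ha p).tsum_add ((FS_summable hb p).mul_left c)]
  refine tsum_congr fun k => ?_
  ring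

lemma FS_single (c : ℂ) (p : ℝ × ℝ) : FS (fun k => if k = 0 then c else 0) p = c := by
  unfold FS
  rw [tsum_eq_single 0 (fun k hk => by simp [hk])]
  simp

lemma FS_drop {G} (hG : RD G) (p : ℝ × ℝ) : FS (fun k => if k = 0 then 0 else G k) p = FS G p - G 0 := by
  have hs : Summable fun k : ℤ × ℤ => ‖(if k = 0 then G 0 else 0 : ℂ)‖ :=
    summable_of_ne_finset_zero (s := {0}) (fun k hk => by simp_all)
  have := FS_add_mul hG.summable hs (-1) p
  rw [FS_single] at this
  rw [show FS G p - G 0 = FS G p + -1 * G 0 by ring, ← this]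
  congr 1
  ext k
  split_ifs with h
  · rw [h]; ring
  · ring

lemma FS_norm_le {a : ℤ × ℤ → ℂ} {C : ℝ} (hC : 0 ≤ C) (h : ∑' k, ‖a k‖ₑ ≤ ENNReal.ofReal C) (p) : ‖FS a p‖ ≤ C := by
  have h1 : ‖FS a p‖ₑ ≤ ∑' k, ‖a k‖ₑ := by
    unfold FS
    refine enorm_tsum_le_tsum_enorm.trans (le_of_eq ?_)
    refine tsum_congr fun k => ?_
    rw [← ofReal_norm_eq_enorm, FS_term_norm, ofReal_norm_eq_enorm]
  have h2 := h1.trans h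
  rw [← ofReal_norm_eq_enorm] at h2
  exact (ENNReal.ofReal_le_ofReal_iff hC).mp h2

lemma torus_solve {a} (ha : RD a) (h4 : ∑' k, ‖a k‖ₑ ≤ 1 / 4) :
    ∃ w : ℝ × ℝ → ℂ, ContDiff ℝ ∞ w ∧ (∀ p, Dx w p = (Complex.I + FS a p) * Dy w p) ∧
      0 < (Dy w 0).re := by
  have hG := GG_RD ha h4
  set G := GG a with hGdef
  have hU := UU_RD hG
  have hsG : RD (fun k => sg k * G k) := hG.mono 1 0 fun k => by
    rw [norm_mul, pow_zero, mul_one]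
    exact mul_le_mul_of_nonneg_right (norm_sg k) (norm_nonneg _)
  have hd : RD (fun k => if k = 0 then 0 else G k) := hG.mono 1 0 fun k => by
    split_ifs <;> simp
  let w : ℝ × ℝ → ℂ := fun p => p.2 + Complex.I * p.1 + (G 0 * p.1 + FS (UU G) p)
  have hw : ContDiff ℝ ∞ w := by
    have h1 := FS_smooth hU
    have h2 : ContDiff ℝ ∞ fun p : ℝ × ℝ => (p.2 : ℂ) := Complex.ofRealCLM.contDiff.comp contDiff_snd
    have h3 : ContDiff ℝ ∞ fun p : ℝ × ℝ => (p.1 : ℂ) := Complex.ofRealCLM.contDiff.comp contDiff_fst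
    exact (h2.add (contDiff_const.mul h3)).add ((contDiff_const.mul h3).add h1)
  have hF : ∀ p, HasFDerivAt w (Lc (Complex.I + FS (fun k => if k = 0 then 0 else G k) p +
      Complex.I * FS (fun k => sg k * G k) p + G 0) (1 + FS (fun k => sg k * G k) p)) p := by
    intro p
    have h1 := FS_hasF hU p
    have h2 : HasFDerivAt (fun p : ℝ × ℝ => (p.2 : ℂ)) (Complex.ofRealCLM.comp (ContinuousLinearMap.snd ℝ ℝ ℝ)) p :=
      (Complex.ofRealCLM.comp (ContinuousLinearMap.snd ℝ ℝ ℝ)).hasFDerivAt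
    have h3 : HasFDerivAt (fun p : ℝ × ℝ => (p.1 : ℂ)) (Complex.ofRealCLM.comp (ContinuousLinearMap.fst ℝ ℝ ℝ)) p :=
      (Complex.ofRealCLM.comp (ContinuousLinearMap.fst ℝ ℝ ℝ)).hasFDerivAt
    have h5 := (h2.add (h3.const_mul Complex.I)).add ((h3.const_mul (G 0)).add h1)
    refine h5.congr_fderiv ?_
    simp only [UU_y, UU_s]
    rw [FS_add_mul hd.summable hsG.summable]
    ext
    · simp; ring
    · simp
  refine ⟨w, hw, fun p => ?_, ?_⟩
  · rw [Dx_of (hF p), Dy_of (hF p), FS_drop hG, hGdef, GG_eq ha h4, ← hGdef]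
    ring
  · rw [Dy_of (hF 0), Complex.add_re, Complex.one_re]
    have hle : ∑' k, ‖sg k * G k‖ₑ ≤ ENNReal.ofReal (1 / 2) := by
      rw [← Nw_one]
      refine (Nw_mul_le _ _ _ norm_sg).trans ?_
      refine (Nw_GG (fun j l => by simp) (half_of_quarter h4)).trans ?_
      rw [Nw_one]
      calc 2 * ∑' k, ‖a k‖ₑ ≤ 2 * (1 / 4) := by gcongr
        _ = ENNReal.ofReal (1 / 2) := by
          rw [ENNReal.ofReal_div_of_pos (by norm_num)]
          simp only [ENNReal.ofReal_one, ENNReal.ofReal_ofNat]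
          rw [mul_one_div, show (4:ENNReal) = 2 * 2 by norm_num]
          nth_rewrite 1 [← mul_one (2:ENNReal)]
          exact ENNReal.mul_div_mul_left _ _ (by norm_num) (by norm_num)
    have h1 := FS_norm_le (by norm_num) hle 0
    have h2 := Complex.abs_re_le_norm (FS (fun k => sg k * G k) 0)
    have := (abs_le.mp (h2.trans h1)).1
    linarith

lemma beltrami {ν : ℝ × ℝ → ℂ} (hν : ContDiff ℝ ∞ ν) (h0 : ν 0 = 0) :
    ∃ w : ℝ × ℝ → ℂ, ContDiff ℝ ∞ w ∧ (∀ᶠ p in 𝓝 0, Dx w p = (Complex.I + ν p) * Dy w p) ∧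
      0 < (Dy w 0).re := by
  obtain ⟨ε, hε, hs⟩ := pz_small hν h0 (δ := 1 / 4) (by norm_num)
  have hp := pz_per hν ε
  have h4 : ∑' k, ‖coef (pz ε ν) k‖ₑ ≤ 1 / 4 := by
    have : ∑' k, ‖coef (pz ε ν) k‖ₑ = ENNReal.ofReal (∑' k, ‖coef (pz ε ν) k‖) := by
      rw [ENNReal.ofReal_tsum_of_nonneg (fun _ => norm_nonneg _) hp.rd.summable]
      simp only [ofReal_norm_eq_enorm]
    rw [this]
    refine (ENNReal.ofReal_le_ofReal hs).trans (le_of_eq ?_)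
    rw [ENNReal.ofReal_div_of_pos (by norm_num)]
    simp
  obtain ⟨w, hw, he, hre⟩ := torus_solve hp.rd h4
  rw [hp.inv] at he
  have hF : ∀ p : ℝ × ℝ, HasFDerivAt (fun p : ℝ × ℝ => w (ε⁻¹ • p))
      (Lc (ε⁻¹ • Dx w (ε⁻¹ • p)) (ε⁻¹ • Dy w (ε⁻¹ • p))) p := by
    intro p
    have h1 := (hasF hw (ε⁻¹ • p)).comp p ((hasFDerivAt_id p).const_smul ε⁻¹)
    refine h1.congr_fderiv ?_
    ext <;> simp
  refine ⟨fun p => w (ε⁻¹ • p), hw.comp (contDiff_const_smul _), ?_, ?_⟩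
  · have ht : Tendsto (fun p : ℝ × ℝ => ε⁻¹ • p) (𝓝 0) (𝓝 0) := by
      have : Continuous (fun p : ℝ × ℝ => ε⁻¹ • p) := continuous_const_smul _
      simpa using this.tendsto 0
    filter_upwards [ht.eventually psi_id2] with p hpp
    rw [Dx_of (hF p), Dy_of (hF p), he, pz, hpp.1, hpp.2]
    have e : ((ε * (ε⁻¹ • p).1, ε * (ε⁻¹ • p).2) : ℝ × ℝ) = p := by
      ext <;> simp [hε.ne']
    rw [e, mul_smul_comm]
  · rw [Dy_of (hF 0), smul_zero, Complex.smul_re, smul_eq_mul]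
    positivity

end Cib

namespace Cib
open Topology ContDiff

/-- the PDE system in the fold variable -/
def REq (B N Y Z : ℝ × ℝ → ℝ) (p : ℝ × ℝ) : Prop :=
  2 * Dx Y p = B p * Dy Y p - (1 + N p) * Dy Z p ∧
  Z p + 2 * p.1 * Dx Z p = (1 + N p) * Dy Y p + p.1 * B p * Dy Z p

lemma ev_sqrt {Q : ℝ × ℝ → Prop} (h : ∀ᶠ p in 𝓝 (0 : ℝ × ℝ), Q p) :
    ∀ᶠ p in 𝓝 (0 : ℝ × ℝ), Q (√p.1, p.2) ∧ Q (-√p.1, p.2) := by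
  have c1 : Continuous fun p : ℝ × ℝ => ((√p.1, p.2) : ℝ × ℝ) := by fun_prop
  have c2 : Continuous fun p : ℝ × ℝ => ((-√p.1, p.2) : ℝ × ℝ) := by fun_prop
  have t1 := c1.tendsto 0
  have t2 := c2.tendsto 0
  simp only [Prod.fst_zero, Prod.snd_zero, Real.sqrt_zero, neg_zero] at t1 t2
  exact (t1.eventually h).and (t2.eventually h)

lemma fold_ev {F G0 G1 : ℝ × ℝ → ℝ} (h0 : ContDiff ℝ ∞ G0) (h1 : ContDiff ℝ ∞ G1)
    (h : ∀ᶠ p in 𝓝 (0 : ℝ × ℝ), F p = G0 (p.1 ^ 2, p.2) + p.1 * G1 (p.1 ^ 2, p.2)) :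
    ∀ᶠ p in 𝓝 (0 : ℝ × ℝ),
      Dx F p = 2 * p.1 * Dx G0 (p.1^2, p.2) + G1 (p.1^2, p.2) + 2 * p.1^2 * Dx G1 (p.1^2, p.2) ∧
      Dy F p = Dy G0 (p.1^2, p.2) + p.1 * Dy G1 (p.1^2, p.2) := by
  filter_upwards [h.eventually_nhds] with p hp
  exact ⟨(Dx_congr hp).trans (Dx_of (fold_deriv h0 h1 p)), (Dy_congr hp).trans (Dy_of (fold_deriv h0 h1 p))⟩

lemma re_hasF {w : ℝ × ℝ → ℂ} (hw : ContDiff ℝ ∞ w) (p) :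
    HasFDerivAt (fun p => (w p).re) (Lc (Dx w p).re (Dy w p).re) p := by
  have := Complex.reCLM.hasFDerivAt.comp p (hasF hw p)
  refine this.congr_fderiv ?_
  ext <;> simp

lemma im_hasF {w : ℝ × ℝ → ℂ} (hw : ContDiff ℝ ∞ w) (p) :
    HasFDerivAt (fun p => (w p).im) (Lc (Dx w p).im (Dy w p).im) p := by
  have := Complex.imCLM.hasFDerivAt.comp p (hasF hw p)
  refine this.congr_fderiv ?_
  ext <;> simp

lemma posSol {B N : ℝ × ℝ → ℝ} (hB : Vn B) (hN : Vn N) : ∃ a0 a1 : ℝ × ℝ → ℝ, ContDiff ℝ ∞ a0 ∧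
    ContDiff ℝ ∞ a1 ∧ 0 < Dy a0 0 ∧ ∀ᶠ p in 𝓝 (0 : ℝ × ℝ), 0 < p.1 → REq B N a0 a1 p := by
  have hB1 := hB.1
  have hN1 := hN.1
  let ν : ℝ × ℝ → ℂ := fun p => ((p.1 * B (p.1 ^ 2, p.2) : ℝ) : ℂ) + Complex.I * ((N (p.1 ^ 2, p.2) : ℝ) : ℂ)
  have hν : ContDiff ℝ ∞ ν := by
    have h1 : ContDiff ℝ ∞ fun p : ℝ × ℝ => p.1 * B (p.1 ^ 2, p.2) := by fun_prop
    have h2 : ContDiff ℝ ∞ fun p : ℝ × ℝ => N (p.1 ^ 2, p.2) := by fun_prop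
    exact (Complex.ofRealCLM.contDiff.comp h1).add (contDiff_const.mul (Complex.ofRealCLM.contDiff.comp h2))
  have hν0 : ν 0 = 0 := by
    simp [ν, hN.2 (0, 0) le_rfl]
  obtain ⟨w, hw, he, hre⟩ := beltrami hν hν0
  have hP : ContDiff ℝ ∞ fun p => (w p).re := Complex.reCLM.contDiff.comp hw
  have hR : ContDiff ℝ ∞ fun p => (w p).im := Complex.imCLM.contDiff.comp hw
  obtain ⟨P0, P1, hP0, hP1, hPe⟩ := malgrange_real hP
  obtain ⟨R0, R1, hR0, hR1, hRe⟩ := malgrange_real hR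
  have dP := fold_ev hP0 hP1 hPe
  have dR := fold_ev hR0 hR1 hRe
  refine ⟨P0, R1, hP0, hR1, ?_, ?_⟩
  · have := dP.self_of_nhds.2
    rw [Dy_of (re_hasF hw 0)] at this
    simp only [Prod.fst_zero, Prod.snd_zero, ne_eq, OfNat.ofNat_ne_zero, not_false_eq_true,
      zero_pow, zero_mul, add_zero] at this
    rw [this] at hre
    exact hre
  · filter_upwards [ev_sqrt he, ev_sqrt dP, ev_sqrt dR] with p h1 h2 h3 hp
    obtain ⟨r, y⟩ := p
    simp only at h1 h2 h3 hp
    have hs : √r ^ 2 = r := Real.sq_sqrt hp.le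
    have hs0 : √r ≠ 0 := (Real.sqrt_pos.mpr hp).ne'
    have hs' : (-√r) ^ 2 = r := by rw [neg_sq, hs]
    generalize √r = s at *
    obtain ⟨h1a, h1b⟩ := h1
    have e1 := congrArg Complex.re h1a
    have e2 := congrArg Complex.im h1a
    have e3 := congrArg Complex.re h1b
    have e4 := congrArg Complex.im h1b
    simp only [ν, hs, hs', Complex.mul_re, Complex.mul_im, Complex.add_re, Complex.add_im, Complex.I_re,
      Complex.I_im, Complex.ofReal_re, Complex.ofReal_im] at e1 e2 e3 e4
    rw [Dx_of (re_hasF hw _), Dx_of (re_hasF hw _), Dy_of (re_hasF hw _), Dy_of (re_hasF hw _)] at h2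
    rw [Dx_of (im_hasF hw _), Dx_of (im_hasF hw _), Dy_of (im_hasF hw _), Dy_of (im_hasF hw _)] at h3
    simp only [hs, hs'] at h2 h3
    obtain ⟨⟨a1, a2⟩, a3, a4⟩ := h2
    obtain ⟨⟨b1, b2⟩, b3, b4⟩ := h3
    rw [a1, a2, b2] at e1
    rw [b1, a2, b2] at e2
    rw [a3, a4, b4] at e3
    rw [b3, a4, b4] at e4
    constructor
    · have : (2 * s) * (2 * Dx P0 (r, y)) =
          (2 * s) * (B (r, y) * Dy P0 (r, y) - (1 + N (r, y)) * Dy R1 (r, y)) := by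
        linear_combination e1 - e3
      exact mul_left_cancel₀ (mul_ne_zero two_ne_zero hs0) this
    · simp only
      rw [← hs] at e2 e4 ⊢
      linear_combination (1/2) * e2 + (1/2) * e4

lemma negSol {φ : ℝ → ℝ} (hφ : ContDiff ℝ ∞ φ) : ∃ c0 c1 : ℝ × ℝ → ℝ, ContDiff ℝ ∞ c0 ∧
    ContDiff ℝ ∞ c1 ∧ (∀ᶠ y in 𝓝 (0:ℝ), c0 (0, y) = φ y) ∧
    ∀ᶠ p in 𝓝 (0 : ℝ × ℝ), p.1 < 0 → REq (fun _ => 0) (fun _ => 0) c0 c1 p := by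
  have hg : ContDiff ℝ ∞ fun p : ℝ × ℝ => φ (p.2 + p.1) := by fun_prop
  obtain ⟨B0, B1, h0, h1, he⟩ := malgrange_real hg
  have dB := fold_ev h0 h1 he
  have hneg : ∀ {G : ℝ × ℝ → ℝ}, ContDiff ℝ ∞ G → ∀ p : ℝ × ℝ, HasFDerivAt (fun p : ℝ × ℝ => G (-p.1, p.2))
      (Lc (- Dx G (-p.1, p.2)) (Dy G (-p.1, p.2))) p := by
    intro G hG p
    have hq : HasFDerivAt (fun p : ℝ × ℝ => ((-p.1, p.2) : ℝ × ℝ)) ((Lc (-1) 0).prod (Lc 0 1)) p := by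
      refine HasFDerivAt.prodMk ?_ ?_
      · refine (hasFDerivAt_fst (𝕜 := ℝ) (p := p)).neg.congr_fderiv ?_
        ext <;> simp
      · refine hasFDerivAt_snd.congr_fderiv ?_
        ext <;> simp
    refine ((hasF hG _).comp p hq).congr_fderiv ?_
    ext <;> simp
  refine ⟨fun p => B0 (-p.1, p.2), fun p => B1 (-p.1, p.2), by fun_prop, by fun_prop, ?_, ?_⟩
  · have ht : Tendsto (fun y : ℝ => ((0, y) : ℝ × ℝ)) (𝓝 0) (𝓝 0) :=
      (by fun_prop : Continuous fun y : ℝ => ((0, y) : ℝ × ℝ)).tendsto 0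
    filter_upwards [ht.eventually he] with y hy
    simp at hy ⊢
    exact hy.symm
  · have hDg : ∀ p : ℝ × ℝ, Dx (fun p : ℝ × ℝ => φ (p.2 + p.1)) p = Dy (fun p : ℝ × ℝ => φ (p.2 + p.1)) p := by
      intro p
      have hd : HasDerivAt φ (deriv φ (p.2 + p.1)) (p.2 + p.1) :=
        (hφ.differentiable (by simp)).differentiableAt.hasDerivAt
      have hq : HasFDerivAt (fun p : ℝ × ℝ => p.2 + p.1) (Lc 1 1) p := by
        refine (hasFDerivAt_snd.add hasFDerivAt_fst).congr_fderiv ?_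
        ext <;> simp
      have hc : HasFDerivAt (fun p : ℝ × ℝ => φ (p.2 + p.1))
          (Lc (deriv φ (p.2 + p.1)) (deriv φ (p.2 + p.1))) p := by
        refine (hd.comp_hasFDerivAt p hq).congr_fderiv ?_
        ext <;> simp
      rw [Dx_of hc, Dy_of hc]
    have hn : Tendsto (fun p : ℝ × ℝ => ((-p.1, p.2) : ℝ × ℝ)) (𝓝 0) (𝓝 0) := by
      have := (by fun_prop : Continuous fun p : ℝ × ℝ => ((-p.1, p.2) : ℝ × ℝ)).tendsto 0
      simp only [Prod.fst_zero, Prod.snd_zero, neg_zero] at this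
      exact this
    filter_upwards [hn.eventually (ev_sqrt dB)] with p h2 hp
    obtain ⟨r, y⟩ := p
    simp only [hDg] at h2 hp
    have hs : √(-r) ^ 2 = -r := Real.sq_sqrt (by linarith)
    have hs0 : √(-r) ≠ 0 := (Real.sqrt_pos.mpr (by linarith)).ne'
    have hs' : (-√(-r)) ^ 2 = -r := by rw [neg_sq, hs]
    generalize √(-r) = s at *
    simp only [hs, hs'] at h2
    obtain ⟨⟨a1, a2⟩, a3, a4⟩ := h2
    unfold REq
    rw [Dx_of (hneg h0 _), Dy_of (hneg h0 _), Dx_of (hneg h1 _), Dy_of (hneg h1 _)]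
    simp only
    rw [a1] at a2
    rw [a3] at a4
    constructor
    · have : (2 * s) * (2 * -Dx B0 (-r, y)) = (2 * s) * (0 * Dy B0 (-r, y) - (1 + 0) * Dy B1 (-r, y)) := by
        linear_combination a4 - a2
      exact mul_left_cancel₀ (mul_ne_zero two_ne_zero hs0) this
    · linear_combination (1/2) * a2 + (1/2) * a4

end Cib

namespace Cib
open Topology ContDiff

lemma iter_zero {P : ℝ × ℝ → ℝ} (hP : ContDiff ℝ ∞ P) {S : Set (ℝ × ℝ)} (hS : IsOpen S)
    (h : ∀ p ∈ S, P p = 0) (j : ℕ) {p} (hp : p ∈ closure S) : (Dx^[j] P) p = 0 := by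
  have h1 : ∀ p ∈ S, (Dx^[j] P) p = 0 := by
    induction j with
    | zero => exact h
    | succ n ih =>
      intro q hq
      rw [Function.iterate_succ_apply']
      have : Dx^[n] P =ᶠ[𝓝 q] fun _ => 0 := by
        filter_upwards [hS.mem_nhds hq] with z hz using ih z hz
      rw [Dx_congr this]
      simp [Dx]
  have hc : IsClosed {q | (Dx^[j] P) q = 0} :=
    isClosed_eq (smooth_iter hP j).continuous continuous_const
  exact closure_minimal h1 hc hp

lemma Vn.iter {D} (h : Vn D) (j : ℕ) : Vn (Dx^[j] D) := by
  induction j with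
  | zero => exact h
  | succ n ih => rw [Function.iterate_succ_apply']; exact ih.dx

lemma Dx_lin {f g : ℝ × ℝ → ℝ} (hf : ContDiff ℝ ∞ f) (hg : ContDiff ℝ ∞ g) (c d : ℝ) :
    Dx (fun p => c * f p + d * g p) = fun p => c * Dx f p + d * Dx g p := by
  ext p
  have := ((hasF hf p).const_mul c).add ((hasF hg p).const_mul d)
  have h2 : HasFDerivAt (fun p => c * f p + d * g p)
    (Lc (c * Dx f p + d * Dx g p) (c * Dy f p + d * Dy g p)) p := by
    refine this.congr_fderiv ?_
    ext <;> simp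
  exact Dx_of h2

lemma Dy_lin {f g : ℝ × ℝ → ℝ} (hf : ContDiff ℝ ∞ f) (hg : ContDiff ℝ ∞ g) (c d : ℝ) :
    Dy (fun p => c * f p + d * g p) = fun p => c * Dy f p + d * Dy g p := by
  ext p
  have := ((hasF hf p).const_mul c).add ((hasF hg p).const_mul d)
  have h2 : HasFDerivAt (fun p => c * f p + d * g p)
    (Lc (c * Dx f p + d * Dx g p) (c * Dy f p + d * Dy g p)) p := by
    refine this.congr_fderiv ?_
    ext <;> simp
  exact Dy_of h2

lemma iter_lin {f g : ℝ × ℝ → ℝ} (hf : ContDiff ℝ ∞ f) (hg : ContDiff ℝ ∞ g) (c d : ℝ) (j : ℕ) :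
    Dx^[j] (fun p => c * f p + d * g p) = fun p => c * (Dx^[j] f) p + d * (Dx^[j] g) p := by
  induction j with
  | zero => rfl
  | succ n ih =>
    rw [Function.iterate_succ_apply', ih, Dx_lin (smooth_iter hf n) (smooth_iter hg n)]
    simp only [Function.iterate_succ_apply']

lemma iter_x {f : ℝ × ℝ → ℝ} (hf : ContDiff ℝ ∞ f) (j : ℕ) :
    Dx^[j] (fun p => p.1 * Dx f p) = fun p => p.1 * (Dx^[j+1] f) p + j * (Dx^[j] f) p := by
  induction j with
  | zero => ext p; simp
  | succ n ih =>
    rw [Function.iterate_succ_apply', ih]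
    ext p
    have h1 := hasF (smooth_iter hf (n+1)) p
    have h2 := hasF (smooth_iter hf n) p
    have h3 := ((hasFDerivAt_fst (𝕜 := ℝ) (p := p)).mul h1).add (h2.const_mul (n:ℝ))
    have h4 : HasFDerivAt (fun p : ℝ × ℝ => p.1 * (Dx^[n+1] f) p + n * (Dx^[n] f) p)
        (Lc (p.1 * Dx (Dx^[n+1] f) p + (Dx^[n+1] f) p + n * Dx (Dx^[n] f) p)
          (p.1 * Dy (Dx^[n+1] f) p + n * Dy (Dx^[n] f) p)) p := by
      refine h3.congr_fderiv ?_
      ext <;> simp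
    rw [Dx_of h4]
    simp only [Function.iterate_succ_apply']
    push_cast
    ring

lemma iter_chi {χ : ℝ → ℝ} (hχ : ContDiff ℝ ∞ χ) {f : ℝ × ℝ → ℝ} (hf : ContDiff ℝ ∞ f) (j : ℕ) :
    Dx^[j] (fun p => χ p.2 * f p) = fun p => χ p.2 * (Dx^[j] f) p := by
  induction j with
  | zero => rfl
  | succ n ih =>
    rw [Function.iterate_succ_apply', ih]
    ext ⟨x, y⟩
    have hs : ContDiff ℝ ∞ (fun p : ℝ × ℝ => χ p.2 * (Dx^[n] f) p) := by
      have := smooth_iter hf n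
      fun_prop
    rw [Function.iterate_succ_apply']
    exact (hasDx hs x y).unique ((hasDx (smooth_iter hf n) x y).const_mul (χ y))

/-- axis identities -/
lemma axis_ids {B N Y Z : ℝ × ℝ → ℝ} (hB : Vn B) (hN : Vn N) (hY : ContDiff ℝ ∞ Y) (hZ : ContDiff ℝ ∞ Z)
    {S : Set (ℝ × ℝ)} (hS : IsOpen S) (h : ∀ p ∈ S, REq B N Y Z p) (j : ℕ) {y : ℝ}
    (hy : (0, y) ∈ closure S) :
    2 * (Dx^[j+1] Y) (0, y) + Dy (Dx^[j] Z) (0, y) = 0 ∧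
    (1 + 2 * j) * (Dx^[j] Z) (0, y) = Dy (Dx^[j] Y) (0, y) := by
  have hYx := smooth_Dx hY
  have hYy := smooth_Dy hY
  have hZx := smooth_Dx hZ
  have hZy := smooth_Dy hZ
  have hx : ContDiff ℝ ∞ (fun p : ℝ × ℝ => p.1) := contDiff_fst
  have v1 : Vn (fun p => B p * Dy Y p + N p * (-Dy Z p)) := (hB.mul hYy).add (hN.mul hZy.neg)
  have v2 : Vn (fun p => N p * Dy Y p + B p * (p.1 * Dy Z p)) := (hN.mul hYy).add (hB.mul (hx.mul hZy))
  have s1 : ContDiff ℝ ∞ (fun p => 2 * Dx Y p + 1 * Dy Z p) := by fun_prop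
  have s2 : ContDiff ℝ ∞ (fun p => 1 * Z p + 2 * (p.1 * Dx Z p)) := by fun_prop
  have s3 : ContDiff ℝ ∞ (fun p => 1 * (1 * Z p + 2 * (p.1 * Dx Z p)) + (-1) * Dy Y p) := by fun_prop
  have t1 := iter_zero (P := fun p => 1 * (2 * Dx Y p + 1 * Dy Z p) +
    (-1) * (B p * Dy Y p + N p * (-Dy Z p))) (by have := v1.1; fun_prop) hS
    (fun p hp => by have := (h p hp).1; linear_combination this) j hy
  have t2 := iter_zero (P := fun p => 1 * (1 * (1 * Z p + 2 * (p.1 * Dx Z p)) + (-1) * Dy Y p) +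
    (-1) * (N p * Dy Y p + B p * (p.1 * Dy Z p))) (by have := v2.1; fun_prop) hS
    (fun p hp => by have := (h p hp).2; linear_combination this) j hy
  rw [iter_lin s1 v1.1, iter_lin hYx hZy] at t1
  rw [iter_lin s3 v2.1, iter_lin s2 hYy, iter_lin hZ (hx.mul hZx), iter_x hZ] at t2
  simp only [(v1.iter j).2 (0, y) le_rfl, (v2.iter j).2 (0, y) le_rfl, iter_comm hZ, iter_comm hY,
    ← Function.iterate_succ_apply] at t1 t2
  constructor
  · linear_combination t1
  · linear_combination t2

lemma flat_glue {B N a0 a1 c0 c1 : ℝ × ℝ → ℝ} (hB : Vn B) (hN : Vn N) (ha0 : ContDiff ℝ ∞ a0)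
    (ha1 : ContDiff ℝ ∞ a1) (hc0 : ContDiff ℝ ∞ c0) (hc1 : ContDiff ℝ ∞ c1) {δ : ℝ} (hδ : 0 < δ)
    (hφ : ∀ y, |y| < δ → c0 (0, y) = a0 (0, y))
    (ha : ∀ p ∈ Ioo 0 δ ×ˢ Ioo (-δ) δ, REq B N a0 a1 p)
    (hc : ∀ p ∈ Ioo (-δ) 0 ×ˢ Ioo (-δ) δ, REq (fun _ => 0) (fun _ => 0) c0 c1 p) (j : ℕ) :
    ∀ y, |y| < δ → (Dx^[j] a0) (0, y) = (Dx^[j] c0) (0, y) ∧ (Dx^[j] a1) (0, y) = (Dx^[j] c1) (0, y) := by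
  have hz : Vn (fun _ => 0) := ⟨contDiff_const, fun _ _ => rfl⟩
  have m1 : ∀ y, |y| < δ → ((0:ℝ), y) ∈ closure (Ioo 0 δ ×ˢ Ioo (-δ) δ) := fun y hy => by
    rw [closure_prod_eq, closure_Ioo hδ.ne, closure_Ioo (by linarith)]
    exact ⟨⟨le_rfl, hδ.le⟩, (abs_le.mp hy.le)⟩
  have m2 : ∀ y, |y| < δ → ((0:ℝ), y) ∈ closure (Ioo (-δ) 0 ×ˢ Ioo (-δ) δ) := fun y hy => by
    rw [closure_prod_eq, closure_Ioo (by linarith), closure_Ioo (by linarith)]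
    exact ⟨⟨by linarith, le_rfl⟩, (abs_le.mp hy.le)⟩
  have hA : ∀ j y, |y| < δ → _ := fun (j : ℕ) y hy => axis_ids hB hN ha0 ha1 (isOpen_Ioo.prod isOpen_Ioo) ha j (m1 y hy)
  have hC : ∀ j y, |y| < δ → _ := fun (j : ℕ) y hy => axis_ids hz hz hc0 hc1 (isOpen_Ioo.prod isOpen_Ioo) hc j (m2 y hy)
  -- transfer of y-derivatives
  have key : ∀ {f g : ℝ × ℝ → ℝ}, ContDiff ℝ ∞ f → ContDiff ℝ ∞ g → (∀ y, |y| < δ → f (0, y) = g (0, y)) →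
      ∀ y, |y| < δ → Dy f (0, y) = Dy g (0, y) := by
    intro f g hf hg hfg y hy
    refine (hasDy hf 0 y).unique ((hasDy hg 0 y).congr_of_eventuallyEq ?_)
    filter_upwards [continuous_abs.continuousAt.eventually (gt_mem_nhds hy)] with z hz using hfg z hz
  have second : ∀ j : ℕ, (∀ y, |y| < δ → (Dx^[j] a0) (0, y) = (Dx^[j] c0) (0, y)) →
      ∀ y, |y| < δ → (Dx^[j] a1) (0, y) = (Dx^[j] c1) (0, y) := by
    intro j h y hy
    have e := key (smooth_iter ha0 j) (smooth_iter hc0 j) h y hy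
    have e1 := (hA j y hy).2
    have e2 := (hC j y hy).2
    rw [e, ← e2] at e1
    exact mul_left_cancel₀ (by positivity) e1
  have first : ∀ y, |y| < δ → (Dx^[j] a0) (0, y) = (Dx^[j] c0) (0, y) := by
    induction j with
    | zero => exact fun y hy => (hφ y hy).symm
    | succ n ih =>
      intro y hy
      have e := key (smooth_iter ha1 n) (smooth_iter hc1 n) (second n ih) y hy
      have e1 := (hA n y hy).1
      have e2 := (hC n y hy).1
      rw [e] at e1
      linarith
  exact fun y hy => ⟨first y hy, second j first y hy⟩

end Cib

namespace Cib
open Topology ContDiff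

lemma REq_congr {B N Y Z Y' Z' : ℝ × ℝ → ℝ} {p} (hY : Y =ᶠ[𝓝 p] Y') (hZ : Z =ᶠ[𝓝 p] Z')
    (h : REq B N Y' Z' p) : REq B N Y Z p := by
  unfold REq at *
  rw [Dx_congr hY, Dy_congr hY, Dx_congr hZ, Dy_congr hZ, hZ.self_of_nhds]
  exact h

lemma ell_solve {B N : ℝ × ℝ → ℝ} (hB : Vn B) (hN : Vn N) : ∃ Y Z : ℝ × ℝ → ℝ, ContDiff ℝ ∞ Y ∧
    ContDiff ℝ ∞ Z ∧ 0 < Dy Y 0 ∧ 0 < Z 0 ∧ ∀ᶠ p in 𝓝 (0 : ℝ × ℝ), REq B N Y Z p := by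
  obtain ⟨a0, a1, ha0, ha1, hpos, hA⟩ := posSol hB hN
  obtain ⟨c0, c1, hc0, hc1, hφ, hC⟩ := negSol (φ := fun y => a0 (0, y)) (by fun_prop)
  have hφ' : ∀ᶠ p in 𝓝 (0 : ℝ × ℝ), c0 (0, p.2) = a0 (0, p.2) :=
    (continuous_snd.tendsto (0 : ℝ × ℝ)).eventually hφ
  obtain ⟨δ, hδ, hbox⟩ := Metric.eventually_nhds_iff_ball.1 (hA.and (hC.and hφ'))
  have hb : ∀ p : ℝ × ℝ, |p.1| < δ → |p.2| < δ → p ∈ Metric.ball (0 : ℝ × ℝ) δ := fun p h1 h2 => by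
    rw [mem_ball_zero_iff, Prod.norm_def]
    exact max_lt h1 h2
  have hax : ∀ y, |y| < δ → c0 (0, y) = a0 (0, y) := fun y hy =>
    (hbox (0, y) (hb _ (by simpa using hδ) hy)).2.2
  have hfl := flat_glue hB hN ha0 ha1 hc0 hc1 hδ hax
    (fun p hp => (hbox p (hb p (by rw [abs_of_pos hp.1.1]; exact hp.1.2) (abs_lt.mpr hp.2))).1 hp.1.1)
    (fun p hp => (hbox p (hb p (by rw [abs_of_neg hp.1.2]; linarith [hp.1.1]) (abs_lt.mpr hp.2))).2.1 hp.1.2)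
  let χ : ContDiffBump (0:ℝ) := ⟨δ / 4, δ / 2, by positivity, by linarith⟩
  have hχ : ContDiff ℝ ∞ (χ : ℝ → ℝ) := χ.contDiff
  have hχ0 : ∀ y, ¬ |y| < δ → χ y = 0 := fun y hy => by
    apply χ.zero_of_le_dist
    rw [Real.dist_eq, sub_zero]
    change δ / 2 ≤ |y|
    push Not at hy
    linarith
  have hχ1 : ∀ y, |y| < δ / 4 → χ y = 1 := fun y hy => by
    apply χ.one_of_mem_closedBall
    rw [Metric.mem_closedBall, Real.dist_eq, sub_zero]
    exact hy.le
  have flat : ∀ {a c : ℝ × ℝ → ℝ}, ContDiff ℝ ∞ a → ContDiff ℝ ∞ c →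
      (∀ j y, |y| < δ → (Dx^[j] a) (0, y) = (Dx^[j] c) (0, y)) →
      Flat (fun p => χ p.2 * (1 * a p + (-1) * c p)) := by
    intro a c ha hc h
    have hs : ContDiff ℝ ∞ (fun p => 1 * a p + (-1) * c p) := by fun_prop
    refine ⟨(hχ.comp contDiff_snd).mul hs, fun j y => ?_⟩
    rw [iter_chi hχ hs, iter_lin ha hc]
    by_cases hy : |y| < δ
    · simp only [h j y hy]; ring
    · simp only [hχ0 y hy, zero_mul]
  have f0 := flat ha0 hc0 (fun j y hy => (hfl j y hy).1)
  have f1 := flat ha1 hc1 (fun j y hy => (hfl j y hy).2)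
  set D0 : ℝ × ℝ → ℝ := fun p => χ p.2 * (1 * a0 p + (-1) * c0 p) with hD0
  set D1 : ℝ × ℝ → ℝ := fun p => χ p.2 * (1 * a1 p + (-1) * c1 p) with hD1
  have hY : ContDiff ℝ ∞ (fun p => c0 p + cut D0 p) := hc0.add (cut_smooth f0)
  have hZ : ContDiff ℝ ∞ (fun p => c1 p + cut D1 p) := hc1.add (cut_smooth f1)
  set Y : ℝ × ℝ → ℝ := fun p => c0 p + cut D0 p with hYdef
  set Z : ℝ × ℝ → ℝ := fun p => c1 p + cut D1 p with hZdef
  have hY0 : ∀ p : ℝ × ℝ, p.1 ≤ 0 → Y p = c0 p ∧ Z p = c1 p := fun p hp => by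
    simp [Y, Z, cut, not_lt.mpr hp]
  have hY1 : ∀ p : ℝ × ℝ, 0 < p.1 → |p.2| < δ / 4 → Y p = a0 p ∧ Z p = a1 p := fun p hp h2 => by
    simp only [Y, Z, cut, hD0, hD1]
    rw [if_pos hp, if_pos hp, hχ1 _ h2]
    constructor <;> ring
  have hsm : ∀ᶠ p in 𝓝 (0 : ℝ × ℝ), |p.2| < δ / 4 := by
    have : Continuous fun p : ℝ × ℝ => |p.2| := by fun_prop
    refine this.continuousAt.eventually (gt_mem_nhds ?_)
    simp; exact hδ
  have epos : ∀ᶠ p in 𝓝 (0 : ℝ × ℝ), 0 < p.1 → REq B N Y Z p := by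
    filter_upwards [hA, hsm.eventually_nhds] with p h1 h2 hp
    have ev : ∀ᶠ q in 𝓝 p, Y q = a0 q ∧ Z q = a1 q := by
      filter_upwards [h2, continuous_fst.continuousAt.eventually (lt_mem_nhds hp)] with q hq1 hq2
      exact hY1 q hq2 hq1
    exact REq_congr (ev.mono fun _ h => h.1) (ev.mono fun _ h => h.2) (h1 hp)
  have eneg : ∀ᶠ p in 𝓝 (0 : ℝ × ℝ), p.1 < 0 → REq B N Y Z p := by
    filter_upwards [hC] with p h1 hp
    have ev : ∀ᶠ q in 𝓝 p, Y q = c0 q ∧ Z q = c1 q := by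
      filter_upwards [continuous_fst.continuousAt.eventually (gt_mem_nhds hp)] with q hq
      exact hY0 q (le_of_lt hq)
    have h2 := h1 hp
    refine REq_congr (ev.mono fun _ h => h.1) (ev.mono fun _ h => h.2) ?_
    unfold REq at *
    rw [hB.2 p hp.le, hN.2 p hp.le]
    exact h2
  have hYx := (smooth_Dx hY).continuous
  have hYy := (smooth_Dy hY).continuous
  have hZx := (smooth_Dx hZ).continuous
  have hZy := (smooth_Dy hZ).continuous
  have hBc := hB.1.continuous
  have hNc := hN.1.continuous
  have hZc := hZ.continuous
  have n1 := closed_at_zero (A := fun p => 2 * Dx Y p)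
    (B := fun p => B p * Dy Y p - (1 + N p) * Dy Z p) (by fun_prop) (by fun_prop)
    (eneg.mono fun p h hp => (h hp).1)
  have n2 := closed_at_zero (A := fun p => Z p + 2 * p.1 * Dx Z p)
    (B := fun p => (1 + N p) * Dy Y p + p.1 * B p * Dy Z p) (by fun_prop) (by fun_prop)
    (eneg.mono fun p h hp => (h hp).2)
  have hall : ∀ᶠ p in 𝓝 (0 : ℝ × ℝ), REq B N Y Z p := by
    filter_upwards [epos, n1, n2] with p h1 h2 h3
    rcases lt_or_ge 0 p.1 with hp | hp
    · exact h1 hp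
    · exact ⟨h2 hp, h3 hp⟩
  have hDy : Dy Y 0 = Dy a0 0 := by
    refine (hasDy hY 0 0).unique ((hasDy ha0 0 0).congr_of_eventuallyEq ?_)
    filter_upwards [hφ] with y hy
    rw [(hY0 (0, y) le_rfl).1, hy]
  have hDy0 : 0 < Dy Y 0 := hDy ▸ hpos
  refine ⟨Y, Z, hY, hZ, hDy0, ?_, hall⟩
  have := hall.self_of_nhds.2
  have hN0 : N 0 = 0 := hN.2 0 le_rfl
  rw [hN0] at this
  simp only [Prod.fst_zero] at this
  linarith

lemma rsub_back {b : ℝ × ℝ → ℝ} (hb : Vn b) (p : ℝ × ℝ) :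
    b p = 2 / 3 * p.1 ^ 2 * (3 / 2 * (4 / 9 : ℝ) ^ (2 / 3 : ℝ) *
      rsub ((9 / 4 : ℝ) ^ (1 / 3 : ℝ)) (1 / 3) (-(2 / 3)) b (4 / 9 * p.1 ^ 3, p.2)) := by
  rcases le_or_gt p.1 0 with hp | hp
  · have : ¬ 0 < 4 / 9 * p.1 ^ 3 := by
      have : p.1 ^ 3 ≤ 0 := by nlinarith [sq_nonneg p.1, mul_nonneg (sq_nonneg p.1) (neg_nonneg.mpr hp)]
      linarith
    simp [rsub, this, hb.2 p hp]
  · have h3 : 0 < 4 / 9 * p.1 ^ 3 := by positivity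
    rw [rsub, if_pos h3]
    have e1 : (9 / 4 : ℝ) ^ (1 / 3 : ℝ) * (4 / 9 * p.1 ^ 3) ^ (1 / 3 : ℝ) = p.1 := by
      rw [← Real.mul_rpow (by norm_num) h3.le, show (9 / 4 : ℝ) * (4 / 9 * p.1 ^ 3) = p.1 ^ (3:ℝ) by
        rw [Real.rpow_ofNat]; ring, ← Real.rpow_mul hp.le]
      norm_num
    have e2 : (4 / 9 * p.1 ^ 3) ^ (-(2 / 3) : ℝ) = ((4 / 9 : ℝ) ^ (2 / 3 : ℝ))⁻¹ * (p.1 ^ 2)⁻¹ := by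
      rw [Real.rpow_neg h3.le, Real.mul_rpow (by norm_num) (by positivity), mul_inv,
        show p.1 ^ 3 = p.1 ^ (3:ℝ) by rw [Real.rpow_ofNat], ← Real.rpow_mul hp.le]
      congr 2
      rw [← Real.rpow_two]; norm_num
    simp only [e1, e2]
    have h5 : (4 / 9 : ℝ) ^ (2 / 3 : ℝ) ≠ 0 := (Real.rpow_pos_of_pos (by norm_num) _).ne'
    field_simp

lemma rsub_back0 {b : ℝ × ℝ → ℝ} (hb : Vn b) (p : ℝ × ℝ) :
    b p = rsub ((9 / 4 : ℝ) ^ (1 / 3 : ℝ)) (1 / 3) 0 b (4 / 9 * p.1 ^ 3, p.2) := by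
  rcases le_or_gt p.1 0 with hp | hp
  · have : ¬ 0 < 4 / 9 * p.1 ^ 3 := by
      have : p.1 ^ 3 ≤ 0 := by nlinarith [sq_nonneg p.1, mul_nonneg (sq_nonneg p.1) (neg_nonneg.mpr hp)]
      linarith
    simp [rsub, this, hb.2 p hp]
  · have h3 : 0 < 4 / 9 * p.1 ^ 3 := by positivity
    rw [rsub, if_pos h3]
    have e1 : (9 / 4 : ℝ) ^ (1 / 3 : ℝ) * (4 / 9 * p.1 ^ 3) ^ (1 / 3 : ℝ) = p.1 := by
      rw [← Real.mul_rpow (by norm_num) h3.le, show (9 / 4 : ℝ) * (4 / 9 * p.1 ^ 3) = p.1 ^ (3:ℝ) by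
        rw [Real.rpow_ofNat]; ring, ← Real.rpow_mul hp.le]
      norm_num
    simp only [e1, Real.rpow_zero, one_mul]

lemma cube_hasF {Y : ℝ × ℝ → ℝ} (hY : ContDiff ℝ ∞ Y) (c : ℝ) (p : ℝ × ℝ) :
    HasFDerivAt (fun p : ℝ × ℝ => Y (4 / 9 * p.1 ^ 3, p.2) - c)
      (Lc (4 / 3 * p.1 ^ 2 * Dx Y (4 / 9 * p.1 ^ 3, p.2)) (Dy Y (4 / 9 * p.1 ^ 3, p.2))) p := by
  have hq : HasFDerivAt (fun p : ℝ × ℝ => ((4 / 9 * p.1 ^ 3, p.2) : ℝ × ℝ))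
      ((Lc (4 / 3 * p.1 ^ 2) 0).prod (Lc 0 1)) p := by
    refine HasFDerivAt.prodMk ?_ ?_
    · refine (((hasFDerivAt_fst (𝕜 := ℝ) (p := p)).pow 3).const_mul (4 / 9 : ℝ)).congr_fderiv ?_
      ext
      · simp; ring
      · simp
    · refine hasFDerivAt_snd.congr_fderiv ?_
      ext <;> simp
  refine (((hasF hY _).comp p hq).sub_const c).congr_fderiv ?_
  ext <;> simp

lemma step3_core {b n : ℝ × ℝ → ℝ} (hb : Vn b) (hn : Vn n) : ∃ Y Z : ℝ × ℝ → ℝ, ContDiff ℝ ∞ Y ∧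
    ContDiff ℝ ∞ Z ∧ Y 0 = 0 ∧ Dy Y 0 ≠ 0 ∧ 0 < Z 0 ∧
    ∀ᶠ p in 𝓝 (0 : ℝ × ℝ), PDE b (fun p => 1 + n p) Y Z p := by
  have hκ : 0 < (9 / 4 : ℝ) ^ (1 / 3 : ℝ) := Real.rpow_pos_of_pos (by norm_num) _
  have vB0 := rsub_Vn hκ (by norm_num : (0:ℝ) < 1 / 3) (-(2 / 3)) hb
  have vN := rsub_Vn hκ (by norm_num : (0:ℝ) < 1 / 3) 0 hn
  have vB : Vn (fun p => 3 / 2 * (4 / 9 : ℝ) ^ (2 / 3 : ℝ) *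
      rsub ((9 / 4 : ℝ) ^ (1 / 3 : ℝ)) (1 / 3) (-(2 / 3)) b p) :=
    ⟨contDiff_const.mul vB0.1, fun p hp => by simp only [vB0.2 p hp, mul_zero]⟩
  obtain ⟨Y, Z, hY, hZ, hYy, hZ0, hE⟩ := ell_solve vB vN
  have ht : Tendsto (fun p : ℝ × ℝ => ((4 / 9 * p.1 ^ 3, p.2) : ℝ × ℝ)) (𝓝 0) (𝓝 0) := by
    have := (by fun_prop : Continuous fun p : ℝ × ℝ => ((4 / 9 * p.1 ^ 3, p.2) : ℝ × ℝ)).tendsto 0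
    simp only [Prod.fst_zero, Prod.snd_zero, ne_eq, OfNat.ofNat_ne_zero, not_false_eq_true,
      zero_pow, mul_zero] at this
    exact this
  have hz : ((4 / 9 * (0 : ℝ × ℝ).1 ^ 3, (0 : ℝ × ℝ).2) : ℝ × ℝ) = 0 := by
    ext <;> simp
  refine ⟨fun p => Y (4 / 9 * p.1 ^ 3, p.2) - Y 0, fun p => Z (4 / 9 * p.1 ^ 3, p.2) - 0,
    by fun_prop, by fun_prop, ?_, ?_, ?_, ?_⟩
  · simp only [hz, sub_self]
  · rw [Dy_of (cube_hasF hY _ 0), hz]; exact hYy.ne'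
  · simp only [hz, sub_zero]; exact hZ0
  · filter_upwards [ht.eventually hE] with p hp
    have r1 := rsub_back hb p
    have r2 := rsub_back0 hn p
    obtain ⟨h1, h2⟩ := hp
    rw [← r2] at h1 h2
    set K := 3 / 2 * (4 / 9 : ℝ) ^ (2 / 3 : ℝ) *
      rsub ((9 / 4 : ℝ) ^ (1 / 3 : ℝ)) (1 / 3) (-(2 / 3)) b (4 / 9 * p.1 ^ 3, p.2)
    unfold PDE
    rw [Dx_of (cube_hasF hY _ p), Dy_of (cube_hasF hY _ p), Dx_of (cube_hasF hZ _ p),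
      Dy_of (cube_hasF hZ _ p), r1]
    simp only at h1 h2 ⊢
    constructor
    · linear_combination 2 / 3 * p.1 ^ 2 * h1
    · linear_combination h2

lemma step3 {b m : ℝ × ℝ → ℝ} (hb : ContDiff ℝ ∞ b) (hm : ContDiff ℝ ∞ m)
    (h : ∀ᶠ p in 𝓝 (0 : ℝ × ℝ), p.1 < 0 → b p = 0 ∧ m p = 1) :
    Eqv (NF b m) (BDE (fun _ => 1) (fun _ => 0) (fun p => p.1)) := by
  obtain ⟨δ, hδ, hbox⟩ := Metric.eventually_nhds_iff_ball.1
    ((closed_at_zero hb.continuous continuous_const (h.mono fun p h hp => (h hp).1)).and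
      (closed_at_zero hm.continuous continuous_const (h.mono fun p h hp => (h hp).2)))
  let χ : ContDiffBump (0:ℝ × ℝ) := ⟨δ / 4, δ / 2, by positivity, by linarith⟩
  have hχ : ContDiff ℝ ∞ (χ : ℝ × ℝ → ℝ) := χ.contDiff
  have hχ0 : ∀ p, p ∉ Metric.ball (0:ℝ × ℝ) δ → χ p = 0 := fun p hp => by
    apply χ.zero_of_le_dist
    rw [Metric.mem_ball, not_lt] at hp
    change δ / 2 ≤ _
    linarith
  have hχ1 : ∀ᶠ p in 𝓝 (0:ℝ × ℝ), χ p = 1 := χ.eventuallyEq_one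
  have vb : Vn (fun p => χ p * b p) := ⟨hχ.mul hb, fun p hp => by
    by_cases hpb : p ∈ Metric.ball (0:ℝ × ℝ) δ
    · simp only [(hbox p hpb).1 hp, mul_zero]
    · simp only [hχ0 p hpb, zero_mul]⟩
  have vn : Vn (fun p => χ p * (m p - 1)) := ⟨hχ.mul (hm.sub contDiff_const), fun p hp => by
    by_cases hpb : p ∈ Metric.ball (0:ℝ × ℝ) δ
    · simp only [(hbox p hpb).2 hp, sub_self, mul_zero]
    · simp only [hχ0 p hpb, zero_mul]⟩
  obtain ⟨Y, Z, hY, hZ, hY0, hYy, hZ0, hP⟩ := step3_core vb vn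
  obtain ⟨u, ρ, H, f', hu, hu0, hρ, hρ0, hH, H0, hf', _, _, hE⟩ :=
    from_PDE (b := b) (m := m) hY hZ hY0 hYy hZ0
  refine ⟨H, ρ, f', hH, H0, hf', hρ, hρ0, ?_⟩
  filter_upwards [hE, hP, hχ1] with p h1 h2 h3
  apply h1
  unfold PDE at *
  simp only [h3, one_mul, add_sub_cancel] at h2
  exact h2

end Cib

namespace Cib
open Topology ContDiff

lemma flat_derivs (n : ℕ) : ∀ φ : ℝ → ℝ, ContDiff ℝ ∞ φ →
    φ =o[𝓝 0] (fun t : ℝ => t ^ n) → ∀ k ≤ n, iteratedDeriv k φ 0 = 0 := by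
  induction n with
  | zero =>
    intro φ hφ ho k hk
    obtain rfl : k = 0 := by omega
    simp only [pow_zero] at ho
    rw [iteratedDeriv_zero]
    exact tendsto_nhds_unique hφ.continuous.continuousAt.tendsto ((isLittleO_one_iff ℝ).1 ho)
  | succ n ih =>
    intro φ hφ ho k hk
    have ho' : φ =o[𝓝 0] (fun t : ℝ => t ^ n) := by
      refine ho.trans_isBigO ?_
      refine IsBigO.of_bound 1 ?_
      filter_upwards [Metric.ball_mem_nhds (0:ℝ) one_pos] with t ht
      rw [pow_succ, norm_mul, one_mul]
      have : ‖t‖ ≤ 1 := by simpa using (mem_ball_zero_iff.1 ht).le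
      exact mul_le_of_le_one_right (norm_nonneg _) this
    have h0 := ih φ hφ ho'
    rcases Nat.lt_or_ge k (n + 1) with hk' | hk'
    · exact h0 k (by omega)
    obtain rfl : k = n + 1 := by omega
    have hT := taylor_isLittleO_univ (x₀ := 0) (n := n + 1)
      (hφ.of_le (by exact_mod_cast le_top) : ContDiff ℝ ((n + 1 : ℕ) : WithTop ℕ∞) φ)
    have hz : ∀ t, taylorWithinEval φ n univ 0 t = 0 := by
      intro t
      rw [taylor_within_apply]
      refine Finset.sum_eq_zero fun j hj => ?_
      rw [iteratedDerivWithin_univ, h0 j (by have := Finset.mem_range.1 hj; omega), smul_zero]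
    simp only [taylorWithinEval_succ, hz, sub_zero, zero_add, iteratedDerivWithin_univ,
      smul_eq_mul] at hT
    have h2 := ho.sub hT
    simp only [sub_sub_cancel] at h2
    have h3 : (fun t : ℝ => ((((n : ℝ) + 1) * (n.factorial : ℝ))⁻¹ * iteratedDeriv (n + 1) φ 0) * t ^ (n + 1))
        =o[𝓝[≠] 0] (fun t : ℝ => t ^ (n + 1)) := by
      refine (h2.mono nhdsWithin_le_nhds).congr_left fun t => ?_
      ring
    have h4 := h3.tendsto_div_nhds_zero
    have h5 : Tendsto (fun _ : ℝ => ((((n : ℝ) + 1) * (n.factorial : ℝ))⁻¹ *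
        iteratedDeriv (n + 1) φ 0)) (𝓝[≠] (0:ℝ)) (𝓝 0) := by
      refine h4.congr' ?_
      filter_upwards [self_mem_nhdsWithin] with t ht
      have : t ^ (n + 1) ≠ 0 := pow_ne_zero _ ht
      field_simp
    have h6 := tendsto_nhds_unique tendsto_const_nhds h5
    have h7 : (((n : ℝ) + 1) * (n.factorial : ℝ))⁻¹ ≠ 0 := by positivity
    exact (mul_eq_zero.1 h6).resolve_left h7

lemma line_deriv {G : ℝ × ℝ → ℝ} (hG : ContDiff ℝ ∞ G) (v : ℝ × ℝ) :
    deriv (fun t : ℝ => G (t • v)) = fun t : ℝ => fderiv ℝ G (t • v) v := by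
  funext t
  have h1 : HasDerivAt (fun t : ℝ => t • v) v t := by
    simpa using (hasDerivAt_id t).smul_const v
  exact (((hG.differentiable (by simp)).differentiableAt).hasFDerivAt.comp_hasDerivAt t h1).deriv

lemma smooth_dir {G : ℝ × ℝ → ℝ} (hG : ContDiff ℝ ∞ G) (v : ℝ × ℝ) :
    ContDiff ℝ ∞ (fun p => fderiv ℝ G p v) :=
  (hG.fderiv_right (by simp)).clm_apply contDiff_const

lemma line_o {G : ℝ × ℝ → ℝ} (ho : G =o[𝓝 0] fun p => ‖p‖ ^ 3) (v : ℝ × ℝ) :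
    (fun t : ℝ => G (t • v)) =o[𝓝 0] (fun t : ℝ => t ^ 3) := by
  have ht : Tendsto (fun t : ℝ => t • v) (𝓝 0) (𝓝 0) := by
    have := (by fun_prop : Continuous fun t : ℝ => t • v).tendsto 0
    simpa using this
  refine (ho.comp_tendsto ht).trans_isBigO ?_
  refine IsBigO.of_bound (‖v‖ ^ 3) (Eventually.of_forall fun t => ?_)
  simp only [Function.comp, norm_smul, norm_pow, norm_mul, norm_norm, mul_pow]
  exact (mul_comm _ _).le

lemma dir2 {G : ℝ × ℝ → ℝ} (hG : ContDiff ℝ ∞ G) (ho : G =o[𝓝 0] fun p => ‖p‖ ^ 3) (v : ℝ × ℝ) :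
    fderiv ℝ (fun p => fderiv ℝ G p v) 0 v = 0 := by
  have h := flat_derivs 3 (fun t : ℝ => G (t • v)) (hG.comp (contDiff_id.smul contDiff_const))
    (line_o ho v) 2 (by norm_num)
  rw [iteratedDeriv_succ', iteratedDeriv_succ', iteratedDeriv_zero, line_deriv hG,
    line_deriv (smooth_dir hG v)] at h
  simpa using h

lemma dir3 {G : ℝ × ℝ → ℝ} (hG : ContDiff ℝ ∞ G) (ho : G =o[𝓝 0] fun p => ‖p‖ ^ 3) (v : ℝ × ℝ) :
    fderiv ℝ (fun p => fderiv ℝ (fun p => fderiv ℝ G p v) p v) 0 v = 0 := by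
  have h := flat_derivs 3 (fun t : ℝ => G (t • v)) (hG.comp (contDiff_id.smul contDiff_const))
    (line_o ho v) 3 (by norm_num)
  rw [iteratedDeriv_succ', iteratedDeriv_succ', iteratedDeriv_succ', iteratedDeriv_zero,
    line_deriv hG, line_deriv (smooth_dir hG v), line_deriv (smooth_dir (smooth_dir hG v) v)] at h
  simpa using h

lemma pdx_eq {f : ℝ × ℝ → ℝ} (hf : ContDiff ℝ ∞ f) : pdx f = Dx f := by
  funext p; exact (hasDx hf p.1 p.2).deriv

lemma pdy_eq {f : ℝ × ℝ → ℝ} (hf : ContDiff ℝ ∞ f) : pdy f = Dy f := by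
  funext p; exact (hasDy hf p.1 p.2).deriv

lemma main {f : ℝ × ℝ → ℝ} (hf : ContDiff ℝ ∞ f)
    (hjet : HasJetAt0 f (fun p => p.2 ^ 2 + p.1 ^ 3) 3) :
    Eqv (asymBDE f) (BDE (fun _ => 1) (fun _ => 0) (fun p => p.1)) := by
  obtain ⟨g, hgdef⟩ : ∃ g : ℝ × ℝ → ℝ, g = fun p => f p - (p.2 ^ 2 + p.1 ^ 3) := ⟨_, rfl⟩
  have hg : ContDiff ℝ ∞ g := by
    rw [hgdef]; exact hf.sub ((contDiff_snd.pow 2).add (contDiff_fst.pow 3))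
  have ho : g =o[𝓝 0] fun p => ‖p‖ ^ 3 := by rw [hgdef]; exact hjet
  have gx := smooth_Dx hg
  have gy := smooth_Dy hg
  have hfg : f = fun p => g p + (p.2 ^ 2 + p.1 ^ 3) := by funext p; rw [hgdef]; ring
  have exx : Dx (Dx g) 0 = 0 := dir2 hg ho (1, 0)
  have exxx : Dx (Dx (Dx g)) 0 = 0 := dir3 hg ho (1, 0)
  have eyy : Dy (Dy g) 0 = 0 := dir2 hg ho (0, 1)
  have exy : Dy (Dx g) 0 = 0 := by
    have h := dir2 hg ho (1, 1)
    have e : (fun p => fderiv ℝ g p (1, 1)) = fun p => Dx g p + Dy g p := by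
      funext p; rw [fderiv_app]; simp
    rw [e, fderiv_app] at h
    have hs := (hasF gx 0).add (hasF gy 0)
    have hs' : HasFDerivAt (fun p => Dx g p + Dy g p)
      (Lc (Dx (Dx g) 0 + Dx (Dy g) 0) (Dy (Dx g) 0 + Dy (Dy g) 0)) 0 := by
      refine hs.congr_fderiv ?_
      ext <;> simp
    rw [Dx_of hs', Dy_of hs', exx, eyy, Dx_Dy_comm hg] at h
    simp at h
    linarith
  have fX : Dx f = fun p => Dx g p + 3 * p.1 ^ 2 := by
    funext p
    have h1 := hasDx hf p.1 p.2
    have h2 := (hasDx hg p.1 p.2).add (((hasDerivAt_const p.1 (p.2 ^ 2))).add (hasDerivAt_pow 3 p.1))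
    rw [hfg] at h1 ⊢
    have := h1.unique h2
    simpa using this
  have fY : Dy f = fun p => Dy g p + 2 * p.2 := by
    funext p
    have h1 := hasDy hf p.1 p.2
    have h2 := (hasDy hg p.1 p.2).add ((hasDerivAt_pow 2 p.2).add (hasDerivAt_const p.2 (p.1 ^ 3)))
    rw [hfg] at h1 ⊢
    have := h1.unique h2
    simpa using this
  have sX := smooth_Dx hf
  have sY := smooth_Dy hf
  have fXX : Dx (Dx f) = fun p => Dx (Dx g) p + 6 * p.1 := by
    funext p
    have h1 := hasDx sX p.1 p.2
    have h2 := (hasDx gx p.1 p.2).add ((hasDerivAt_pow 2 p.1).const_mul 3)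
    have h1' : HasDerivAt (fun s => Dx g (s, p.2) + 3 * s ^ 2) (Dx (Dx f) (p.1, p.2)) p.1 := by
      refine h1.congr_of_eventuallyEq (Eventually.of_forall fun s => ?_)
      simp [fX]
    have := h1'.unique h2
    simp only [Prod.mk.eta] at this
    rw [this]; norm_num; ring
  have fXY : Dy (Dx f) = fun p => Dy (Dx g) p := by
    funext p
    have h1 := hasDy sX p.1 p.2
    have h2 := (hasDy gx p.1 p.2).add (hasDerivAt_const p.2 (3 * p.1 ^ 2))
    have h1' : HasDerivAt (fun s => Dx g (p.1, s) + 3 * p.1 ^ 2) (Dy (Dx f) (p.1, p.2)) p.2 := by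
      refine h1.congr_of_eventuallyEq (Eventually.of_forall fun s => ?_)
      simp [fX]
    have := h1'.unique h2
    simpa using this
  have fYY : Dy (Dy f) = fun p => Dy (Dy g) p + 2 := by
    funext p
    have h1 := hasDy sY p.1 p.2
    have h2 := (hasDy gy p.1 p.2).add ((hasDerivAt_id p.2).const_mul 2)
    have h1' : HasDerivAt (fun s => Dy g (p.1, s) + 2 * s) (Dy (Dy f) (p.1, p.2)) p.2 := by
      refine h1.congr_of_eventuallyEq (Eventually.of_forall fun s => ?_)
      simp [fY]
    have := h1'.unique h2
    simpa using this
  have ea : fyy f = Dy (Dy f) := by rw [fyy, pdy_eq hf, pdy_eq sY]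
  have eb : fxy f = Dy (Dx f) := by rw [fxy, pdx_eq hf, pdy_eq sX]
  have ec : fxx f = Dx (Dx f) := by rw [fxx, pdx_eq hf, pdx_eq sX]
  obtain ⟨a, rfl⟩ : ∃ a, a = fyy f := ⟨_, rfl⟩
  have ha : ContDiff ℝ ∞ (fyy f) := by rw [ea]; exact smooth_Dy sY
  have hb : ContDiff ℝ ∞ (fxy f) := by rw [eb]; exact smooth_Dy sX
  have hc : ContDiff ℝ ∞ (fxx f) := by rw [ec]; exact smooth_Dx sX
  have a0 : fyy f 0 = 2 := by rw [ea, fYY]; simp [eyy]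
  have b0 : fxy f 0 = 0 := by rw [eb, fXY]; exact exy
  have c0 : fxx f 0 = 0 := by rw [ec, fXX]; simp [exx]
  have cx : Dx (fxx f) 0 = 6 := by
    have h1 := hasDx hc 0 0
    have h2 := (hasDx (smooth_Dx gx) 0 0).add ((hasDerivAt_id (0:ℝ)).const_mul 6)
    have h1' : HasDerivAt (fun s => Dx (Dx g) (s, 0) + 6 * s) (Dx (fxx f) (0, 0)) 0 := by
      refine h1.congr_of_eventuallyEq (Eventually.of_forall fun s => ?_)
      simp [ec, fXX]
    have h3 := h1'.unique h2
    have z : ((0:ℝ), (0:ℝ)) = 0 := rfl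
    rw [z, exxx] at h3
    simpa using h3
  have hq : ContDiff ℝ ∞ (fun p => fyy f p * fxx f p - fxy f p ^ 2) := (ha.mul hc).sub (hb.pow 2)
  have qx : Dx (fun p => fyy f p * fxx f p - fxy f p ^ 2) 0 = 12 := by
    have h1 := hasDx hq 0 0
    have h2 := ((hasDx ha 0 0).mul (hasDx hc 0 0)).sub ((hasDx hb 0 0).pow 2)
    have h3 := h1.unique h2
    have z : ((0:ℝ), (0:ℝ)) = 0 := rfl
    rw [z] at h3
    rw [h3, a0, b0, c0, cx]; norm_num
  generalize hqd : (fun p => fyy f p * fxx f p - fxy f p ^ 2) = q at hq qx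
  have hy0 : Dx (fun p : ℝ × ℝ => p.2) 0 = 0 := by
    have := hasDx (contDiff_snd : ContDiff ℝ ∞ (fun p : ℝ × ℝ => p.2)) 0 0
    exact this.unique (hasDerivAt_const _ _)
  have hy1 : Dy (fun p : ℝ × ℝ => p.2) 0 = 1 := by
    have := hasDy (contDiff_snd : ContDiff ℝ ∞ (fun p : ℝ × ℝ => p.2)) 0 0
    exact this.unique (hasDerivAt_id _)
  have hder := fderiv_pair hq (contDiff_snd : ContDiff ℝ ∞ (fun p : ℝ × ℝ => p.2)) 0
  rw [qx, hy0, hy1] at hder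
  obtain ⟨f', hf'⟩ := equiv_of_det 12 (Dy q 0) 0 1 (by norm_num)
  have hh : ContDiff ℝ ∞ (fun p : ℝ × ℝ => (q p, p.2)) := hq.prodMk contDiff_snd
  have hh0 : (fun p : ℝ × ℝ => (q p, p.2)) 0 = 0 := by
    simp [← hqd, b0, c0]
  have hpos : ∀ v : ℝ × ℝ, v ≠ 0 → (fderiv ℝ (fun p : ℝ × ℝ => (q p, p.2)) 0 v).1 = 0 →
      0 < BDE (fyy f) (fxy f) (fxx f) 0 v := by
    intro v hv h
    rw [hder.fderiv] at h
    simp at h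
    have hv2 : v.2 ≠ 0 := by
      intro h2
      apply hv
      rw [h2] at h
      ext
      · simp at h ⊢; linarith
      · exact h2
    simp only [BDE, a0, b0, c0]
    have := sq_pos_of_ne_zero hv2
    nlinarith
  obtain ⟨b', m, ρ, hb', hm, hm0, hρ, hρ0, hE⟩ := reduce ha hb hc hh hh0 f' (hf' ▸ hder)
    (contDiff_const (c := (1:ℝ))) one_ne_zero
    (Eventually.of_forall fun p => by simp [← hqd]) hpos
  have h1 : Eqv (asymBDE f) (NF b' m) := ⟨_, ρ, f', hh, hh0, hf' ▸ hder, hρ, hρ0, hE⟩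
  obtain ⟨b2, m2, hb2, hm2, h2, hneg⟩ := step2 hb' hm hm0
  exact (h1.trans h2).trans (step3 hb2 hm2 hneg)

end Cib

/-- for smooth `f` with `j³f(0) = y² + x³`, the asymptotic BDE of
`f` is smoothly equivalent at `0` to `dy² + x dx² = 0`. -/
theorem stmt1 (f : ℝ × ℝ → ℝ) (hf : ContDiff ℝ (⊤ : ℕ∞) f)
    (hjet : HasJetAt0 f (fun p => p.2 ^ 2 + p.1 ^ 3) 3) :
    SmoothEquivAt0 (asymBDE f) (BDE (fun _ => 1) (fun _ => 0) (fun p => p.1)) :=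
  (Cib.main hf hjet).smooth
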